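/- arXiv:1909.08680 — 5 statements merged into one kernel-verified Lean document; each statement's English description precedes it below -/
import Mathlib

section
/- For all integers n ≥ 1 and N ≥ n² − n + 2, every 2-coloring of the Boolean lattice Q_N contains a red copy of Q_n or a blue copy of Q_n. (Equivalently, R(Q_n, Q_n) ≤ n² − n + 2.) -/
/-- A red copy of the Boolean lattice `Q m` inside the 2-colored Boolean lattice `Q N`,
where `c S = true` means `S` is red and `c S = false` means `S` is blue. -/
def HasRedCopy (m N : ℕ) (c : Finset (Fin N) → Bool) : Prop :=
  ∃ f : Finset (Fin m) → Finset (Fin N),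
    Function.Injective f ∧
    (∀ S T : Finset (Fin m), S ⊆ T ↔ f S ⊆ f T) ∧
    (∀ S : Finset (Fin m), c (f S) = true)

/-- A blue copy of the Boolean lattice `Q m` inside the 2-colored Boolean lattice `Q N`. -/
def HasBlueCopy (m N : ℕ) (c : Finset (Fin N) → Bool) : Prop :=
  ∃ f : Finset (Fin m) → Finset (Fin N),
    Function.Injective f ∧
    (∀ S T : Finset (Fin m), S ⊆ T ↔ f S ⊆ f T) ∧
    (∀ S : Finset (Fin m), c (f S) = false)
open Finset

def HasCopy (n N : ℕ) (P : Finset (Fin N) → Prop) : Prop :=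
  ∃ f : Finset (Fin n) → Finset (Fin N),
    Function.Injective f ∧
    (∀ S T : Finset (Fin n), S ⊆ T ↔ f S ⊆ f T) ∧
    (∀ S : Finset (Fin n), P (f S))

theorem HasCopy.of_iff {n N : ℕ} {P : Finset (Fin N) → Prop}
    (f : Finset (Fin n) → Finset (Fin N)) (h : ∀ S T : Finset (Fin n), S ⊆ T ↔ f S ⊆ f T)
    (hP : ∀ S : Finset (Fin n), P (f S)) : HasCopy n N P := by
  refine ⟨f, ?_, h, hP⟩
  intro S T hST
  exact Finset.Subset.antisymm ((h S T).2 hST.subset) ((h T S).2 hST.symm.subset)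

theorem HasCopy.compl {n N : ℕ} {P : Finset (Fin N) → Prop}
    (h : HasCopy n N (fun S => P Sᶜ)) : HasCopy n N P := by
  obtain ⟨f, -, hf, hP⟩ := h
  refine HasCopy.of_iff (fun S => (f Sᶜ)ᶜ) ?_ ?_
  · intro S T
    rw [Finset.compl_subset_compl, ← hf, Finset.compl_subset_compl]
  · intro S
    exact hP Sᶜ

/-- A subcube of dimension `n` contains an element of the other color. -/
theorem exists_in_cube {n N : ℕ} {P : Finset (Fin N) → Prop}
    (no : ¬ HasCopy n N (fun S => ¬ P S)) (T C C' : Finset (Fin N)) (hC : C ⊆ C')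
    (hT : Disjoint C' T) (hn : n ≤ #(C' \ C)) :
    ∃ D, C ⊆ D ∧ D ⊆ C' ∧ P (T ∪ D) := by
  by_contra hcon
  push Not at hcon
  apply no
  obtain ⟨E, hE, hEn⟩ := Finset.exists_subset_card_eq hn
  let e := (E.equivFinOfCardEq hEn).symm
  have he : ∀ i, (e i : Fin N) ∈ C' \ C := fun i => hE (e i).2
  let g : Fin n ↪ Fin N := e.toEmbedding.trans (Function.Embedding.subtype _)
  have hg : ∀ i, g i ∈ C' \ C := he
  refine HasCopy.of_iff (fun S => T ∪ (C ∪ S.map g)) ?_ ?_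
  · intro S U
    constructor
    · intro h
      gcongr
    · intro h x hx
      have h1 : g x ∈ T ∪ (C ∪ U.map g) := h (by simp [hx])
      have h2 := hg x
      rw [mem_sdiff] at h2
      have h3 : g x ∉ T := Finset.disjoint_left.1 hT h2.1
      simpa [h2.2, h3] using h1
  · intro S
    apply hcon
    · exact subset_union_left
    · apply union_subset hC
      intro x hx
      obtain ⟨i, -, rfl⟩ := mem_map.1 hx
      exact (mem_sdiff.1 (hg i)).1

/-- Layered embedding. -/
theorem layered {n N : ℕ} {P : Finset (Fin N) → Prop} (X : Finset (Fin N)) (hX : #X = n)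
    (A : ℕ → Finset (Fin N)) (hA : ∀ i j, i ≤ j → j ≤ n + 1 → A i ⊆ A j)
    (hd : Disjoint (A (n+1)) X)
    (h : ∀ T ⊆ X, ∃ D, A #T ⊆ D ∧ D ⊆ A (#T + 1) ∧ P (T ∪ D)) : HasCopy n N P := by
  choose! D hD1 hD2 hD3 using h
  let e := (X.equivFinOfCardEq hX).symm
  let g : Fin n ↪ Fin N := e.toEmbedding.trans (Function.Embedding.subtype _)
  have hg : ∀ i, g i ∈ X := fun i => (e i).2
  have hsub : ∀ S : Finset (Fin n), S.map g ⊆ X := by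
    intro S x hx
    obtain ⟨i, -, rfl⟩ := mem_map.1 hx
    exact hg i
  have hcard : ∀ S : Finset (Fin n), #S ≤ n := fun S => by simpa using Finset.card_le_univ S
  refine HasCopy.of_iff (fun S => S.map g ∪ D (S.map g)) ?_ ?_
  · intro S U
    constructor
    · intro hSU
      rcases eq_or_ne S U with rfl | hne
      · rfl
      · have hlt : #S < #U := Finset.card_lt_card (hSU.ssubset_of_ne hne)
        apply union_subset_union
        · simpa using hSU
        · refine (hD2 _ (hsub S)).trans (Subset.trans ?_ (hD1 _ (hsub U)))
          apply hA
          · simpa using hlt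
          · simpa using (hcard U).trans (Nat.le_succ _)
    · intro h x hx
      have h1 : g x ∈ U.map g ∪ D (U.map g) := h (by simp [hx])
      have h2 : g x ∉ D (U.map g) := by
        intro h3
        refine Finset.disjoint_left.1 hd (hA _ _ ?_ le_rfl (hD2 _ (hsub U) h3)) (hg x)
        simpa using hcard U
      simpa [h2] using h1
  · intro S
    exact hD3 _ (hsub S)

theorem chunks {N : ℕ} (n m : ℕ) : ∀ (A B : Finset (Fin N)), A ⊆ B → n * m ≤ #(B \ A) →
    ∃ C : ℕ → Finset (Fin N), Monotone C ∧ C 0 = A ∧ (∀ k, C k ⊆ B) ∧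
      ∀ k < m, n ≤ #(C (k+1) \ C k) := by
  induction m with
  | zero =>
    intro A B hAB _
    exact ⟨fun _ => A, fun _ _ _ => le_rfl, rfl, fun _ => hAB, by simp⟩
  | succ m ih =>
    intro A B hAB h
    obtain ⟨E, hE, hEn⟩ := Finset.exists_subset_card_eq
      (show n ≤ #(B \ A) by rw [Nat.mul_succ] at h; omega)
    have hEd : Disjoint A E := Finset.disjoint_of_subset_right hE Finset.disjoint_sdiff
    have hEB : E ⊆ B := hE.trans sdiff_subset
    obtain ⟨C, hC1, hC2, hC3, hC4⟩ := ih (A ∪ E) B (union_subset hAB hEB) (by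
      have : B \ (A ∪ E) = (B \ A) \ E := by ext; simp; tauto
      rw [this, card_sdiff_of_subset hE, hEn]
      rw [Nat.mul_succ] at h; omega)
    refine ⟨fun k => Nat.casesOn k A C, ?_, rfl, ?_, ?_⟩
    · apply monotone_nat_of_le_succ
      intro k
      cases k with
      | zero =>
        change A ⊆ C 0
        rw [hC2]; exact subset_union_left
      | succ k => exact hC1 (Nat.le_succ k)
    · intro k
      cases k with
      | zero => exact hAB
      | succ k => exact hC3 k
    · intro k hk
      cases k with
      | zero =>
        change n ≤ #(C 0 \ A)
        rw [hC2, union_sdiff_cancel_left hEd, hEn]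
      | succ k => exact hC4 k (by omega)

/-- Main embedding: two cheap levels at the bottom, one at the top. -/
theorem embed1 {n N : ℕ} (hn : 2 ≤ n) {P : Finset (Fin N) → Prop}
    (no : ¬ HasCopy n N (fun S => ¬ P S)) (X b a t : Finset (Fin N)) (hX : #X = n)
    (hba : b ⊆ a) (haX : Disjoint a X) (hb : P b) (ha : ∀ x ∈ X, P (insert x a))
    (ht : P t) (hXt : X ⊆ t) (hat : a ⊆ t) (hc : n * (n - 2) + n + #a ≤ #t) :
    HasCopy n N P := by
  have hatX : a ⊆ t \ X := by
    rw [subset_sdiff]; exact ⟨hat, haX⟩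
  obtain ⟨C, hC1, hC2, hC3, hC4⟩ := chunks n (n-2) a (t \ X) hatX (by
    rw [card_sdiff_of_subset hatX, card_sdiff_of_subset hXt]; omega)
  have hdt : Disjoint (t \ X) X := sdiff_disjoint
  let A : ℕ → Finset (Fin N) := fun k => if k ≤ 1 then b else if k ≤ n then C (k - 2) else t \ X
  have hA : Monotone A := by
    intro i j hij
    simp only [A]
    split_ifs
    · exact le_rfl
    · exact hba.trans (hC2 ▸ hC1 (Nat.zero_le _))
    · exact hba.trans hatX
    · omega
    · exact hC1 (by omega)
    · exact hC3 _
    · omega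
    · omega
    · exact le_rfl
  refine layered X hX A (fun i j h _ => hA h) ?_ ?_
  · have : A (n+1) = t \ X := by
      simp only [A]; rw [if_neg (by omega), if_neg (by omega)]
    rw [this]; exact hdt
  · intro T hT
    have hTn : #T ≤ n := hX ▸ card_le_card hT
    rcases Nat.eq_zero_or_pos #T with h0 | h0
    · rw [h0, card_eq_zero.1 h0]
      refine ⟨b, by simp [A], by simp [A], by simpa using hb⟩
    rcases Nat.eq_or_lt_of_le (Nat.succ_le_of_lt h0) with h1 | h1
    · have h1' : #T = 1 := h1.symm
      obtain ⟨x, rfl⟩ := card_eq_one.1 h1'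
      rw [h1']
      refine ⟨a, by simpa [A] using hba, ?_, ?_⟩
      · simp only [A]
        rw [if_neg (by omega), if_pos (by omega)]
        exact hC2.symm.subset
      · exact ha x (by simpa using hT)
    rcases Nat.eq_or_lt_of_le hTn with h2 | h2
    · have : T = X := Finset.eq_of_subset_of_card_le hT (by omega)
      subst this
      refine ⟨t \ T, ?_, ?_, ?_⟩
      · simp only [A]
        rw [if_neg (by omega), if_pos (by omega)]
        exact hC3 _
      · simp only [A]
        rw [if_neg (by omega), if_neg (by omega)]
      · rwa [union_sdiff_of_subset hXt]
    · have e1 : A #T = C (#T - 2) := by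
        simp only [A]
        rw [if_neg (by omega), if_pos (by omega)]
      have e2 : A (#T + 1) = C (#T - 2 + 1) := by
        simp only [A]
        rw [if_neg (by omega), if_pos (by omega)]
        congr 1; omega
      rw [e1, e2]
      apply exists_in_cube no
      · exact hC1 (by omega)
      · exact Finset.disjoint_of_subset_left (hC3 _) (Finset.disjoint_of_subset_right hT hdt)
      · exact hC4 _ (by omega)

/-- Embedding when the three lowest levels are free. -/
theorem embed2 {n N : ℕ} {P : Finset (Fin N) → Prop} (hn : 2 ≤ n)
    (no : ¬ HasCopy n N (fun S => ¬ P S)) (h2 : ∀ T, #T ≤ 2 → P T)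
    (hN : n * (n - 2) + n ≤ N) : HasCopy n N P := by
  obtain ⟨X, -, hX⟩ := Finset.exists_subset_card_eq (s := (univ : Finset (Fin N))) (n := n)
    (by simp; omega)
  have hdt : Disjoint Xᶜ X := disjoint_compl_left
  obtain ⟨C, hC1, hC2, hC3, hC4⟩ := chunks n (n-2) ∅ Xᶜ (by simp) (by
    simp [card_compl, hX]; omega)
  refine layered X hX (fun k => C (k - 3)) (fun i j h _ => hC1 (by omega)) ?_ ?_
  · exact Finset.disjoint_of_subset_left (hC3 _) hdt
  · intro T hT
    have hTn : #T ≤ n := hX ▸ card_le_card hT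
    by_cases h : #T ≤ 2
    · refine ⟨∅, ?_, by simp, by simpa using h2 T h⟩
      have : #T - 3 = 0 := by omega
      simp only [this, hC2]; rfl
    · have e2 : #T + 1 - 3 = #T - 3 + 1 := by omega
      simp only [e2]
      apply exists_in_cube no
      · exact hC1 (by omega)
      · exact Finset.disjoint_of_subset_left (hC3 _) (Finset.disjoint_of_subset_right hT hdt)
      · exact hC4 _ (by omega)

theorem embed3 {n N : ℕ} (hn : 2 ≤ n) (hN : n * (n - 2) + n + 2 ≤ N) {P : Finset (Fin N) → Prop}
    (no : ¬ HasCopy n N (fun S => ¬ P S)) (F b a s : Finset (Fin N))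
    (hba : b ⊆ a) (has : Disjoint a s) (hcard : #a + #s ≤ 2) (hF : n ≤ #(F \ (a ∪ s)))
    (hb : P b) (ha : ∀ x ∈ F, P (insert x a)) (hs : P sᶜ) : HasCopy n N P := by
  obtain ⟨X, hXF, hX⟩ := Finset.exists_subset_card_eq hF
  have h1 : ∀ x ∈ X, x ∈ F ∧ x ∉ a ∧ x ∉ s := by
    intro x hx
    simpa using hXF hx
  refine embed1 hn no X b a sᶜ hX hba ?_ hb (fun x hx => ha x (h1 x hx).1) hs ?_ ?_ ?_
  · exact Finset.disjoint_right.2 fun x hx => (h1 x hx).2.1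
  · intro x hx
    simpa using (h1 x hx).2.2
  · intro x hx
    simpa using Finset.disjoint_left.1 has hx
  · rw [card_compl, Fintype.card_fin]; omega

theorem embed3_dual {n N : ℕ} (hn : 2 ≤ n) (hN : n * (n - 2) + n + 2 ≤ N)
    {P : Finset (Fin N) → Prop}
    (no : ¬ HasCopy n N (fun S => ¬ P S)) (F b a s : Finset (Fin N))
    (hba : b ⊆ a) (has : Disjoint a s) (hcard : #a + #s ≤ 2) (hF : n ≤ #(F \ (a ∪ s)))
    (hb : P bᶜ) (ha : ∀ x ∈ F, P (insert x a)ᶜ) (hs : P s) : HasCopy n N P := by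
  apply HasCopy.compl
  refine embed3 hn hN (P := fun S => P Sᶜ) ?_ F b a s hba has hcard hF hb ha ?_
  · intro h
    exact no (HasCopy.compl (P := fun S => ¬ P S) h)
  · simpa using hs

section cases
open Classical

variable {n N : ℕ} {P : Finset (Fin N) → Prop}

theorem caseI (hn : 2 ≤ n) (hN : n * (n - 2) + n + 2 ≤ N) (hN2 : 2 * n + 1 ≤ N)
    (noR : ¬ HasCopy n N (fun S => ¬ P S)) (noB : ¬ HasCopy n N P)
    (h0 : P ∅) (h1 : P univ) : False := by
  have noB' : ¬ HasCopy n N (fun S => ¬ ¬ P S) := by simpa using noB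
  let F : Finset (Fin N) := univ.filter (fun x => P {x})
  let G : Finset (Fin N) := univ.filter (fun x => P {x}ᶜ)
  have hF : #F < n := by
    by_contra h
    push Not at h
    exact noB (embed3 hn hN noR F ∅ ∅ ∅ (by simp) (by simp) (by simp) (by simpa using h) h0
      (by intro x hx; simpa [F] using hx) (by simpa using h1))
  have hG : #G < n := by
    by_contra h
    push Not at h
    exact noB (embed3_dual hn hN noR G ∅ ∅ ∅ (by simp) (by simp) (by simp) (by simpa using h)
      (by simpa using h1) (by intro x hx; simpa [G] using hx) h0)
  obtain ⟨y, -, hy⟩ : ∃ y ∈ (univ : Finset (Fin N)), y ∉ F :=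
    exists_mem_notMem_of_card_lt_card (by simp; omega)
  have hy : ¬ P {y} := by simpa [F] using hy
  let H : Finset (Fin N) := univ.filter (fun x => P {x, y})
  by_cases hH : n ≤ #(H \ {y})
  · exact noB (embed3 hn hN noR H ∅ {y} ∅ (by simp) (by simp) (by simp) (by simpa using hH) h0
      (by intro x hx; simpa [H] using hx) (by simpa using h1))
  · have hHc : N - 1 - (n - 1) ≤ #(Hᶜ \ {y}) := by
      have e : Hᶜ \ {y} = (univ \ {y}) \ (H \ {y}) := by ext; simp; tauto
      rw [e]
      have := le_card_sdiff (H \ {y}) (univ \ {y})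
      have h2 := le_card_sdiff {y} (univ : Finset (Fin N))
      simp at h2
      omega
    obtain ⟨X, hX, hXn⟩ := Finset.exists_subset_card_eq (show n ≤ #(Hᶜ \ {y}) by omega)
    obtain ⟨z, -, hz⟩ : ∃ z ∈ (univ : Finset (Fin N)), z ∉ G ∪ insert y X := by
      apply exists_mem_notMem_of_card_lt_card
      have := card_union_le G (insert y X)
      have := card_insert_le y X
      rw [card_univ, Fintype.card_fin]; omega
    have hz : ¬ P {z}ᶜ ∧ z ≠ y ∧ z ∉ X := by
      simp [G] at hz
      tauto
    have e : X \ ({y} ∪ {z}) = X := by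
      ext x
      have := @hX x
      simp at this
      have h3 := hz.2.2
      simp
      grind
    exact noR (embed3 (P := fun S => ¬ P S) hn hN noB' X {y} {y} {z} (by simp)
      (by simpa using hz.2.1.symm) (by simp) (by rw [e, hXn]) hy
      (by
        intro x hx
        have := hX hx
        simp [H] at this
        simpa using this.1) hz.1)

theorem caseIIa (hn : 2 ≤ n) (hN : n * (n - 2) + n + 2 ≤ N) (hN2 : 2 * n + 1 ≤ N)
    (noR : ¬ HasCopy n N (fun S => ¬ P S)) (noB : ¬ HasCopy n N P)
    (h0 : P ∅) (h1 : ¬ P univ) (hF : #(univ.filter (fun x => P {x})) < n) : False := by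
  have noB' : ¬ HasCopy n N (fun S => ¬ ¬ P S) := by simpa using noB
  set F : Finset (Fin N) := univ.filter (fun x => P {x}) with hFdef
  have key : ∀ y, ¬ P {y} → ∀ z, z ≠ y → ¬ P {z}ᶜ := by
    intro y hy z hzy hz
    let H : Finset (Fin N) := univ.filter (fun x => P {x, y})
    by_cases hH : n ≤ #(Hᶜ \ {y})
    · exact noR (embed3 (P := fun S => ¬ P S) hn hN noB' Hᶜ {y} {y} ∅ (by simp) (by simp)
        (by simp) (by simpa using hH) hy (by intro x hx; simpa [H] using hx) (by simpa using h1))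
    · have hHc : n ≤ #(H \ ({y} ∪ {z})) := by
        have e : H \ ({y} ∪ {z}) = (univ \ ({y} ∪ {z})) \ (Hᶜ \ {y}) := by ext; simp; tauto
        rw [e]
        have := le_card_sdiff (Hᶜ \ {y}) (univ \ ({y} ∪ {z}))
        have h2 := le_card_sdiff ({y} ∪ {z}) (univ : Finset (Fin N))
        have h3 := card_union_le {y} {z}
        simp only [card_singleton, card_univ, Fintype.card_fin] at h2 h3
        omega
      exact noB (embed3 hn hN noR H ∅ {y} {z} (by simp) (by simpa using hzy.symm) (by simp) hHc h0
        (by intro x hx; simpa [H] using hx) hz)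
  have hFc : 2 ≤ #Fᶜ := by rw [card_compl, Fintype.card_fin]; omega
  obtain ⟨y, hy, y', hy', hne⟩ := Finset.one_lt_card.1 hFc
  have hy : ¬ P {y} := by simpa [F] using hy
  have hy' : ¬ P {y'} := by simpa [F] using hy'
  have all : ∀ z, ¬ P {z}ᶜ := by
    intro z
    by_cases hz : z = y
    · exact key y' hy' z (by rw [hz]; exact hne)
    · exact key y hy z hz
  exact noR (embed3_dual (P := fun S => ¬ P S) hn hN noB' univ ∅ ∅ {y} (by simp) (by simp)
    (by simp) (by
      have h2 := le_card_sdiff {y} (univ : Finset (Fin N))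
      simp only [card_singleton, card_univ, Fintype.card_fin] at h2
      simp only [empty_union]; omega) (by simpa using h1) (by intro x _; simpa using all x) hy)

theorem caseIIc (hn : 2 ≤ n) (hN : n * (n - 2) + n + 2 ≤ N) (hN2 : 2 * n + 1 ≤ N)
    (noR : ¬ HasCopy n N (fun S => ¬ P S)) (noB : ¬ HasCopy n N P)
    (h0 : P ∅) (h1 : ¬ P univ) (hF : n ≤ #(univ.filter (fun x => P {x})))
    (hG : n ≤ #(univ.filter (fun x => ¬ P {x}ᶜ))) : False := by
  have noB' : ¬ HasCopy n N (fun S => ¬ ¬ P S) := by simpa using noB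
  set F : Finset (Fin N) := univ.filter (fun x => P {x}) with hFdef
  set G : Finset (Fin N) := univ.filter (fun x => ¬ P {x}ᶜ) with hGdef
  have hsd : ∀ s : Finset (Fin N), #s ≤ 2 → n ≤ #((univ : Finset (Fin N)) \ (∅ ∪ s)) := by
    intro s hs
    have h2 := le_card_sdiff s (univ : Finset (Fin N))
    simp only [card_univ, Fintype.card_fin] at h2
    simp only [empty_union]; omega
  have all : ∀ z, ¬ P {z}ᶜ := by
    intro z hz
    by_cases h : n ≤ #(F \ {z})
    · exact noB (embed3 hn hN noR F ∅ ∅ {z} (by simp) (by simp) (by simp) (by simpa using h) h0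
        (by intro x hx; simpa [F] using hx) hz)
    · have h2 := le_card_sdiff {z} F
      simp only [card_singleton] at h2
      obtain ⟨X, hX, hXn⟩ := Finset.exists_subset_card_eq hG
      obtain ⟨y, -, hy⟩ : ∃ y ∈ (univ : Finset (Fin N)), y ∉ F ∪ X := by
        apply exists_mem_notMem_of_card_lt_card
        have := card_union_le F X
        simp; omega
      have hy : ¬ P {y} ∧ y ∉ X := by simpa [F] using hy
      exact noR (embed3_dual (P := fun S => ¬ P S) hn hN noB' X ∅ ∅ {y} (by simp) (by simp)
        (by simp) (by
          rw [empty_union, sdiff_singleton_eq_erase, erase_eq_of_notMem hy.2, hXn])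
        (by simpa using h1) (by intro x _; have := hX ‹x ∈ X›; simpa [G] using this) hy.1)
  have small : ∀ s : Finset (Fin N), #s ≤ 2 → P s := by
    intro s hs
    by_contra hP
    exact noR (embed3_dual (P := fun S => ¬ P S) hn hN noB' univ ∅ ∅ s (by simp) (by simp)
      (by simpa using hs) (hsd s hs) (by simpa using h1) (by intro x _; simpa using all x) hP)
  exact noB (embed2 hn noR small (by omega))

theorem caseII (hn : 2 ≤ n) (hN : n * (n - 2) + n + 2 ≤ N) (hN2 : 2 * n + 1 ≤ N)
    (noR : ¬ HasCopy n N (fun S => ¬ P S)) (noB : ¬ HasCopy n N P)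
    (h0 : P ∅) (h1 : ¬ P univ) : False := by
  by_cases hF : #(univ.filter (fun x => P {x})) < n
  · exact caseIIa hn hN hN2 noR noB h0 h1 hF
  by_cases hG : #(univ.filter (fun x => ¬ P {x}ᶜ)) < n
  · refine caseIIa (P := fun S => ¬ P Sᶜ) hn hN hN2 ?_ ?_ (by simpa using h1) (by simpa using h0)
      (by convert hG)
    · intro h
      apply noB
      apply HasCopy.compl
      simpa using h
    · intro h
      exact noR (HasCopy.compl (P := fun S => ¬ P S) h)
  exact caseIIc hn hN hN2 noR noB h0 h1 (by omega) (by omega)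

theorem main_large (hn : 2 ≤ n) (hN : n * (n - 2) + n + 2 ≤ N) (hN2 : 2 * n + 1 ≤ N)
    (noR : ¬ HasCopy n N (fun S => ¬ P S)) (noB : ¬ HasCopy n N P) : False := by
  have noB' : ¬ HasCopy n N (fun S => ¬ ¬ P S) := by simpa using noB
  by_cases h0 : P ∅ <;> by_cases h1 : P univ
  · exact caseI hn hN hN2 noR noB h0 h1
  · exact caseII hn hN hN2 noR noB h0 h1
  · exact caseII (P := fun S => ¬ P S) hn hN hN2 noB' noR h0 (by simpa using h1)
  · exact caseI (P := fun S => ¬ P S) hn hN hN2 noB' noR h0 h1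

end cases

def IsDiamond {N : ℕ} (b u v t : Finset (Fin N)) : Prop :=
  b ⊆ u ∧ b ⊆ v ∧ u ⊆ t ∧ v ⊆ t ∧ ¬ u ⊆ v ∧ ¬ v ⊆ u

instance {N : ℕ} (b u v t : Finset (Fin N)) : Decidable (IsDiamond b u v t) := by
  unfold IsDiamond; infer_instance

theorem copy_of_diamond {N : ℕ} {P : Finset (Fin N) → Prop} (b u v t : Finset (Fin N))
    (h : IsDiamond b u v t) (hb : P b) (hu : P u) (hv : P v) (ht : P t) : HasCopy 2 N P := by
  obtain ⟨h1, h2, h3, h4, h5, h6⟩ := h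
  have h7 : b ⊆ t := h1.trans h3
  have n1 : ¬ u ⊆ b := fun h => h5 (h.trans h2)
  have n2 : ¬ v ⊆ b := fun h => h6 (h.trans h1)
  have n3 : ¬ t ⊆ u := fun h => h6 (h4.trans h)
  have n4 : ¬ t ⊆ v := fun h => h5 (h3.trans h)
  have n5 : ¬ t ⊆ b := fun h => n1 (h3.trans h)
  refine HasCopy.of_iff
    (fun S => if 0 ∈ S then (if 1 ∈ S then t else u) else (if 1 ∈ S then v else b)) ?_ ?_
  · intro S T
    have e : S ⊆ T ↔ (0 ∈ S → 0 ∈ T) ∧ (1 ∈ S → 1 ∈ T) := by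
      constructor
      · intro h
        exact ⟨fun x => h x, fun x => h x⟩
      · rintro ⟨ha, hb⟩ x hx
        fin_cases x
        · exact ha hx
        · exact hb hx
    rw [e]
    by_cases a1 : (0 : Fin 2) ∈ S <;> by_cases a2 : (1 : Fin 2) ∈ S <;>
      by_cases a3 : (0 : Fin 2) ∈ T <;> by_cases a4 : (1 : Fin 2) ∈ T <;>
      simp [a1, a2, a3, a4, h1, h2, h3, h4, h5, h6, h7, n1, n2, n3, n4, n5]
  · intro S
    split_ifs <;> assumption

theorem four_aux (P : Finset (Fin 4) → Prop)
    (hB : ∀ b u v t, IsDiamond b u v t → ¬ (P b ∧ P u ∧ P v ∧ P t))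
    (hR : ∀ b u v t, IsDiamond b u v t → ¬ (¬ P b ∧ ¬ P u ∧ ¬ P v ∧ ¬ P t))
    (h0 : P ∅) : False := by
  have := hB ∅ {0} {1} {0, 1} (by decide)
  have := hB ∅ {0} {1} {0, 1, 2} (by decide)
  have := hB ∅ {0} {1} {0, 1, 2, 3} (by decide)
  have := hB ∅ {0} {1, 2} {0, 1, 2} (by decide)
  have := hB ∅ {0} {1, 2} {0, 1, 2, 3} (by decide)
  have := hB ∅ {0} {3} {0, 1, 3} (by decide)
  have := hB ∅ {0} {1, 3} {0, 1, 3} (by decide)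
  have := hB ∅ {0} {1, 3} {0, 1, 2, 3} (by decide)
  have := hB ∅ {0} {1, 2, 3} {0, 1, 2, 3} (by decide)
  have := hB ∅ {1} {0, 2} {0, 1, 2} (by decide)
  have := hB ∅ {1} {0, 3} {0, 1, 3} (by decide)
  have := hB ∅ {1} {0, 3} {0, 1, 2, 3} (by decide)
  have := hB ∅ {0, 1} {0, 2} {0, 1, 2, 3} (by decide)
  have := hB ∅ {0, 1} {3} {0, 1, 3} (by decide)
  have := hB ∅ {0, 1} {0, 3} {0, 1, 3} (by decide)
  have := hB ∅ {0, 1} {1, 3} {0, 1, 3} (by decide)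
  have := hB ∅ {0, 1} {0, 2, 3} {0, 1, 2, 3} (by decide)
  have := hB ∅ {0, 2} {1, 2} {0, 1, 2} (by decide)
  have := hB ∅ {0, 2} {0, 1, 3} {0, 1, 2, 3} (by decide)
  have := hB ∅ {1, 2} {0, 3} {0, 1, 2, 3} (by decide)
  have := hB ∅ {1, 2} {1, 3} {1, 2, 3} (by decide)
  have := hB ∅ {0, 3} {1, 3} {0, 1, 2, 3} (by decide)
  have := hB ∅ {0, 3} {1, 2, 3} {0, 1, 2, 3} (by decide)
  have := hB ∅ {0, 1, 3} {0, 2, 3} {0, 1, 2, 3} (by decide)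
  have := hR {0} {0, 1} {0, 2} {0, 1, 2, 3} (by decide)
  have := hR {0} {0, 1} {0, 3} {0, 1, 3} (by decide)
  have := hR {0} {0, 2} {0, 3} {0, 2, 3} (by decide)
  have := hR {0} {0, 2} {0, 1, 3} {0, 1, 2, 3} (by decide)
  have := hR {0} {0, 1, 2} {0, 3} {0, 1, 2, 3} (by decide)
  have := hR {0} {0, 1, 2} {0, 1, 3} {0, 1, 2, 3} (by decide)
  have := hR {1} {0, 1} {1, 2} {0, 1, 2, 3} (by decide)
  have := hR {1} {1, 2} {1, 3} {1, 2, 3} (by decide)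
  have := hR {1} {1, 2} {0, 1, 3} {0, 1, 2, 3} (by decide)
  have := hR {1} {0, 1, 2} {1, 3} {0, 1, 2, 3} (by decide)
  have := hR {1} {0, 1, 2} {1, 2, 3} {0, 1, 2, 3} (by decide)
  have := hR {0, 1} {0, 1, 2} {0, 1, 3} {0, 1, 2, 3} (by decide)
  have := hR {3} {0, 3} {1, 3} {0, 1, 2, 3} (by decide)
  clear hB hR
  generalize P ∅ = q0 at *
  generalize P {0} = q1 at *
  generalize P {1} = q2 at *
  generalize P {0, 1} = q3 at *
  generalize P {2} = q4 at *
  generalize P {0, 2} = q5 at *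
  generalize P {1, 2} = q6 at *
  generalize P {0, 1, 2} = q7 at *
  generalize P {3} = q8 at *
  generalize P {0, 3} = q9 at *
  generalize P {1, 3} = q10 at *
  generalize P {0, 1, 3} = q11 at *
  generalize P {2, 3} = q12 at *
  generalize P {0, 2, 3} = q13 at *
  generalize P {1, 2, 3} = q14 at *
  generalize P {0, 1, 2, 3} = q15 at *
  by_cases h15 : q15 <;> grind (splits := 40)

theorem main_four (P : Finset (Fin 4) → Prop)
    (noR : ¬ HasCopy 2 4 (fun S => ¬ P S)) (noB : ¬ HasCopy 2 4 P) : False := by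
  have hB : ∀ b u v t, IsDiamond b u v t → ¬ (P b ∧ P u ∧ P v ∧ P t) :=
    fun b u v t h ⟨h1, h2, h3, h4⟩ => noB (copy_of_diamond b u v t h h1 h2 h3 h4)
  have hR : ∀ b u v t, IsDiamond b u v t → ¬ (¬ P b ∧ ¬ P u ∧ ¬ P v ∧ ¬ P t) :=
    fun b u v t h ⟨h1, h2, h3, h4⟩ => noR (copy_of_diamond b u v t h h1 h2 h3 h4)
  by_cases h0 : P ∅
  · exact four_aux P hB hR h0
  · exact four_aux (fun S => ¬ P S) hR (by simpa using hB) h0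

theorem copy_one {N : ℕ} {P : Finset (Fin N) → Prop} (b t : Finset (Fin N))
    (h : b ⊂ t) (hb : P b) (ht : P t) : HasCopy 1 N P := by
  refine HasCopy.of_iff (fun S => if 0 ∈ S then t else b) ?_ ?_
  · intro S T
    have e : S ⊆ T ↔ (0 ∈ S → 0 ∈ T) := by
      constructor
      · intro h x
        exact h x
      · intro ha x hx
        fin_cases x
        exact ha hx
    rw [e]
    by_cases a1 : (0 : Fin 1) ∈ S <;> by_cases a3 : (0 : Fin 1) ∈ T <;>
      simp [a1, a3, h.1, h.2]
  · intro S
    split_ifs <;> assumption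

theorem main_one {N : ℕ} (hN : 2 ≤ N) (P : Finset (Fin N) → Prop)
    (noR : ¬ HasCopy 1 N (fun S => ¬ P S)) (noB : ¬ HasCopy 1 N P) : False := by
  let x : Fin N := ⟨0, by omega⟩
  have h1 : (∅ : Finset (Fin N)) ⊂ {x} := by simp
  have h2 : ({x} : Finset (Fin N)) ⊂ univ := by
    rw [ssubset_univ_iff]
    intro h
    have := congrArg card h
    simp at this
    omega
  have h3 := h1.trans h2
  have hB := fun b t h hb ht => noB (copy_one b t h hb ht)
  have hR := fun b t h hb ht => noR (copy_one b t h hb ht)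
  have := hB _ _ h1
  have := hB _ _ h2
  have := hB _ _ h3
  have := hR _ _ h1
  have := hR _ _ h2
  have := hR _ _ h3
  tauto

/-- If n ≥ 1 and N ≥ n² − n + 2, every 2-coloring of Q_N contains a red
copy of Q_n or a blue copy of Q_n, i.e. R(Q_n, Q_n) ≤ n² − n + 2. -/
theorem ramsey_Qn_Qn (n N : ℕ) (hn : 1 ≤ n) (hN : N ≥ n ^ 2 - n + 2)
    (c : Finset (Fin N) → Bool) :
    HasRedCopy n N c ∨ HasBlueCopy n N c := by
  by_contra hcon
  push Not at hcon
  obtain ⟨hr, hb⟩ := hcon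
  have noB : ¬ HasCopy n N (fun S => c S = true) := hr
  have noR : ¬ HasCopy n N (fun S => ¬ c S = true) := by
    intro h
    apply hb
    simpa [HasCopy, HasBlueCopy] using h
  rcases Nat.eq_or_lt_of_le hn with h1 | h1
  · subst h1
    exact main_one (by omega) _ noR noB
  have hn2 : 2 ≤ n := h1
  by_cases h4 : n = 2 ∧ N = 4
  · obtain ⟨rfl, rfl⟩ := h4
    exact main_four _ noR noB
  obtain ⟨k, rfl⟩ := Nat.exists_eq_add_of_le hn2
  have e : (2 + k) ^ 2 - (2 + k) = k * k + 3 * k + 2 := by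
    have : (2 + k) ^ 2 = k * k + 3 * k + 2 + (2 + k) := by ring
    omega
  have e2 : (2 + k) * (2 + k - 2) + (2 + k) + 2 = k * k + 3 * k + 4 := by
    rw [Nat.add_sub_cancel_left]; ring
  rw [e] at hN
  refine main_large hn2 (by omega) ?_ noR noB
  rcases Nat.eq_zero_or_pos k with hk | hk
  · subst hk; omega
  · nlinarith
end

section
/- For all integers n ≥ 1 and N with 16N ≥ 37n + 39, every 2-coloring of the Boolean lattice Q_N contains a red copy of Q_3 or a blue copy of Q_n. (Equivalently, R(Q_3, Q_n) ≤ (37/16)n + 39/16.) -/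
/-- A copy of `Q m` all of whose elements satisfy `P`. -/
def PCopy {α : Type*} (m : ℕ) (P : Finset α → Prop) : Prop :=
  ∃ f : Finset (Fin m) → Finset α,
    (∀ S T : Finset (Fin m), S ⊆ T ↔ f S ⊆ f T) ∧ ∀ S, P (f S)

theorem PCopy.of_map {α : Type*} [DecidableEq α] {n : ℕ} {P : Finset α → Prop} (X : Finset α)
    (hX : X.card = n) (f : Finset α → Finset α)
    (hmono : ∀ S T, S ⊆ T → T ⊆ X → f S ⊆ f T)
    (hinter : ∀ S, S ⊆ X → f S ∩ X = S)
    (hP : ∀ S, S ⊆ X → P (f S)) : PCopy n P := by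
  let e : Fin n ↪ α := (X.equivFinOfCardEq hX).symm.toEmbedding.trans (Function.Embedding.subtype _)
  have he : ∀ S : Finset (Fin n), S.map e ⊆ X := by
    intro S x hx
    obtain ⟨i, -, rfl⟩ := Finset.mem_map.1 hx
    exact ((X.equivFinOfCardEq hX).symm i).2
  refine ⟨fun S => f (S.map e), fun S T => ⟨fun h => ?_, fun h => ?_⟩, fun S => hP _ (he S)⟩
  · exact hmono _ _ (Finset.map_subset_map.2 h) (he T)
  · have := Finset.inter_subset_inter_right (u := X) h
    rw [hinter _ (he S), hinter _ (he T)] at this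
    exact Finset.map_subset_map.1 this

/-- An interval of dimension at least `m` contains a `P`-copy of `Q m` or an element failing `P`. -/
theorem PCopy.interval {α : Type*} [DecidableEq α] {m : ℕ} {P : Finset α → Prop} (h : ¬ PCopy m P)
    {A B : Finset α} (hAB : A ⊆ B) (hc : A.card + m ≤ B.card) :
    ∃ Z, A ⊆ Z ∧ Z ⊆ B ∧ ¬ P Z := by
  by_contra hcon
  push Not at hcon
  have hcard : m ≤ (B \ A).card := by
    rw [Finset.card_sdiff_of_subset hAB]; omega
  obtain ⟨X, hX, hXc⟩ := Finset.exists_subset_card_eq hcard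
  apply h
  refine PCopy.of_map X hXc (fun S => S ∪ A) (fun S T h _ => Finset.union_subset_union_left h) ?_ ?_
  · intro S hS
    ext x
    have h1 := @hX x
    have h2 := @hS x
    simp only [Finset.mem_sdiff, Finset.mem_inter, Finset.mem_union] at *
    tauto
  · intro S hS
    refine hcon _ Finset.subset_union_right (Finset.union_subset ?_ hAB)
    exact hS.trans (hX.trans Finset.sdiff_subset)

theorem exists_chain {α : Type*} [DecidableEq α] (k : ℕ) : ∀ (W0 W1 : Finset α), W0 ⊆ W1 →
    W0.card + 3 * k ≤ W1.card →
    ∃ V : ℕ → Finset α, (∀ i ≤ k, W0 ⊆ V i ∧ V i ⊆ W1 ∧ (V i).card = W0.card + 3 * i) ∧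
      ∀ i < k, V i ⊆ V (i+1) := by
  intro W0 W1 h01 hc
  induction k with
  | zero => exact ⟨fun _ => W0, by intro i hi; simp [h01]; omega, by simp⟩
  | succ k ih =>
    obtain ⟨V, hV, hs⟩ := ih (by omega)
    obtain ⟨Z, hZ1, hZ2, hZ3⟩ := Finset.exists_subsuperset_card_eq (hV k le_rfl).2.1
      (n := W0.card + 3 * (k+1)) (by rw [(hV k le_rfl).2.2]; omega) hc
    refine ⟨fun i => if i ≤ k then V i else Z, ?_, ?_⟩
    · intro i hi
      by_cases hik : i ≤ k
      · simp only [hik, if_true]; exact hV i hik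
      · have : i = k + 1 := by omega
        subst this
        simp only [hik, if_false]
        exact ⟨(hV k le_rfl).1.trans hZ1, hZ2, hZ3⟩
    · intro i hi
      by_cases hik : i + 1 ≤ k
      · have : i ≤ k := by omega
        simp only [hik, this, if_true]; exact hs i (by omega)
      · have : i = k := by omega
        subst this
        simpa using hZ1

/-- Layered embedding. -/
theorem layer {α : Type*} [DecidableEq α] {n : ℕ} {P : Finset α → Prop}
    (hred : ¬ PCopy 3 (fun S => ¬ P S)) (X W0 W1 : Finset α) (hX : X.card = n)
    (h01 : W0 ⊆ W1) (hd : Disjoint X W1) (l k : ℕ) (hc : W0.card + 3 * k ≤ W1.card)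
    (hlow : ∀ S ⊆ X, S.card < l → P (S ∪ W0))
    (hhigh : ∀ S ⊆ X, l + k ≤ S.card → P (S ∪ W1)) : PCopy n P := by
  obtain ⟨V, hV, hs⟩ := exists_chain k W0 W1 h01 hc
  have hVmono : ∀ j ≤ k, ∀ i ≤ j, V i ⊆ V j := by
    intro j
    induction j with
    | zero => intro _ i hi; have : i = 0 := by omega
              subst this; exact subset_rfl
    | succ j ih =>
      intro hj i hi
      rcases Nat.lt_or_ge i (j+1) with h | h
      · exact (ih (by omega) i (by omega)).trans (hs j (by omega))
      · have : i = j + 1 := by omega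
        subst this; exact subset_rfl
  have hmid : ∀ S ⊆ X, l ≤ S.card → S.card < l + k →
      ∃ Z, S ∪ V (S.card - l) ⊆ Z ∧ Z ⊆ S ∪ V (S.card - l + 1) ∧ P Z := by
    intro S hS h1 h2
    have a1 := hV (S.card - l) (by omega)
    have a2 := hV (S.card - l + 1) (by omega)
    have d1 : Disjoint S (V (S.card - l)) := Finset.disjoint_of_subset_left hS
      (Finset.disjoint_of_subset_right a1.2.1 hd)
    have d2 : Disjoint S (V (S.card - l + 1)) := Finset.disjoint_of_subset_left hS
      (Finset.disjoint_of_subset_right a2.2.1 hd)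
    obtain ⟨Z, z1, z2, z3⟩ := PCopy.interval hred
      (Finset.union_subset_union_right (s := S) (hs (S.card - l) (by omega)))
      (by rw [Finset.card_union_of_disjoint d1, Finset.card_union_of_disjoint d2, a1.2.2, a2.2.2]
          omega)
    exact ⟨Z, z1, z2, not_not.1 z3⟩
  -- for every `S`, a set between a lower and an upper bound
  let lo : ℕ → Finset α := fun s => if s < l then W0 else if s < l + k then V (s - l) else W1
  let hi : ℕ → Finset α := fun s => if s < l then W0 else if s < l + k then V (s - l + 1) else W1
  have hex : ∀ S : Finset α, ∃ Z, S ⊆ X → S ∪ lo S.card ⊆ Z ∧ Z ⊆ S ∪ hi S.card ∧ P Z := by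
    intro S
    by_cases hS : S ⊆ X
    · by_cases h1 : S.card < l
      · exact ⟨S ∪ W0, fun _ => by simp only [lo, hi, h1, if_true]; exact ⟨subset_rfl, subset_rfl, hlow S hS h1⟩⟩
      · by_cases h2 : S.card < l + k
        · obtain ⟨Z, hZ⟩ := hmid S hS (by omega) h2
          exact ⟨Z, fun _ => by simp only [lo, hi, h1, h2, if_true, if_false]; exact hZ⟩
        · exact ⟨S ∪ W1, fun _ => by simp only [lo, hi, h1, h2, if_false]; exact ⟨subset_rfl, subset_rfl, hhigh S hS (by omega)⟩⟩
    · exact ⟨∅, fun h => absurd h hS⟩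
  choose f hf using hex
  have hhiW : ∀ s, hi s ⊆ W1 := by
    intro s
    simp only [hi]
    split_ifs with h1 h2
    · exact h01
    · exact (hV _ (by omega)).2.1
    · exact subset_rfl
  have hhilo : ∀ s t, s < t → hi s ⊆ lo t := by
    intro s t hst
    simp only [hi, lo]
    split_ifs with h1 h2 h3 h4 h5 h6 <;> first
      | exact subset_rfl | exact h01 | omega | skip
    · exact (hV _ (by omega)).1
    · exact hVmono _ (by omega) _ (by omega)
    · exact (hV _ (by omega)).2.1
  refine PCopy.of_map X hX f ?_ ?_ (fun S hS => (hf S hS).2.2)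
  · intro S T hST hT
    rcases eq_or_ne S T with rfl | hne
    · exact subset_rfl
    · have hlt : S.card < T.card := Finset.card_lt_card (hST.ssubset_of_ne hne)
      exact (hf S (hST.trans hT)).2.1.trans
        ((Finset.union_subset_union hST (hhilo _ _ hlt)).trans (hf T hT).1)
  · intro S hS
    obtain ⟨a, b, -⟩ := hf S hS
    apply Finset.Subset.antisymm
    · intro x hx
      rw [Finset.mem_inter] at hx
      rcases Finset.mem_union.1 (b hx.1) with h | h
      · exact h
      · exact absurd (hhiW _ h) (Finset.disjoint_left.1 hd hx.2)
    · exact Finset.subset_inter (Finset.subset_union_left.trans a) hS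

/-- A crown with bottom and top is a copy of `Q 3`. -/
theorem crown {α : Type*} {P : Finset α → Prop} (b t : Finset α) (x y : Fin 3 → Finset α)
    (hb : P b) (ht : P t) (hx : ∀ i, P (x i)) (hy : ∀ i, P (y i))
    (hbx : ∀ i, b ⊆ x i) (hyt : ∀ i, y i ⊆ t)
    (hxy : ∀ i j, i ≠ j → x i ⊆ y j) (hn : ∀ i, ¬ x i ⊆ y i) : PCopy 3 P := by
  let f : Finset (Fin 3) → Finset α := fun S =>
    if S = ∅ then b else if S = {0} then x 0 else if S = {1} then x 1 else if S = {2} then x 2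
    else if S = {0,1} then y 2 else if S = {0,2} then y 1 else if S = {1,2} then y 0 else t
  have cases8 : ∀ S : Finset (Fin 3), S = ∅ ∨ S = {0} ∨ S = {1} ∨ S = {2} ∨ S = {0,1} ∨ S = {0,2}
      ∨ S = {1,2} ∨ S = {0,1,2} := by decide
  have e0 : f ∅ = b := rfl
  have e1 : f {0} = x 0 := rfl
  have e2 : f {1} = x 1 := rfl
  have e3 : f {2} = x 2 := rfl
  have e4 : f {0,1} = y 2 := rfl
  have e5 : f {0,2} = y 1 := rfl
  have e6 : f {1,2} = y 0 := rfl
  have e7 : f {0,1,2} = t := rfl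
  have hxt : ∀ i, x i ⊆ t := by
    intro i
    obtain ⟨j, hj⟩ : ∃ j, i ≠ j := by revert i; decide
    exact (hxy i j hj).trans (hyt j)
  have hby : ∀ i, b ⊆ y i := by
    intro i
    obtain ⟨j, hj⟩ : ∃ j, j ≠ i := by revert i; decide
    exact (hbx j).trans (hxy j i hj)
  have hlow : ∀ S i, i ∈ S → x i ⊆ f S := by
    intro S i hi
    rcases cases8 S with rfl | rfl | rfl | rfl | rfl | rfl | rfl | rfl <;>
      simp only [e0,e1,e2,e3,e4,e5,e6,e7] <;> fin_cases i <;>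
      first
        | exact subset_rfl | exact hxt _ | exact hxy _ _ (by decide) | (exact absurd hi (by decide))
  have hup : ∀ S i, i ∉ S → f S ⊆ y i := by
    intro S i hi
    rcases cases8 S with rfl | rfl | rfl | rfl | rfl | rfl | rfl | rfl <;>
      simp only [e0,e1,e2,e3,e4,e5,e6,e7] <;> fin_cases i <;>
      first
        | exact subset_rfl | exact hby _ | exact hxy _ _ (by decide) | (exact absurd (by decide) hi)
  have hbot : ∀ S, b ⊆ f S := by
    intro S
    rcases cases8 S with rfl | rfl | rfl | rfl | rfl | rfl | rfl | rfl <;>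
      simp only [e0,e1,e2,e3,e4,e5,e6,e7] <;>
      first
        | exact subset_rfl | exact hby _ | exact hbx _ | exact (hby 0).trans (hyt 0)
  have htop : ∀ S, f S ⊆ t := by
    intro S
    rcases cases8 S with rfl | rfl | rfl | rfl | rfl | rfl | rfl | rfl <;>
      simp only [e0,e1,e2,e3,e4,e5,e6,e7] <;>
      first
        | exact subset_rfl | exact hyt _ | exact hxt _ | exact (hby 0).trans (hyt 0)
  refine ⟨f, fun S T => ⟨fun h => ?_, fun h i hi => ?_⟩, fun S => ?_⟩
  · rcases cases8 S with rfl | rfl | rfl | rfl | rfl | rfl | rfl | rfl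
    · exact hbot T
    · exact hlow T 0 (h (by decide))
    · exact hlow T 1 (h (by decide))
    · exact hlow T 2 (h (by decide))
    · by_cases h2 : (2 : Fin 3) ∈ T
      · have : T = {0,1,2} := by revert T; decide
        rw [this]; exact htop _
      · have : T = {0,1} := by revert T; decide
        rw [this]
    · by_cases h2 : (1 : Fin 3) ∈ T
      · have : T = {0,1,2} := by revert T; decide
        rw [this]; exact htop _
      · have : T = {0,2} := by revert T; decide
        rw [this]
    · by_cases h2 : (0 : Fin 3) ∈ T
      · have : T = {0,1,2} := by revert T; decide
        rw [this]; exact htop _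
      · have : T = {1,2} := by revert T; decide
        rw [this]
    · have : T = {0,1,2} := by revert T; decide
      rw [this]
  · by_contra hiT
    exact hn i ((hlow S i hi).trans (h.trans (hup T i hiT)))
  · rcases cases8 S with rfl | rfl | rfl | rfl | rfl | rfl | rfl | rfl <;>
      simp only [e0,e1,e2,e3,e4,e5,e6,e7] <;>
      first
        | exact hb | exact ht | exact hx _ | exact hy _

/-- Two points meet every small nonempty red set. -/
theorem transversal {α : Type*} [DecidableEq α] [Fintype α] {n r : ℕ} {R : Finset α → Prop}
    (hred : ¬ PCopy 3 R) (hblue : ¬ PCopy n (fun S => ¬ R S))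
    (h0 : R ∅) (h1 : R Finset.univ) (hr : 2 * r + 1 + n ≤ Fintype.card α) :
    ∃ P : Finset α, P.card ≤ 2 ∧ ∀ S : Finset α, S.Nonempty → S.card ≤ r → R S → ¬ Disjoint S P := by
  classical
  let good : Finset α → Prop := fun P =>
    ∀ S : Finset α, S.Nonempty → S.card ≤ r → R S → ¬ Disjoint S P
  have hgu : good Finset.univ := by
    intro S hS _ _ hd
    obtain ⟨x, hx⟩ := hS
    exact Finset.disjoint_left.1 hd hx (Finset.mem_univ x)
  obtain ⟨P, hP, hmin⟩ := Finset.exists_min_image (Finset.univ.filter good) Finset.card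
    ⟨_, Finset.mem_filter.2 ⟨Finset.mem_univ _, hgu⟩⟩
  rw [Finset.mem_filter] at hP
  refine ⟨P, ?_, hP.2⟩
  by_contra hcard
  push Not at hcard
  have hpriv : ∀ p ∈ P, ∃ S : Finset α, S.card ≤ r ∧ R S ∧ p ∈ S ∧ ∀ q ∈ P, q ≠ p → q ∉ S := by
    intro p hp
    have hng : ¬ good (P.erase p) := by
      intro hg
      have := hmin _ (Finset.mem_filter.2 ⟨Finset.mem_univ _, hg⟩)
      rw [Finset.card_erase_of_mem hp] at this
      omega
    simp only [good] at hng
    push Not at hng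
    obtain ⟨S, s1, s2, s3, s4⟩ := hng
    have s5 := hP.2 S s1 s2 s3
    have key : ∀ q ∈ P, q ≠ p → q ∉ S := fun q hq hqp hqS =>
      Finset.disjoint_left.1 s4 hqS (Finset.mem_erase.2 ⟨hqp, hq⟩)
    refine ⟨S, s2, s3, ?_, key⟩
    by_contra hpS
    apply s5
    rw [Finset.disjoint_left]
    intro q hqS hqP
    exact key q hqP (fun h => hpS (h ▸ hqS)) hqS
  obtain ⟨T, hTP, hT⟩ := Finset.exists_subset_card_eq (show 3 ≤ P.card by omega)
  let e := (T.equivFinOfCardEq hT).symm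
  have hp : ∀ i : Fin 3, ((e i : α)) ∈ P := fun i => hTP (e i).2
  have hpne : ∀ i j, i ≠ j → (e i : α) ≠ e j := fun i j h h' => h (e.injective (Subtype.ext h'))
  choose x x1 x2 x3 x4 using fun i => hpriv _ (hp i)
  have hy : ∀ i, ∃ y : Finset α, R y ∧ (∀ j, j ≠ i → x j ⊆ y) ∧ (e i : α) ∉ y := by
    intro i
    obtain ⟨j, k, hji, hki, hall⟩ : ∃ j k : Fin 3, j ≠ i ∧ k ≠ i ∧ ∀ l, l ≠ i → l = j ∨ l = k := by
      revert i; decide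
    have hsub : x j ∪ x k ⊆ Finset.univ.erase (e i : α) := by
      intro a ha
      refine Finset.mem_erase.2 ⟨?_, Finset.mem_univ _⟩
      rintro rfl
      rcases Finset.mem_union.1 ha with h | h
      · exact x4 j _ (hp i) (hpne _ _ hji.symm) h
      · exact x4 k _ (hp i) (hpne _ _ hki.symm) h
    obtain ⟨Z, z1, z2, z3⟩ := PCopy.interval hblue hsub (by
      rw [Finset.card_erase_of_mem (Finset.mem_univ _), Finset.card_univ]
      have := Finset.card_union_le (x j) (x k)
      have := x1 j
      have := x1 k
      omega)
    refine ⟨Z, not_not.1 z3, ?_, fun h => by simpa using z2 h⟩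
    intro l hl
    rcases hall l hl with rfl | rfl
    · exact Finset.subset_union_left.trans z1
    · exact Finset.subset_union_right.trans z1
  choose y y1 y2 y3 using hy
  exact hred (crown ∅ Finset.univ x y h0 h1 x2 y1 (fun _ => Finset.empty_subset _)
    (fun _ => Finset.subset_univ _) (fun i j h => y2 j i h) (fun i h => y3 i (h (x3 i))))

theorem PCopy.compl {α : Type*} [DecidableEq α] [Fintype α] {m : ℕ} {P : Finset α → Prop}
    (h : PCopy m (fun S => P Sᶜ)) : PCopy m P := by
  obtain ⟨f, h1, h2⟩ := h
  refine ⟨fun S => (f Sᶜ)ᶜ, fun S T => ?_, fun S => h2 _⟩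
  rw [Finset.compl_subset_compl, ← h1, Finset.compl_subset_compl]

/-- The case where bottom and top are red. -/
theorem redEnds {α : Type*} [DecidableEq α] [Fintype α] {n : ℕ} (hn : 1 ≤ n) {R : Finset α → Prop}
    (h0 : R ∅) (h1 : R Finset.univ) (hD : 21 * n + 31 ≤ 12 * Fintype.card α) :
    PCopy 3 R ∨ PCopy n (fun S => ¬ R S) := by
  by_contra hcon
  push Not at hcon
  obtain ⟨hred, hblue⟩ := hcon
  obtain ⟨D, hDD⟩ : ∃ D, D = Fintype.card α := ⟨_, rfl⟩
  obtain ⟨r, hr⟩ : ∃ r, r = (D - 1 - n) / 2 := ⟨_, rfl⟩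
  obtain ⟨P, hPc, hP⟩ := transversal (r := r) hred hblue h0 h1 (by omega)
  obtain ⟨P', hPc', hP'⟩ := transversal (r := r) (R := fun S => R Sᶜ) (n := n)
    (fun h => hred h.compl) (fun h => hblue (PCopy.compl (P := fun S => ¬ R S) h))
    (by simpa using h1) (by simpa using h0) (by omega)
  have hu : (P ∪ P').card ≤ D - n := (Finset.card_union_le _ _).trans (by omega)
  obtain ⟨Y, hY1, -, hYc⟩ := Finset.exists_subsuperset_card_eq (Finset.subset_univ (P ∪ P'))
    hu (by rw [Finset.card_univ]; omega)
  have hPY : P ⊆ Y := Finset.subset_union_left.trans hY1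
  have hPY' : P' ⊆ Y := Finset.subset_union_right.trans hY1
  obtain ⟨q, hq⟩ : (Y \ P).Nonempty := by
    rw [← Finset.card_pos, Finset.card_sdiff_of_subset hPY]; omega
  obtain ⟨q', hq'⟩ : ((Y \ P').erase q).Nonempty := by
    rw [← Finset.card_pos]
    have := Finset.pred_card_le_card_erase (s := Y \ P') (a := q)
    rw [Finset.card_sdiff_of_subset hPY'] at this
    omega
  simp only [Finset.mem_sdiff, Finset.mem_erase] at hq hq'
  have hXc : (Yᶜ).card = n := by rw [Finset.card_compl]; omega
  apply hblue
  refine layer (X := Yᶜ) (W0 := {q}) (W1 := Y.erase q') (l := r) (k := n + 1 - 2 * r)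
    (by simpa using hred) hXc ?_ ?_ ?_ ?_ ?_
  · rw [Finset.singleton_subset_iff, Finset.mem_erase]
    exact ⟨fun h => hq'.1 h.symm, hq.1⟩
  · rw [Finset.disjoint_left]
    intro a ha hb
    exact (Finset.mem_compl.1 ha) (Finset.mem_of_mem_erase hb)
  · rw [Finset.card_singleton, Finset.card_erase_of_mem hq'.2.1, hYc]
    omega
  · intro S hS hSc hR
    refine hP (S ∪ {q}) ⟨q, by simp⟩ ?_ hR ?_
    · have := Finset.card_union_le S {q}
      rw [Finset.card_singleton] at this
      omega
    · rw [Finset.disjoint_left]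
      intro a ha haP
      rcases Finset.mem_union.1 ha with h | h
      · exact Finset.mem_compl.1 (hS h) (hPY haP)
      · rw [Finset.mem_singleton] at h
        subst h
        exact hq.2 haP
  · intro S hS hSc hR
    have hcompl : (S ∪ Y.erase q')ᶜ = (Yᶜ \ S) ∪ {q'} := by
      ext a
      have h2 := @hS a
      have h3 := hq'.2.1
      simp only [Finset.mem_compl, Finset.mem_union, Finset.mem_erase, Finset.mem_sdiff,
        Finset.mem_singleton] at *
      by_cases h : a = q'
      · subst h; tauto
      · tauto
    refine hP' (S ∪ Y.erase q')ᶜ ⟨q', by rw [hcompl]; simp⟩ ?_ (by simpa using hR) ?_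
    · rw [hcompl]
      have := Finset.card_union_le (Yᶜ \ S) {q'}
      rw [Finset.card_singleton, Finset.card_sdiff_of_subset hS] at this
      omega
    · rw [hcompl, Finset.disjoint_left]
      intro a ha haP
      rcases Finset.mem_union.1 ha with h | h
      · exact Finset.mem_compl.1 (Finset.mem_sdiff.1 h).1 (hPY' haP)
      · rw [Finset.mem_singleton] at h
        subst h
        exact hq'.2.2 haP

/-- Transport of copies from an interval. -/
theorem PCopy.lift {α : Type*} [DecidableEq α] {m : ℕ} {P : Finset α → Prop} (A C : Finset α)
    (hd : Disjoint A C)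
    (h : PCopy m (fun S : Finset C => P (A ∪ S.map (Function.Embedding.subtype _)))) :
    PCopy m P := by
  obtain ⟨f, h1, h2⟩ := h
  refine ⟨fun S => A ∪ (f S).map (Function.Embedding.subtype _), fun S T => ?_, fun S => h2 S⟩
  rw [h1]
  constructor
  · intro h
    exact Finset.union_subset_union_right (Finset.map_subset_map.2 h)
  · intro h a ha
    have := h (Finset.mem_union_right A (Finset.mem_map_of_mem _ ha))
    rcases Finset.mem_union.1 this with h' | h'
    · exact absurd a.2 (Finset.disjoint_left.1 hd h')
    · exact (Finset.mem_map' _).1 h'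

theorem main_general {α : Type*} [DecidableEq α] [Fintype α] {n : ℕ} (hn : 1 ≤ n)
    (R : Finset α → Prop) (hN : 37 * n + 39 ≤ 16 * Fintype.card α) :
    PCopy 3 R ∨ PCopy n (fun S => ¬ R S) := by
  classical
  by_contra hcon
  push Not at hcon
  obtain ⟨hred, hblue⟩ := hcon
  obtain ⟨N, hNN⟩ : ∃ N, N = Fintype.card α := ⟨_, rfl⟩
  obtain ⟨A0, -, -, hA0⟩ := PCopy.interval hblue (Finset.empty_subset (Finset.univ : Finset α))
    (by rw [Finset.card_univ, Finset.card_empty]; omega)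
  rw [not_not] at hA0
  obtain ⟨A, hA, hAmin⟩ := Finset.exists_min_image (Finset.univ.filter R) Finset.card
    ⟨A0, by simpa using hA0⟩
  obtain ⟨B, hB, hBmax⟩ := Finset.exists_max_image (Finset.univ.filter (fun S => R S ∧ A ⊆ S))
    Finset.card ⟨A, by simpa using hA⟩
  simp only [Finset.mem_filter, Finset.mem_univ, true_and] at hA hB hAmin hBmax
  have hAB := Finset.card_le_card hB.2
  have hBN : B.card ≤ N := by rw [hNN]; exact Finset.card_le_univ B
  have hAn : A.card ≤ n := by
    by_contra hlt
    obtain ⟨X, -, hXc⟩ := Finset.exists_subset_card_eq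
      (show n ≤ (Finset.univ : Finset α).card by rw [Finset.card_univ]; omega)
    obtain ⟨Z, -, hZ, hZR⟩ := PCopy.interval hblue (Finset.empty_subset X) (by simp [hXc])
    have := hAmin Z (not_not.1 hZR)
    have := Finset.card_le_card hZ
    omega
  by_cases hcase : 3 * (n + 1 - A.card - (N - B.card)) ≤ N - n
  · obtain ⟨Y, hY1, -, hYc⟩ := Finset.exists_subsuperset_card_eq (Finset.subset_univ A)
      (n := N - n) (by omega) (by rw [Finset.card_univ]; omega)
    apply hblue
    refine layer (X := Yᶜ) (W0 := ∅) (W1 := Y) (l := A.card) (k := n + 1 - A.card - (N - B.card))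
      (by simpa using hred) (by rw [Finset.card_compl]; omega) (Finset.empty_subset _)
      disjoint_compl_left (by rw [Finset.card_empty]; omega) ?_ ?_
    · intro S hS hSc hR
      have := hAmin _ hR
      rw [Finset.union_empty] at this
      omega
    · intro S hS hSc hR
      have := hBmax _ ⟨hR, hY1.trans Finset.subset_union_right⟩
      rw [Finset.card_union_of_disjoint (Finset.disjoint_of_subset_left hS disjoint_compl_left)]
        at this
      omega
  · have hd : Disjoint A (B \ A) := Finset.disjoint_sdiff
    have hc : Fintype.card (B \ A : Finset α) = B.card - A.card := by
      rw [Fintype.card_coe, Finset.card_sdiff_of_subset hB.2]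
    rcases redEnds (α := (B \ A : Finset α)) hn
      (R := fun S => R (A ∪ S.map (Function.Embedding.subtype _))) (by simpa using hA) (by
        have : (Finset.univ : Finset (B \ A : Finset α)).map (Function.Embedding.subtype _)
            = B \ A := by
          ext a; simp
        rw [this, Finset.union_sdiff_of_subset hB.2]; exact hB.1) (by rw [hc]; omega) with h | h
    · exact hred (PCopy.lift A (B \ A) hd h)
    · exact hblue (PCopy.lift (P := fun S => ¬ R S) A (B \ A) hd h)

/-- If n ≥ 1 and 16N ≥ 37n + 39, every 2-coloring of Q_N contains a red
copy of Q_3 or a blue copy of Q_n, i.e. R(Q_3, Q_n) ≤ (37/16)n + 39/16. -/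
theorem ramsey_Q3_Qn (n N : ℕ) (hn : 1 ≤ n) (hN : 16 * N ≥ 37 * n + 39)
    (c : Finset (Fin N) → Bool) :
    HasRedCopy 3 N c ∨ HasBlueCopy n N c := by
  have hinj : ∀ {m : ℕ} (f : Finset (Fin m) → Finset (Fin N)),
      (∀ S T : Finset (Fin m), S ⊆ T ↔ f S ⊆ f T) → Function.Injective f := by
    intro m f h S T hST
    exact Finset.Subset.antisymm ((h S T).2 hST.le) ((h T S).2 hST.ge)
  rcases main_general hn (fun S => c S = true) (by simpa using hN) with ⟨f, h1, h2⟩ | ⟨f, h1, h2⟩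
  · exact Or.inl ⟨f, hinj f h1, h1, h2⟩
  · exact Or.inr ⟨f, hinj f h1, h1, fun S => by simpa using h2 S⟩
end

section
/- For all integers n ≥ m ≥ 4 and every integer N satisfying (N : ℝ) ≥ (m − 2 + (9m − 9)/((2m − 3)(m + 1)))·n + m + 3, every 2-coloring of the Boolean lattice Q_N contains a red copy of Q_m or a blue copy of Q_n. (Equivalently, R(Q_m, Q_n) ≤ (m − 2 + (9m − 9)/((2m − 3)(m + 1)))n + m + 3 for all n ≥ m ≥ 4.) -/
/-- A copy of `Q_k` in colour `b`. -/
def CopyIn (b : Bool) (k N : ℕ) (c : Finset (Fin N) → Bool) : Prop :=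
  ∃ f : Finset (Fin k) → Finset (Fin N), Function.Injective f ∧
    (∀ S T : Finset (Fin k), S ⊆ T ↔ f S ⊆ f T) ∧ (∀ S, c (f S) = b)

theorem embed_copy {k N : ℕ} (c : Finset (Fin N) → Bool) (b : Bool)
    (X₀ : Finset (Fin N)) (hX : X₀.card = k)
    (lo hi : Finset (Fin N) → Finset (Fin N))
    (h : ∀ S, S ⊆ X₀ → ∃ C, c C = b ∧ lo S ⊆ C ∧ C ⊆ hi S)
    (h1 : ∀ S, S ⊆ X₀ → S ⊆ lo S) (h2 : ∀ S, S ⊆ X₀ → hi S ∩ X₀ ⊆ S)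
    (h3 : ∀ S S', S ⊆ S' → S' ⊆ X₀ → S.card < S'.card → hi S ⊆ lo S') :
    CopyIn b k N c := by
  choose! g hg using h
  let e : Fin k ↪ Fin N := (X₀.orderEmbOfFin hX).toEmbedding
  have he : ∀ S : Finset (Fin k), S.map e ⊆ X₀ := by
    intro S x hx
    simp only [Finset.mem_map] at hx
    obtain ⟨y, -, rfl⟩ := hx
    exact X₀.orderEmbOfFin_mem hX y
  have key : ∀ S T : Finset (Fin k), S ⊆ T ↔ g (S.map e) ⊆ g (T.map e) := by
    intro S T
    constructor
    · intro hST
      by_cases hEq : S = T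
      · rw [hEq]
      have hc : S.card < T.card := Finset.card_lt_card (Finset.ssubset_iff_subset_ne.2 ⟨hST, hEq⟩)
      exact ((hg _ (he S)).2.2.trans (h3 _ _ (Finset.map_subset_map.2 hST) (he T)
        (by simpa using hc))).trans (hg _ (he T)).2.1
    · intro hST
      rw [← Finset.map_subset_map (f := e)]
      intro x hx
      apply h2 _ (he T)
      rw [Finset.mem_inter]
      exact ⟨(hg _ (he T)).2.2 (hST ((hg _ (he S)).2.1 (h1 _ (he S) hx))), he S hx⟩
  refine ⟨fun S => g (S.map e), ?_, key, fun S => (hg _ (he S)).1⟩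
  intro S T hST
  exact Finset.Subset.antisymm ((key S T).2 (by simp only at hST; rw [hST]))
    ((key T S).2 (by simp only at hST; rw [hST]))

theorem block {k N : ℕ} (c : Finset (Fin N) → Bool) (b : Bool) (hno : ¬ CopyIn b k N c)
    (A B : Finset (Fin N)) (hAB : A ⊆ B) (hk : k ≤ (B \ A).card) :
    ∃ C, A ⊆ C ∧ C ⊆ B ∧ c C = !b := by
  by_contra hcon
  push Not at hcon
  apply hno
  obtain ⟨X₀, hX₀, hcard⟩ := Finset.exists_subset_card_eq hk
  refine embed_copy c b X₀ hcard (fun S => A ∪ S) (fun S => A ∪ S) ?_ ?_ ?_ ?_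
  · intro S hS
    refine ⟨A ∪ S, ?_, subset_rfl, subset_rfl⟩
    have := hcon (A ∪ S) Finset.subset_union_left
      (Finset.union_subset hAB ((hS.trans hX₀).trans Finset.sdiff_subset))
    cases b <;> simpa using this
  · intro S _; exact Finset.subset_union_right
  · intro S _ x hx
    have := @hX₀ x
    grind
  · intro S S' h _ _
    exact Finset.union_subset_union_right h

theorem initial_chain {α : Type*} [DecidableEq α] (U Y' Y : Finset α) (h1 : U ⊆ Y') (h2 : Y' ⊆ Y) :
    ∃ P : ℕ → Finset α, Monotone P ∧ (∀ j, P j ⊆ Y) ∧ (∀ j, j ≤ Y.card → (P j).card = j) ∧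
      P 0 = ∅ ∧ (∀ j, Y.card ≤ j → P j = Y) ∧ P U.card = U ∧ P Y'.card = Y' := by
  let l := U.toList ++ ((Y' \ U).toList ++ (Y \ Y').toList)
  have hnd : l.Nodup := by
    simp only [l, List.nodup_append, Finset.nodup_toList, Finset.mem_toList, List.mem_append]
    grind
  have hlY : l.toFinset = Y := by
    ext x; simp only [l, List.mem_toFinset, List.mem_append, Finset.mem_toList]
    grind
  have hlen : l.length = Y.card := by rw [← hlY, List.toFinset_card_of_nodup hnd]
  have hY' : (Y' \ U).card + U.card = Y'.card := Finset.card_sdiff_add_card_eq_card h1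
  refine ⟨fun j => (l.take j).toFinset, ?_, ?_, ?_, ?_, ?_, ?_, ?_⟩
  · intro i j hij x hx
    simp only [List.mem_toFinset] at hx ⊢
    exact (List.take_subset_take_left l hij) hx
  · intro j x hx
    rw [← hlY]
    simp only [List.mem_toFinset] at hx ⊢
    exact List.mem_of_mem_take hx
  · intro j hj
    have : (l.take j).Nodup := hnd.sublist (List.take_sublist _ _)
    simp only
    rw [List.toFinset_card_of_nodup this, List.length_take]
    omega
  · simp
  · intro j hj
    simp only
    rw [List.take_of_length_le (by omega), hlY]
  · have : l.take U.card = U.toList := by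
      simp [l]
    simp only
    rw [this, Finset.toList_toFinset]
  · have : l.take Y'.card = U.toList ++ (Y' \ U).toList := by
      have h3 : Y'.card = (U.toList ++ (Y' \ U).toList).length := by simp; omega
      simp only [l]
      rw [← List.append_assoc, h3, List.take_left]
    simp only
    rw [this]
    ext x; simp only [List.mem_toFinset, List.mem_append, Finset.mem_toList]
    grind

theorem blue_lemma {m n N : ℕ} (c : Finset (Fin N) → Bool) (hred : ¬ CopyIn true m N c)
    (B X D X' : Finset (Fin N)) (L L' : ℕ) (hBD : Disjoint B D)
    (hlow : ∀ T, Disjoint T (B ∪ X) → T.card < L → c (B ∪ T) = false)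
    (hup : ∀ T, Disjoint T (D ∪ X') → T.card < L' → c (D ∪ T)ᶜ = false)
    (hroom : n + (B ∪ X ∪ D ∪ X').card ≤ N)
    (hsize : n + B.card + D.card + m * (n + 1 - L - L') ≤ N) : CopyIn false n N c := by
  have hn : n ≤ ((B ∪ X ∪ D ∪ X')ᶜ).card := by
    rw [Finset.card_compl, Fintype.card_fin]; omega
  obtain ⟨X₀, hX₀, hcard⟩ := Finset.exists_subset_card_eq hn
  have hX : ∀ x ∈ X₀, x ∉ B ∧ x ∉ X ∧ x ∉ D ∧ x ∉ X' := by
    intro x hx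
    have := hX₀ hx
    simp only [Finset.mem_compl, Finset.mem_union] at this
    tauto
  have hBD' : ∀ x ∈ B, x ∉ D := fun x hx hx' => (Finset.disjoint_left.1 hBD) hx hx'
  set Y := ((X₀ ∪ B) ∪ D)ᶜ with hY
  have hYc : Y.card + n + B.card + D.card = N := by
    have h1 : Disjoint X₀ B := Finset.disjoint_left.2 fun x hx => (hX x hx).1
    have h2 : Disjoint (X₀ ∪ B) D := Finset.disjoint_left.2 fun x hx => by
      rcases Finset.mem_union.1 hx with h | h
      · exact (hX x h).2.2.1
      · exact hBD' x h
    have h3 := Finset.card_compl_add_card ((X₀ ∪ B) ∪ D)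
    rw [Finset.card_union_of_disjoint h2, Finset.card_union_of_disjoint h1, Fintype.card_fin,
      ← hY] at h3
    omega
  obtain ⟨P, hPm, hPY, hPc, -, -, -, -⟩ := initial_chain ∅ Y Y (by simp) subset_rfl
  have hPY' : ∀ j, ∀ x ∈ P j, x ∉ X₀ ∧ x ∉ B ∧ x ∉ D := by
    intro j x hx
    have := hPY j hx
    simp only [hY, Finset.mem_compl, Finset.mem_union] at this
    tauto
  let lo : Finset (Fin N) → Finset (Fin N) := fun T =>
    if T.card < L then B ∪ T else if n - T.card < L' then (D ∪ (X₀ \ T))ᶜ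
    else T ∪ (B ∪ P (m * (T.card - L)))
  let hi : Finset (Fin N) → Finset (Fin N) := fun T =>
    if T.card < L then B ∪ T else if n - T.card < L' then (D ∪ (X₀ \ T))ᶜ
    else T ∪ (B ∪ P (m * (T.card - L + 1)))
  have hle : ∀ T, T ⊆ X₀ → T.card ≤ n := fun T hT => hcard ▸ Finset.card_le_card hT
  refine embed_copy c false X₀ hcard lo hi ?_ ?_ ?_ ?_
  · intro T hT
    have hTn := hle T hT
    by_cases h1 : T.card < L
    · refine ⟨B ∪ T, hlow T ?_ h1, ?_, ?_⟩
      · rw [Finset.disjoint_left]; intro x hx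
        have := hX x (hT hx)
        simp only [Finset.mem_union]; tauto
      · simp [lo, h1]
      · simp [hi, h1]
    by_cases h2 : n - T.card < L'
    · refine ⟨(D ∪ (X₀ \ T))ᶜ, hup (X₀ \ T) ?_ ?_, ?_, ?_⟩
      · rw [Finset.disjoint_left]; intro x hx
        have := hX x (Finset.mem_sdiff.1 hx).1
        simp only [Finset.mem_union]; tauto
      · rw [Finset.card_sdiff_of_subset hT, hcard]; exact h2
      · simp [lo, h1, h2]
      · simp [hi, h1, h2]
    · have hlo : lo T = T ∪ (B ∪ P (m * (T.card - L))) := by simp [lo, h1, h2]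
      have hhi : hi T = T ∪ (B ∪ P (m * (T.card - L + 1))) := by simp [hi, h1, h2]
      have hPP : P (m * (T.card - L)) ⊆ P (m * (T.card - L + 1)) :=
        hPm (Nat.mul_le_mul_left _ (by omega))
      have hb : m * (T.card - L + 1) ≤ m * (n + 1 - L - L') := Nat.mul_le_mul_left _ (by omega)
      have hb2 : m * (T.card - L + 1) = m * (T.card - L) + m := by ring
      obtain ⟨C, hC1, hC2, hC3⟩ := block c true hred (lo T) (hi T) (by
        rw [hlo, hhi]
        exact Finset.union_subset_union_right (Finset.union_subset_union_right hPP)) (by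
        have hsub : P (m * (T.card - L + 1)) \ P (m * (T.card - L)) ⊆ hi T \ lo T := by
          intro x hx
          rw [Finset.mem_sdiff] at hx
          have h3 := hPY' _ x hx.1
          have h4 := @hT x
          rw [hlo, hhi]
          simp only [Finset.mem_sdiff, Finset.mem_union]
          tauto
        refine le_trans ?_ (Finset.card_le_card hsub)
        rw [Finset.card_sdiff_of_subset hPP, hPc _ (by omega), hPc _ (by omega)]
        omega)
      exact ⟨C, by simpa using hC3, hC1, hC2⟩
  · intro T hT x hx
    have h4 := hX x (hT hx)
    simp only [lo]
    split_ifs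
    · simp [hx]
    · simp [hx, h4]
    · simp [hx]
  · intro T hT x hx
    rw [Finset.mem_inter] at hx
    have h4 := hX x hx.2
    have h5 := hx.1
    simp only [hi] at h5
    split_ifs at h5
    · simpa [h4] using h5
    · simpa [h4, hx.2] using h5
    · simp only [Finset.mem_union] at h5
      rcases h5 with h | h | h
      · exact h
      · exact absurd h h4.1
      · exact absurd hx.2 (hPY' _ x h).1
  · intro T T' hTT hT' hlt
    have hTn := hle T' hT'
    have hm1 : P (m * (T.card - L + 1)) ⊆ P (m * (T'.card - L)) ∨ T.card < L := by
      by_cases h : T.card < L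
      · right; exact h
      · left; exact hPm (Nat.mul_le_mul_left _ (by omega))
    intro x hx
    have e1 := @hTT x
    have e2 := @hT' x
    have e3 := hX x
    have e4 := hBD' x
    have e5 := hPY' (m * (T.card - L + 1)) x
    by_cases a1 : T.card < L
    · simp only [hi, if_pos a1] at hx
      rw [Finset.mem_union] at hx
      have hx' : x ∈ B ∨ x ∈ T' := hx.imp id e1
      clear hX₀ hm1 hlow hup hPY' hPY hX hBD'
      simp only [lo]
      split_ifs
      · rw [Finset.mem_union]; exact hx'
      · simp only [Finset.mem_union, Finset.mem_compl, Finset.mem_sdiff]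
        rintro (h | ⟨h, h'⟩)
        · rcases hx' with hb | hb
          · exact e4 hb h
          · exact (e3 (e2 hb)).2.2.1 h
        · rcases hx' with hb | hb
          · exact (e3 h).1 hb
          · exact h' hb
      · simp only [Finset.mem_union]
        rcases hx' with hb | hb
        · exact Or.inr (Or.inl hb)
        · exact Or.inl hb
    have a2 : ¬ T'.card < L := by omega
    by_cases a3 : n - T.card < L'
    · have a4 : n - T'.card < L' := by omega
      simp only [hi, if_neg a1, if_pos a3] at hx
      simp only [lo, if_neg a2, if_pos a4]
      simp only [Finset.mem_union, Finset.mem_compl, Finset.mem_sdiff] at hx ⊢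
      rintro (h | ⟨h, h'⟩)
      · exact hx (Or.inl h)
      · exact hx (Or.inr ⟨h, fun h3 => h' (e1 h3)⟩)
    · simp only [hi, if_neg a1, if_neg a3, Finset.mem_union] at hx
      have e6 := (hm1.resolve_right a1)
      simp only [lo, if_neg a2]
      split_ifs
      · simp only [Finset.mem_union, Finset.mem_compl, Finset.mem_sdiff]
        rcases hx with h | h | h
        · rintro (g | ⟨g, g'⟩)
          · exact (e3 (e2 (e1 h))).2.2.1 g
          · exact g' (e1 h)
        · rintro (g | ⟨g, g'⟩)
          · exact e4 h g
          · exact (e3 g).1 h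
        · rintro (g | ⟨g, g'⟩)
          · exact (e5 h).2.2 g
          · exact (e5 h).1 g
      · simp only [Finset.mem_union]
        rcases hx with h | h | h
        · exact Or.inl (e1 h)
        · exact Or.inr (Or.inl h)
        · exact Or.inr (Or.inr (e6 h))

theorem prop_aux (F D X S Y a b : Prop) (e1 : S → X) (e2 : Y ↔ (¬ F ∧ ¬ D ∧ ¬ X)) (e3 : a → Y)
    (e4 : b → Y) (e5 : a → ¬ b) (e6 : F → ¬ D) (e7 : F → ¬ X) (e8 : D → ¬ X) :
    (((F ∨ S) ∨ (Y ∧ ¬ b)) ∨ a) ↔ ¬ ((D ∨ (X ∧ ¬ S)) ∨ b) := by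
  by_cases F <;> by_cases D <;> by_cases X <;> by_cases S <;> by_cases b <;> simp_all

theorem red_assembly {m n N : ℕ} (hm : 4 ≤ m) (c : Finset (Fin N) → Bool)
    (hblue : ¬ CopyIn false n N c)
    (F D X₀ Y : Finset (Fin N)) (hX : X₀.card = m)
    (hFD : Disjoint F D) (hFX : Disjoint F X₀) (hDX : Disjoint D X₀)
    (hY : Y = (F ∪ D ∪ X₀)ᶜ) (E E' : Fin N → Finset (Fin N))
    (hE : ∀ x ∈ X₀, E x ⊆ Y) (hE' : ∀ x ∈ X₀, E' x ⊆ Y)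
    (hF : c F = true) (hD : c Dᶜ = true)
    (hEr : ∀ x ∈ X₀, c (F ∪ {x} ∪ E x) = true)
    (hEr' : ∀ x ∈ X₀, c (D ∪ {x} ∪ E' x)ᶜ = true)
    (hEE : ∀ x ∈ X₀, ∀ y ∈ X₀, Disjoint (E x) (E' y))
    (C : ℕ → Finset (Fin N)) (hC : Monotone C) (hCY : ∀ i, C i ⊆ Y)
    (hC1 : C 1 = ∅) (hCm : C (m - 2) = Y)
    (hbig : ∀ S, S ⊆ X₀ → 2 ≤ S.card → S.card ≤ m - 2 →
      n ≤ ((C S.card \ C (S.card - 1)) \ (S.biUnion E ∪ (X₀ \ S).biUnion E')).card) :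
    CopyIn true m N c := by
  have hYm : ∀ x, x ∈ Y ↔ (x ∉ F ∧ x ∉ D ∧ x ∉ X₀) := by
    intro x; rw [hY]; simp only [Finset.mem_compl, Finset.mem_union]; tauto
  have hFDm : ∀ x ∈ F, x ∉ D := fun x h => Finset.disjoint_left.1 hFD h
  have hFXm : ∀ x ∈ F, x ∉ X₀ := fun x h => Finset.disjoint_left.1 hFX h
  have hDXm : ∀ x ∈ D, x ∉ X₀ := fun x h => Finset.disjoint_left.1 hDX h
  let G : ℕ → Finset (Fin N) → Finset (Fin N) := fun j S =>
    F ∪ S ∪ (C j \ (X₀ \ S).biUnion E') ∪ S.biUnion E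
  have hES : ∀ S, S ⊆ X₀ → S.biUnion E ⊆ Y := fun S hS => by
    rw [Finset.biUnion_subset]; exact fun x hx => hE x (hS hx)
  have hES' : ∀ S, S ⊆ X₀ → S.biUnion E' ⊆ Y := fun S hS => by
    rw [Finset.biUnion_subset]; exact fun x hx => hE' x (hS hx)
  have hdisj : ∀ S S', S ⊆ X₀ → S' ⊆ X₀ → Disjoint (S.biUnion E) (S'.biUnion E') := by
    intro S S' hS hS'
    rw [Finset.disjoint_biUnion_left]
    intro x hx
    rw [Finset.disjoint_biUnion_right]
    exact fun y hy => hEE x (hS hx) y (hS' hy)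
  have hCe : ∀ j, j ≤ 1 → C j = ∅ := fun j hj => Finset.subset_empty.1 (hC1 ▸ hC hj)
  have hCY' : ∀ j, m - 2 ≤ j → C j = Y := fun j hj =>
    Finset.Subset.antisymm (hCY j) (hCm ▸ hC hj)
  have hle : ∀ T, T ⊆ X₀ → T.card ≤ m := fun T hT => hX ▸ Finset.card_le_card hT
  have hlowG : ∀ S, ∀ j, j ≤ 1 → G j S = F ∪ S ∪ S.biUnion E := by
    intro S j hj; simp only [G, hCe j hj]; simp
  have hupG : ∀ S, S ⊆ X₀ → ∀ j, m - 2 ≤ j → G j S = (D ∪ (X₀ \ S) ∪ (X₀ \ S).biUnion E')ᶜ := by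
    intro S hS j hj
    simp only [G, hCY' j hj]
    ext x
    have e1 := @hS x
    have e2 := hYm x
    have e3 := @hES S hS x
    have e4 := @hES' (X₀ \ S) Finset.sdiff_subset x
    have e5 : x ∈ S.biUnion E → x ∉ (X₀ \ S).biUnion E' := fun h =>
      Finset.disjoint_left.1 (hdisj S (X₀ \ S) hS Finset.sdiff_subset) h
    have e6 := hFDm x
    have e7 := hFXm x
    have e8 := hDXm x
    rw [Finset.mem_union, Finset.mem_union, Finset.mem_union, Finset.mem_compl, Finset.mem_union,
      Finset.mem_union, Finset.mem_sdiff, Finset.mem_sdiff]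
    exact prop_aux _ _ _ _ _ _ _ e1 e2 e3 e4 e5 e6 e7 e8
  refine embed_copy c true X₀ hX (fun S => G (S.card - 1) S) (fun S => G S.card S) ?_ ?_ ?_ ?_
  · intro S hS
    have hSm := hle S hS
    have hsd : (X₀ \ S).card = m - S.card := by rw [Finset.card_sdiff_of_subset hS, hX]
    by_cases h1 : S.card ≤ 1
    · refine ⟨G S.card S, ?_, ?_, subset_rfl⟩
      · rw [hlowG S _ h1]
        by_cases h0 : S.card = 0
        · rw [Finset.card_eq_zero] at h0; subst h0; simpa using hF
        · obtain ⟨x, rfl⟩ := Finset.card_eq_one.1 (show S.card = 1 by omega)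
          simpa using hEr x (hS (by simp))
      · rw [hlowG S _ h1, hlowG S _ (by omega)]
    by_cases h2 : m - 1 ≤ S.card
    · refine ⟨G S.card S, ?_, ?_, subset_rfl⟩
      · rw [hupG S hS _ (by omega)]
        by_cases h0 : (X₀ \ S).card = 0
        · rw [Finset.card_eq_zero] at h0; rw [h0]; simpa using hD
        · obtain ⟨x, hx⟩ := Finset.card_eq_one.1 (show (X₀ \ S).card = 1 by omega)
          have hxX : x ∈ X₀ := (Finset.mem_sdiff.1 (show x ∈ X₀ \ S by rw [hx]; simp)).1
          rw [hx]
          simpa using hEr' x hxX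
      · rw [hupG S hS _ (by omega), hupG S hS _ (by omega)]
    have hCC : C (S.card - 1) ⊆ C S.card := hC (by omega)
    obtain ⟨T, hT1, hT2, hT3⟩ := block c false hblue (G (S.card - 1) S) (G S.card S) (by
        intro x hx
        have := @hCC x
        simp only [G, Finset.mem_union, Finset.mem_sdiff] at hx ⊢
        tauto) (by
      refine le_trans (hbig S hS (by omega) (by omega)) (Finset.card_le_card ?_)
      intro x hx
      have e1 := hYm x
      have e2 := @hCY S.card x
      have e3 := @hS x
      simp only [G, Finset.mem_union, Finset.mem_sdiff] at hx ⊢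
      tauto)
    exact ⟨T, by simpa using hT3, hT1, hT2⟩
  · intro S hS x hx
    simp only [G, Finset.mem_union]; tauto
  · intro S hS x hx
    have e1 := hYm x
    have e2 := @hCY S.card x
    have e3 := @hES S hS x
    have e4 := hFXm x
    simp only [G, Finset.mem_union, Finset.mem_inter, Finset.mem_sdiff] at hx
    tauto
  · intro S S' hSS hS' hlt x hx
    have e1 : C S.card ⊆ C (S'.card - 1) := hC (by omega)
    have e2 := @e1 x
    have e3 : S.biUnion E ⊆ S'.biUnion E := Finset.biUnion_subset_biUnion_of_subset_left E hSS
    have e4 : (X₀ \ S').biUnion E' ⊆ (X₀ \ S).biUnion E' :=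
      Finset.biUnion_subset_biUnion_of_subset_left E' (Finset.sdiff_subset_sdiff subset_rfl hSS)
    have e5 := @e3 x
    have e6 := @e4 x
    have e7 := @hSS x
    simp only [G, Finset.mem_union, Finset.mem_sdiff] at hx ⊢
    tauto

/-- The data needed for the assembly of a red copy of `Q_m`. -/
structure Setup (m N : ℕ) (c : Finset (Fin N) → Bool) (F D X₀ Y : Finset (Fin N))
    (E E' : Fin N → Finset (Fin N)) : Prop where
  hX : X₀.card = m
  hFD : Disjoint F D
  hFX : Disjoint F X₀
  hDX : Disjoint D X₀
  hY : Y = (F ∪ D ∪ X₀)ᶜ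
  hE : ∀ x ∈ X₀, E x ⊆ Y
  hE' : ∀ x ∈ X₀, E' x ⊆ Y
  hF : c F = true
  hD : c Dᶜ = true
  hEr : ∀ x ∈ X₀, c (F ∪ {x} ∪ E x) = true
  hEr' : ∀ x ∈ X₀, c (D ∪ {x} ∪ E' x)ᶜ = true
  hEE : ∀ x ∈ X₀, ∀ y ∈ X₀, Disjoint (E x) (E' y)

theorem cut_lemma {m n N : ℕ} (hm : 4 ≤ m) (c : Finset (Fin N) → Bool)
    (hblue : ¬ CopyIn false n N c) (F D X₀ Y : Finset (Fin N)) (E E' : Fin N → Finset (Fin N))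
    (hS : Setup m N c F D X₀ Y E E') (u u' : ℕ) (κ κ' : ℕ → ℕ)
    (hu : (X₀.biUnion E).card ≤ u) (hu' : (X₀.biUnion E').card ≤ u')
    (hκ : ∀ S, S ⊆ X₀ → (S.biUnion E).card ≤ κ S.card)
    (hκ' : ∀ S, S ⊆ X₀ → (S.biUnion E').card ≤ κ' S.card)
    (cut : ℕ → ℕ) (hmono : Monotone cut) (hcut1 : cut 1 = 0) (hcutm : cut (m - 2) = Y.card)
    (hcutle : ∀ i, cut i ≤ Y.card)
    (hgap : ∀ i, 2 ≤ i → i ≤ m - 2 → ∃ p q, n + p + q + cut (i - 1) ≤ cut i ∧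
      (κ i ≤ p ∨ u ≤ cut (i - 1)) ∧ (κ' (m - i) ≤ q ∨ cut i + u' ≤ Y.card)) :
    CopyIn true m N c := by
  have hUY : X₀.biUnion E ⊆ Y := by
    rw [Finset.biUnion_subset]; exact hS.hE
  have hUY' : X₀.biUnion E' ⊆ Y := by
    rw [Finset.biUnion_subset]; exact hS.hE'
  have hdisj : Disjoint (X₀.biUnion E) (X₀.biUnion E') := by
    rw [Finset.disjoint_biUnion_left]
    intro x hx
    rw [Finset.disjoint_biUnion_right]
    exact fun y hy => hS.hEE x hx y hy
  obtain ⟨P, hPm, hPY, hPc, hP0, hPtop, hPU, hPY'⟩ :=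
    initial_chain (X₀.biUnion E) (Y \ X₀.biUnion E') Y
      (Finset.subset_sdiff.2 ⟨hUY, hdisj⟩) Finset.sdiff_subset
  have hYc : (Y \ X₀.biUnion E').card = Y.card - (X₀.biUnion E').card :=
    Finset.card_sdiff_of_subset hUY'
  refine red_assembly hm c hblue F D X₀ Y hS.hX hS.hFD hS.hFX hS.hDX hS.hY E E' hS.hE hS.hE' hS.hF
    hS.hD hS.hEr hS.hEr' hS.hEE (fun i => P (cut i)) (hPm.comp hmono) (fun i => hPY _) ?_ ?_ ?_
  · simp only [hcut1, hP0]
  · simp only [hcutm]; exact hPtop _ le_rfl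
  · intro S hSX h2 hm2
    obtain ⟨p, q, hpq, hp, hq⟩ := hgap S.card h2 hm2
    try simp only
    set A := P (cut S.card) \ P (cut (S.card - 1)) with hA
    have hAc : A.card = cut S.card - cut (S.card - 1) := by
      rw [hA, Finset.card_sdiff_of_subset (hPm (hmono (by omega))), hPc _ (hcutle _),
        hPc _ (hcutle _)]
    have h1 : (A ∩ S.biUnion E).card ≤ p := by
      rcases hp with hp | hp
      · exact (Finset.card_le_card Finset.inter_subset_right).trans ((hκ S hSX).trans hp)
      · have h3 : S.biUnion E ⊆ P (cut (S.card - 1)) :=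
          (Finset.biUnion_subset_biUnion_of_subset_left E hSX).trans
            (hPU.symm.subset.trans (hPm (hu.trans hp)))
        have : A ∩ S.biUnion E = ∅ := by
          ext x
          have := @h3 x
          simp only [hA, Finset.mem_inter, Finset.mem_sdiff, Finset.notMem_empty, iff_false]
          tauto
        rw [this]; simp
    have h2 : (A ∩ (X₀ \ S).biUnion E').card ≤ q := by
      rcases hq with hq | hq
      · refine (Finset.card_le_card Finset.inter_subset_right).trans
          ((hκ' (X₀ \ S) Finset.sdiff_subset).trans ?_)
        rw [Finset.card_sdiff_of_subset hSX, hS.hX]; exact hq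
      · have h3 : P (cut S.card) ⊆ Y \ X₀.biUnion E' :=
          (hPm (by rw [hYc]; omega)).trans hPY'.subset
        have h4 : (X₀ \ S).biUnion E' ⊆ X₀.biUnion E' :=
          Finset.biUnion_subset_biUnion_of_subset_left E' Finset.sdiff_subset
        have : A ∩ (X₀ \ S).biUnion E' = ∅ := by
          ext x
          have e3 := @h3 x
          have e4 := @h4 x
          simp only [Finset.mem_sdiff] at e3
          simp only [hA, Finset.mem_inter, Finset.mem_sdiff, Finset.notMem_empty, iff_false]
          tauto
        rw [this]; simp
    have h3 : A.card ≤ (A \ (S.biUnion E ∪ (X₀ \ S).biUnion E')).card +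
        ((A ∩ S.biUnion E).card + (A ∩ (X₀ \ S).biUnion E').card) := by
      refine le_trans (Finset.card_le_card ?_) ((Finset.card_union_le _
        ((A ∩ S.biUnion E) ∪ (A ∩ (X₀ \ S).biUnion E'))).trans
        (Nat.add_le_add_left (Finset.card_union_le _ _) _))
      intro x hx
      rw [Finset.mem_union, Finset.mem_union, Finset.mem_sdiff, Finset.mem_inter,
        Finset.mem_inter, Finset.mem_union]
      by_cases g1 : x ∈ S.biUnion E
      · exact Or.inr (Or.inl ⟨hx, g1⟩)
      by_cases g2 : x ∈ (X₀ \ S).biUnion E'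
      · exact Or.inr (Or.inr ⟨hx, g2⟩)
      · exact Or.inl ⟨hx, fun h => h.elim g1 g2⟩
    omega

theorem cut_four {n N : ℕ} (c : Finset (Fin N) → Bool)
    (hblue : ¬ CopyIn false n N c) (F D X₀ Y : Finset (Fin N)) (E E' : Fin N → Finset (Fin N))
    (hS : Setup 4 N c F D X₀ Y E E') (κ κ' : ℕ → ℕ)
    (hκ : ∀ S, S ⊆ X₀ → (S.biUnion E).card ≤ κ S.card)
    (hκ' : ∀ S, S ⊆ X₀ → (S.biUnion E').card ≤ κ' S.card)
    (hy : n + κ 2 + κ' 2 ≤ Y.card) : CopyIn true 4 N c := by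
  refine cut_lemma le_rfl c hblue F D X₀ Y E E' hS _ _ κ κ' le_rfl le_rfl hκ hκ'
    (fun i => if i ≤ 1 then 0 else Y.card) ?_ ?_ ?_ ?_ ?_
  · intro i j hij
    try simp only
    split_ifs <;> omega
  · simp
  · simp
  · intro i; split_ifs <;> omega
  · intro i h1 h2
    obtain rfl : i = 2 := by omega
    exact ⟨κ 2, κ' 2, by simpa using hy, Or.inl le_rfl, Or.inl le_rfl⟩

theorem cut_two {m n N : ℕ} (hm : 5 ≤ m) (c : Finset (Fin N) → Bool)
    (hblue : ¬ CopyIn false n N c) (F D X₀ Y : Finset (Fin N)) (E E' : Fin N → Finset (Fin N))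
    (hS : Setup m N c F D X₀ Y E E') (u u' : ℕ) (κ κ' : ℕ → ℕ)
    (hu : (X₀.biUnion E).card ≤ u) (hu' : (X₀.biUnion E').card ≤ u')
    (hκ : ∀ S, S ⊆ X₀ → (S.biUnion E).card ≤ κ S.card)
    (hκ' : ∀ S, S ⊆ X₀ → (S.biUnion E').card ≤ κ' S.card)
    (s s' : ℕ) (hs1 : n + κ 2 ≤ s) (hs2 : u ≤ s) (hs1' : n + κ' 2 ≤ s') (hs2' : u' ≤ s')
    (hy : (m - 5) * n + s + s' ≤ Y.card) : CopyIn true m N c := by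
  have hmul : ∀ i j, i ≤ j → i * n ≤ j * n := fun i j h => Nat.mul_le_mul_right _ h
  have hsucc : ∀ i, 1 ≤ i → i * n = (i - 1) * n + n := by
    intro i hi
    obtain ⟨k, rfl⟩ : ∃ k, i = k + 1 := ⟨i - 1, by omega⟩
    simp; ring
  refine cut_lemma (by omega) c hblue F D X₀ Y E E' hS u u' κ κ' hu hu' hκ hκ'
    (fun i => if i ≤ 1 then 0 else if i ≤ m - 3 then s + (i - 2) * n else Y.card) ?_ ?_ ?_ ?_ ?_
  · intro i j hij
    have := hmul (i - 2) (j - 2) (by omega)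
    try simp only
    split_ifs with h1 h2 h3 h4 h5 h6 h7
    all_goals first
      | omega
      | (have := hmul (i - 2) (m - 5) (by omega); omega)
  · simp
  · rw [if_neg (by omega), if_neg (by omega)]
  · intro i; split_ifs
    · omega
    · have := hmul (i - 2) (m - 5) (by omega); omega
    · omega
  · intro i h1 h2
    try simp only
    rcases Nat.lt_or_ge 2 i with h3 | h3
    · have h5 := hsucc (i - 2) (by omega)
      rw [show i - 2 - 1 = i - 1 - 2 by omega] at h5
      rw [if_neg (by omega), if_pos (by omega), if_neg (by omega)]
      rcases Nat.lt_or_ge (m - 3) i with h4 | h4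
      · obtain rfl : i = m - 2 := by omega
        refine ⟨0, κ' 2, ?_, Or.inr ?_, Or.inl ?_⟩
        · rw [if_neg (by omega), show m - 2 - 1 - 2 = m - 5 by omega]; omega
        · omega
        · rw [show m - (m - 2) = 2 by omega]
      · have := hmul (i - 2) (m - 5) (by omega)
        refine ⟨0, 0, ?_, Or.inr ?_, Or.inr ?_⟩
        · rw [if_pos h4]; omega
        · omega
        · rw [if_pos h4]; omega
    · obtain rfl : i = 2 := by omega
      refine ⟨κ 2, 0, ?_, Or.inl le_rfl, Or.inr ?_⟩
      · rw [if_pos (by omega), if_neg (by omega), if_pos (by omega)]; omega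
      · rw [if_neg (by omega), if_pos (by omega)]
        have := hmul 0 (m - 5) (by omega)
        simp only [Nat.sub_self, Nat.zero_mul] at *
        omega

theorem cut_three {m n N : ℕ} (hm : 8 ≤ m) (c : Finset (Fin N) → Bool)
    (hblue : ¬ CopyIn false n N c) (F D X₀ Y : Finset (Fin N)) (E E' : Fin N → Finset (Fin N))
    (hS : Setup m N c F D X₀ Y E E') (u u' : ℕ) (κ κ' : ℕ → ℕ)
    (hu : (X₀.biUnion E).card ≤ u) (hu' : (X₀.biUnion E').card ≤ u')
    (hκ : ∀ S, S ⊆ X₀ → (S.biUnion E).card ≤ κ S.card)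
    (hκ' : ∀ S, S ⊆ X₀ → (S.biUnion E').card ≤ κ' S.card)
    (s s' : ℕ) (hs1 : 2 * n + κ 2 + κ 3 ≤ s) (hs2 : u ≤ s)
    (hs1' : 2 * n + κ' 2 + κ' 3 ≤ s') (hs2' : u' ≤ s')
    (hy : (m - 7) * n + s + s' ≤ Y.card) : CopyIn true m N c := by
  have hmul : ∀ i j, i ≤ j → i * n ≤ j * n := fun i j h => Nat.mul_le_mul_right _ h
  have hsucc : ∀ i, 1 ≤ i → i * n = (i - 1) * n + n := by
    intro i hi
    obtain ⟨k, rfl⟩ : ∃ k, i = k + 1 := ⟨i - 1, by omega⟩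
    simp; ring
  let cut : ℕ → ℕ := fun i => if i ≤ 1 then 0 else if i = 2 then n + κ 2 else
    if i ≤ m - 4 then s + (i - 3) * n else if i = m - 3 then Y.card - (n + κ' 2) else Y.card
  have c1 : ∀ i, i ≤ 1 → cut i = 0 := fun i h => if_pos h
  have c2 : cut 2 = n + κ 2 := by simp [cut]
  have c3 : ∀ i, 3 ≤ i → i ≤ m - 4 → cut i = s + (i - 3) * n := by
    intro i h h'
    simp only [cut]
    rw [if_neg (by omega), if_neg (by omega), if_pos h']
  have c4 : cut (m - 3) = Y.card - (n + κ' 2) := by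
    simp only [cut]
    rw [if_neg (by omega), if_neg (by omega), if_neg (by omega), if_pos trivial]
  have c5 : ∀ i, m - 2 ≤ i → cut i = Y.card := by
    intro i h
    simp only [cut]
    rw [if_neg (by omega), if_neg (by omega), if_neg (by omega), if_neg (by omega)]
  have h33 : cut 3 = s := by rw [c3 3 le_rfl (by omega)]; simp
  have h44 : cut (m - 4) = s + (m - 7) * n := by
    rw [c3 _ (by omega) le_rfl, show m - 4 - 3 = m - 7 by omega]
  have hgap : ∀ i, 2 ≤ i → i ≤ m - 2 → ∃ p q, n + p + q + cut (i - 1) ≤ cut i ∧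
      (κ i ≤ p ∨ u ≤ cut (i - 1)) ∧ (κ' (m - i) ≤ q ∨ cut i + u' ≤ Y.card) := by
    intro i h1 h2
    by_cases i2 : i = 2
    · subst i2
      refine ⟨κ 2, 0, ?_, Or.inl le_rfl, Or.inr ?_⟩
      · rw [c1 _ (by omega), c2]; omega
      · rw [c2]; omega
    by_cases i3 : i = 3
    · subst i3
      refine ⟨κ 3, 0, ?_, Or.inl le_rfl, Or.inr ?_⟩
      · rw [show 3 - 1 = 2 by rfl, c2, h33]; omega
      · rw [h33]; omega
    by_cases i4 : i ≤ m - 4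
    · have h5 := hsucc (i - 3) (by omega)
      rw [show i - 3 - 1 = i - 1 - 3 by omega] at h5
      have := hmul (i - 3) (m - 7) (by omega)
      refine ⟨0, 0, ?_, Or.inr ?_, Or.inr ?_⟩
      · rw [c3 _ (by omega) (by omega), c3 _ (by omega) (by omega)]; omega
      · rw [c3 _ (by omega) (by omega)]; omega
      · rw [c3 _ (by omega) (by omega)]; omega
    by_cases i5 : i = m - 3
    · subst i5
      rw [show m - 3 - 1 = m - 4 by omega, show m - (m - 3) = 3 by omega, c4, h44]
      exact ⟨0, κ' 3, by omega, Or.inr (by omega), Or.inl le_rfl⟩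
    · obtain rfl : i = m - 2 := by omega
      rw [show m - 2 - 1 = m - 3 by omega, show m - (m - 2) = 2 by omega, c4, c5 _ le_rfl]
      exact ⟨0, κ' 2, by omega, Or.inr (by omega), Or.inl le_rfl⟩
  have hmono : Monotone cut := by
    apply monotone_nat_of_le_succ
    intro i
    by_cases h0 : i = 0
    · rw [c1 i (by omega)]; omega
    by_cases h1 : i + 1 ≤ m - 2
    · obtain ⟨p, q, h, -, -⟩ := hgap (i + 1) (by omega) h1
      simp only [Nat.add_sub_cancel] at h
      omega
    · rw [c5 i (by omega), c5 (i + 1) (by omega)]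
  refine cut_lemma (by omega) c hblue F D X₀ Y E E' hS u u' κ κ' hu hu' hκ hκ'
    cut hmono (c1 1 le_rfl) (c5 _ le_rfl) ?_ hgap
  intro i
  rcases le_total i (m - 2) with h | h
  · exact (hmono h).trans (c5 _ le_rfl).le
  · exact (c5 i h).le

def LowRed {N : ℕ} (c : Finset (Fin N) → Bool) (F D : Finset (Fin N)) (ξ : ℕ) (x : Fin N)
    (L : ℕ) : Prop :=
  ∀ X : Finset (Fin N), X.card ≤ ξ → ∃ T : Finset (Fin N), Disjoint T (F ∪ D ∪ {x} ∪ X) ∧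
    T.card ≤ L ∧ c (F ∪ {x} ∪ T) = true

def UpRed {N : ℕ} (c : Finset (Fin N) → Bool) (F D : Finset (Fin N)) (ξ : ℕ) (x : Fin N)
    (L : ℕ) : Prop :=
  ∀ X : Finset (Fin N), X.card ≤ ξ → ∃ T : Finset (Fin N), Disjoint T (F ∪ D ∪ {x} ∪ X) ∧
    T.card ≤ L ∧ c (D ∪ {x} ∪ T)ᶜ = true

theorem sel_low {N : ℕ} (c : Finset (Fin N) → Bool) (F D X₀ Z : Finset (Fin N)) (ξ L : ℕ)
    (h : ∀ x ∈ X₀, LowRed c F D ξ x L) (hZ : Z.card ≤ ξ) :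
    ∃ E : Fin N → Finset (Fin N), ∀ x ∈ X₀, Disjoint (E x) (F ∪ D ∪ Z) ∧ (E x).card ≤ L ∧
      c (F ∪ {x} ∪ E x) = true := by
  have h' : ∀ x, x ∈ X₀ → ∃ T : Finset (Fin N), Disjoint T (F ∪ D ∪ {x} ∪ Z) ∧
    T.card ≤ L ∧ c (F ∪ {x} ∪ T) = true := fun x hx => h x hx Z hZ
  choose! E hE using h'
  refine ⟨E, fun x hx => ⟨(hE x hx).1.mono_right ?_, (hE x hx).2⟩⟩
  intro y hy
  simp only [Finset.mem_union] at hy ⊢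
  tauto

theorem sel_up {N : ℕ} (c : Finset (Fin N) → Bool) (F D X₀ Z : Finset (Fin N)) (ξ L : ℕ)
    (h : ∀ x ∈ X₀, UpRed c F D ξ x L) (hZ : Z.card ≤ ξ) :
    ∃ E : Fin N → Finset (Fin N), ∀ x ∈ X₀, Disjoint (E x) (F ∪ D ∪ Z) ∧ (E x).card ≤ L ∧
      c (D ∪ {x} ∪ E x)ᶜ = true := by
  have h' : ∀ x, x ∈ X₀ → ∃ T : Finset (Fin N), Disjoint T (F ∪ D ∪ {x} ∪ Z) ∧
    T.card ≤ L ∧ c (D ∪ {x} ∪ T)ᶜ = true := fun x hx => h x hx Z hZ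
  choose! E hE using h'
  refine ⟨E, fun x hx => ⟨(hE x hx).1.mono_right ?_, (hE x hx).2⟩⟩
  intro y hy
  simp only [Finset.mem_union] at hy ⊢
  tauto

theorem block_low {n N : ℕ} (c : Finset (Fin N) → Bool) (hblue : ¬ CopyIn false n N c)
    (A W : Finset (Fin N)) (hAW : Disjoint A W) (hW : W.card = n) :
    ∃ T, T ⊆ W ∧ c (A ∪ T) = true := by
  obtain ⟨C, h1, h2, h3⟩ := block c false hblue A (A ∪ W) Finset.subset_union_left (by
    rw [Finset.union_sdiff_cancel_left hAW, hW])
  refine ⟨C \ A, ?_, ?_⟩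
  · intro x hx
    rw [Finset.mem_sdiff] at hx
    exact (Finset.mem_union.1 (h2 hx.1)).resolve_left hx.2
  · rw [Finset.union_sdiff_of_subset h1]; simpa using h3

theorem block_up {n N : ℕ} (c : Finset (Fin N) → Bool) (hblue : ¬ CopyIn false n N c)
    (A W : Finset (Fin N)) (hAW : Disjoint A W) (hW : W.card = n) :
    ∃ T, T ⊆ W ∧ c (A ∪ T)ᶜ = true := by
  obtain ⟨C, h1, h2, h3⟩ := block c false hblue (A ∪ W)ᶜ Aᶜ
    (Finset.compl_subset_compl.2 Finset.subset_union_left) (by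
    rw [← hW]
    apply Finset.card_le_card
    intro x hx
    have := Finset.disjoint_right.1 hAW hx
    simp [hx, this])
  refine ⟨Cᶜ \ A, ?_, ?_⟩
  · intro x hx
    rw [Finset.mem_sdiff, Finset.mem_compl] at hx
    by_contra hxW
    apply hx.1
    apply h1
    simp [hx.2, hxW]
  · rw [Finset.union_sdiff_of_subset (Finset.subset_compl_comm.1 h2), compl_compl]
    simpa using h3

theorem card_biUnion_bound {N L : ℕ} (X₀ : Finset (Fin N)) (E : Fin N → Finset (Fin N))
    (h : ∀ x ∈ X₀, (E x).card ≤ L) (S : Finset (Fin N)) (hS : S ⊆ X₀) :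
    (S.biUnion E).card ≤ S.card * L :=
  Finset.card_biUnion_le_card_mul _ _ _ fun x hx => h x (hS hx)

set_option maxHeartbeats 2000000 in
theorem finish {m n N a b y L L' : ℕ} (hm : 4 ≤ m) (hmn : m ≤ n) (c : Finset (Fin N) → Bool)
    (hblue : ¬ CopyIn false n N c) (F D X₀ : Finset (Fin N)) (hX : X₀.card = m)
    (hFD : Disjoint F D) (hFX : Disjoint F X₀) (hDX : Disjoint D X₀)
    (hFa : F.card = a) (hDb : D.card = b) (hy : y + a + b + m = N)
    (hF : c F = true) (hD : c Dᶜ = true)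
    (hlow : ∀ x ∈ X₀, LowRed c F D m x L) (hup : ∀ x ∈ X₀, UpRed c F D (y - n - 2) x L')
    (e : ℝ) (he : e * (2 * m - 3) = n) (he0 : 0 ≤ e)
    (hy1 : ((m : ℝ) - 2) * n + 3 * e + 3 ≤ y)
    (hL : (m : ℝ) * (L + L') ≤ 3 * n - 3 * e - 2) : CopyIn true m N c := by
  have hmR : (4 : ℝ) ≤ m := by exact_mod_cast hm
  have hmnR : (m : ℝ) ≤ n := by exact_mod_cast hmn
  have hL0 : (0 : ℝ) ≤ L := Nat.cast_nonneg L
  have hL0' : (0 : ℝ) ≤ L' := Nat.cast_nonneg L'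
  have hme : (m : ℝ) * e = (n + 3 * e) / 2 := by linarith
  have hmn4 : 0 ≤ ((m : ℝ) - 4) * n := by
    apply mul_nonneg <;> linarith
  obtain ⟨Y, hY⟩ : ∃ Y, Y = (F ∪ D ∪ X₀)ᶜ := ⟨_, rfl⟩
  have hYc : Y.card = y := by
    have h1 : Disjoint (F ∪ D) X₀ := Finset.disjoint_union_left.2 ⟨hFX, hDX⟩
    have h3 := Finset.card_compl_add_card (F ∪ D ∪ X₀)
    rw [Finset.card_union_of_disjoint h1, Finset.card_union_of_disjoint hFD, Fintype.card_fin,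
      ← hY] at h3
    omega
  have hYsub : ∀ T : Finset (Fin N), Disjoint T (F ∪ D ∪ X₀) → T ⊆ Y := by
    intro T hT x hx
    rw [hY, Finset.mem_compl]
    exact Finset.disjoint_left.1 hT hx
  have hYFx : ∀ x ∈ X₀, Disjoint (F ∪ {x}) Y := by
    intro x hx
    rw [Finset.disjoint_left]
    intro z hz hz'
    rw [hY] at hz'
    simp only [Finset.mem_compl, Finset.mem_union, Finset.mem_singleton] at hz hz'
    rcases hz with h | rfl <;> tauto
  have hYDx : ∀ x ∈ X₀, Disjoint (D ∪ {x}) Y := by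
    intro x hx
    rw [Finset.disjoint_left]
    intro z hz hz'
    rw [hY] at hz'
    simp only [Finset.mem_compl, Finset.mem_union, Finset.mem_singleton] at hz hz'
    rcases hz with h | rfl <;> tauto
  by_cases hA : 2 * (L : ℝ) ≤ 3 * e
  · -- cheap lower layer
    have hmL : (m : ℝ) * L ≤ 3 / 2 * ((m : ℝ) * e) := by nlinarith
    obtain ⟨E, hE⟩ := sel_low c F D X₀ X₀ m L hlow hX.le
    have hEY : ∀ x ∈ X₀, E x ⊆ Y := fun x hx => hYsub _ (hE x hx).1
    have hEc := card_biUnion_bound X₀ E (fun x hx => (hE x hx).2.1)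
    have hU : (X₀.biUnion E).card ≤ m * L := hX ▸ hEc X₀ subset_rfl
    have hUY : X₀.biUnion E ⊆ Y := Finset.biUnion_subset.2 hEY
    have hroom : m * L + n ≤ y := by
      have : ((m * L + n : ℕ) : ℝ) ≤ y := by push_cast; nlinarith
      exact_mod_cast this
    obtain ⟨W, hW, hWc⟩ := Finset.exists_subset_card_eq
      (show n ≤ (Y \ X₀.biUnion E).card by rw [Finset.card_sdiff_of_subset hUY]; omega)
    have hWY : W ⊆ Y := hW.trans Finset.sdiff_subset
    have h' : ∀ x, x ∈ X₀ → ∃ T, T ⊆ W ∧ c (D ∪ {x} ∪ T)ᶜ = true := fun x hx =>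
      block_up c hblue (D ∪ {x}) W ((hYDx x hx).mono_right hWY) hWc
    choose! E' hE' using h'
    have hE'c : ∀ S, S ⊆ X₀ → (S.biUnion E').card ≤ n := by
      intro S hS
      rw [← hWc]
      exact Finset.card_le_card (Finset.biUnion_subset.2 fun x hx => (hE' x (hS hx)).1)
    have hS : Setup m N c F D X₀ Y E E' := by
      refine ⟨hX, hFD, hFX, hDX, hY, hEY, fun x hx => (hE' x hx).1.trans hWY, hF, hD,
        fun x hx => (hE x hx).2.2, fun x hx => (hE' x hx).2, ?_⟩
      intro x hx z hz
      rw [Finset.disjoint_right]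
      intro t ht htE
      exact (Finset.mem_sdiff.1 (hW ((hE' z hz).1 ht))).2 (Finset.mem_biUnion.2 ⟨x, hx, htE⟩)
    by_cases hm4 : m = 4
    · subst hm4
      refine cut_four c hblue F D X₀ Y E E' hS (fun i => i * L) (fun _ => n) hEc hE'c ?_
      rw [hYc]
      have : ((n + 2 * L + n : ℕ) : ℝ) ≤ y := by push_cast; push_cast at hy1; linarith
      exact_mod_cast this
    · have hm5 : 5 ≤ m := by omega
      refine cut_two hm5 c hblue F D X₀ Y E E' hS (m * L) n (fun i => i * L) (fun _ => n) hU
        (hE'c _ subset_rfl) hEc hE'c (n + 2 * L) (2 * n) le_rfl ?_ (by omega) (by omega) ?_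
      · have : ((m * L : ℕ) : ℝ) ≤ ((n + 2 * L : ℕ) : ℝ) := by
          push_cast; nlinarith
        exact_mod_cast this
      · rw [hYc]
        have : (((m - 5) * n + (n + 2 * L) + 2 * n : ℕ) : ℝ) ≤ y := by
          push_cast [Nat.cast_sub hm5]; linarith
        exact_mod_cast this
  have hξ : m ≤ y - n - 2 := by
    have : ((m + n + 2 : ℕ) : ℝ) ≤ y := by push_cast; linarith
    have : m + n + 2 ≤ y := by exact_mod_cast this
    omega
  by_cases hB : 2 * (L' : ℝ) ≤ 3 * e
  · -- cheap upper layer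
    have hmL : (m : ℝ) * L' ≤ 3 / 2 * ((m : ℝ) * e) := by nlinarith
    obtain ⟨E', hE'⟩ := sel_up c F D X₀ X₀ _ L' hup (hX.le.trans hξ)
    have hEY : ∀ x ∈ X₀, E' x ⊆ Y := fun x hx => hYsub _ (hE' x hx).1
    have hEc := card_biUnion_bound X₀ E' (fun x hx => (hE' x hx).2.1)
    have hU : (X₀.biUnion E').card ≤ m * L' := hX ▸ hEc X₀ subset_rfl
    have hUY : X₀.biUnion E' ⊆ Y := Finset.biUnion_subset.2 hEY
    have hroom : m * L' + n ≤ y := by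
      have : ((m * L' + n : ℕ) : ℝ) ≤ y := by push_cast; nlinarith
      exact_mod_cast this
    obtain ⟨W, hW, hWc⟩ := Finset.exists_subset_card_eq
      (show n ≤ (Y \ X₀.biUnion E').card by rw [Finset.card_sdiff_of_subset hUY]; omega)
    have hWY : W ⊆ Y := hW.trans Finset.sdiff_subset
    have h' : ∀ x, x ∈ X₀ → ∃ T, T ⊆ W ∧ c (F ∪ {x} ∪ T) = true := fun x hx =>
      block_low c hblue (F ∪ {x}) W ((hYFx x hx).mono_right hWY) hWc
    choose! E hE using h'
    have hE'c : ∀ S, S ⊆ X₀ → (S.biUnion E).card ≤ n := by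
      intro S hS
      rw [← hWc]
      exact Finset.card_le_card (Finset.biUnion_subset.2 fun x hx => (hE x (hS hx)).1)
    have hS : Setup m N c F D X₀ Y E E' := by
      refine ⟨hX, hFD, hFX, hDX, hY, fun x hx => (hE x hx).1.trans hWY, hEY, hF, hD,
        fun x hx => (hE x hx).2, fun x hx => (hE' x hx).2.2, ?_⟩
      intro x hx z hz
      rw [Finset.disjoint_left]
      intro t ht htE
      exact (Finset.mem_sdiff.1 (hW ((hE x hx).1 ht))).2 (Finset.mem_biUnion.2 ⟨z, hz, htE⟩)
    by_cases hm4 : m = 4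
    · subst hm4
      refine cut_four c hblue F D X₀ Y E E' hS (fun _ => n) (fun i => i * L') hE'c hEc ?_
      rw [hYc]
      have : ((n + n + 2 * L' : ℕ) : ℝ) ≤ y := by push_cast; push_cast at hy1; linarith
      exact_mod_cast this
    · have hm5 : 5 ≤ m := by omega
      refine cut_two hm5 c hblue F D X₀ Y E E' hS n (m * L') (fun _ => n) (fun i => i * L')
        (hE'c _ subset_rfl) hU hE'c hEc (2 * n) (n + 2 * L') (by omega) (by omega) le_rfl ?_ ?_
      · have : ((m * L' : ℕ) : ℝ) ≤ ((n + 2 * L' : ℕ) : ℝ) := by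
          push_cast; nlinarith
        exact_mod_cast this
      · rw [hYc]
        have : (((m - 5) * n + 2 * n + (n + 2 * L') : ℕ) : ℝ) ≤ y := by
          push_cast [Nat.cast_sub hm5]; linarith
        exact_mod_cast this
  -- both layers moderately expensive
  push Not at hA hB
  have hmA : 3 * ((m : ℝ) * e) ≤ 2 * (m * L) := by nlinarith
  have hmB : 3 * ((m : ℝ) * e) ≤ 2 * (m * L') := by nlinarith
  have hmul : (m : ℝ) * (L + L') = m * L + m * L' := by ring
  have hm5 : 5 ≤ m := by
    by_contra h
    obtain rfl : m = 4 := by omega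
    push_cast at *
    linarith
  have hm5R : (5 : ℝ) ≤ m := by exact_mod_cast hm5
  have hmn5 : 0 ≤ ((m : ℝ) - 5) * n := by
    apply mul_nonneg <;> linarith
  obtain ⟨E, hE⟩ := sel_low c F D X₀ X₀ m L hlow hX.le
  have hEY : ∀ x ∈ X₀, E x ⊆ Y := fun x hx => hYsub _ (hE x hx).1
  have hEc := card_biUnion_bound X₀ E (fun x hx => (hE x hx).2.1)
  have hU : (X₀.biUnion E).card ≤ m * L := hX ▸ hEc X₀ subset_rfl
  have hξ2 : (X₀ ∪ X₀.biUnion E).card ≤ y - n - 2 := by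
    have h1 := Finset.card_union_le X₀ (X₀.biUnion E)
    have : ((m + m * L + n + 2 : ℕ) : ℝ) ≤ y := by
      push_cast
      by_cases h7 : m ≤ 6
      · have h7R : (m : ℝ) ≤ 6 := by exact_mod_cast h7
        have := mul_le_mul_of_nonneg_right h7R he0
        linarith
      · have h7R : (7 : ℝ) ≤ m := by exact_mod_cast (show 7 ≤ m by omega)
        have : 0 ≤ ((m : ℝ) - 7) * n := by
          apply mul_nonneg <;> linarith
        linarith
    have : m + m * L + n + 2 ≤ y := by exact_mod_cast this
    omega
  obtain ⟨E', hE'⟩ := sel_up c F D X₀ (X₀ ∪ X₀.biUnion E) _ L' hup hξ2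
  have hEY' : ∀ x ∈ X₀, E' x ⊆ Y := fun x hx => hYsub _ ((hE' x hx).1.mono_right (by
    intro z hz
    simp only [Finset.mem_union] at hz ⊢
    tauto))
  have hEc' := card_biUnion_bound X₀ E' (fun x hx => (hE' x hx).2.1)
  have hU' : (X₀.biUnion E').card ≤ m * L' := hX ▸ hEc' X₀ subset_rfl
  have hS : Setup m N c F D X₀ Y E E' := by
    refine ⟨hX, hFD, hFX, hDX, hY, hEY, hEY', hF, hD,
      fun x hx => (hE x hx).2.2, fun x hx => (hE' x hx).2.2, ?_⟩
    intro x hx z hz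
    refine ((hE' z hz).1.mono_right ?_).symm
    intro t ht
    have : t ∈ X₀.biUnion E := Finset.mem_biUnion.2 ⟨x, hx, ht⟩
    simp only [Finset.mem_union]
    exact Or.inr (Or.inr this)
  by_cases hm12 : m ≤ 12
  · have hm12R : (m : ℝ) ≤ 12 := by exact_mod_cast hm12
    have h21 : (n : ℝ) ≤ 21 * e := by
      have := mul_le_mul_of_nonneg_right hm12R he0
      linarith
    refine cut_two hm5 c hblue F D X₀ Y E E' hS (m * L) (m * L') (fun i => i * L) (fun i => i * L')
      hU hU' hEc hEc' (max (n + 2 * L) (m * L)) (max (n + 2 * L') (m * L'))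
      (le_max_left _ _) (le_max_right _ _) (le_max_left _ _) (le_max_right _ _) ?_
    rw [hYc]
    have : (((m - 5) * n + max (n + 2 * L) (m * L) + max (n + 2 * L') (m * L') : ℕ) : ℝ) ≤ y := by
      push_cast [Nat.cast_sub hm5]
      rcases max_choice ((n : ℝ) + 2 * L) (m * L) with g | g <;>
      rcases max_choice ((n : ℝ) + 2 * L') (m * L') with g' | g' <;> rw [g, g']
      · have : 5 * ((L : ℝ) + L') ≤ m * (L + L') := by
          apply mul_le_mul_of_nonneg_right <;> linarith
        linarith
      · have : ((m : ℝ) - 2) * (3 * e) ≤ (m - 2) * (2 * L) := by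
          apply mul_le_mul_of_nonneg_left <;> linarith
        linarith
      · have : ((m : ℝ) - 2) * (3 * e) ≤ (m - 2) * (2 * L') := by
          apply mul_le_mul_of_nonneg_left <;> linarith
        linarith
      · linarith
    exact_mod_cast this
  · have hm13 : 13 ≤ m := by omega
    have hm13R : (13 : ℝ) ≤ m := by exact_mod_cast hm13
    refine cut_three (by omega) c hblue F D X₀ Y E E' hS (m * L) (m * L') (fun i => i * L)
      (fun i => i * L') hU hU' hEc hEc' (max (2 * n + 2 * L + 3 * L) (m * L))
      (max (2 * n + 2 * L' + 3 * L') (m * L'))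
      (le_max_left _ _) (le_max_right _ _) (le_max_left _ _) (le_max_right _ _) ?_
    rw [hYc]
    have h5L : 5 * (L : ℝ) ≤ m * L := by
      apply mul_le_mul_of_nonneg_right <;> linarith
    have h5L' : 5 * (L' : ℝ) ≤ m * L' := by
      apply mul_le_mul_of_nonneg_right <;> linarith
    have : (((m - 7) * n + max (2 * n + 2 * L + 3 * L) (m * L) +
        max (2 * n + 2 * L' + 3 * L') (m * L') : ℕ) : ℝ) ≤ y := by
      push_cast [Nat.cast_sub (show 7 ≤ m by omega)]
      rcases max_choice (2 * (n : ℝ) + 2 * L + 3 * L) (m * L) with g | g <;>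
      rcases max_choice (2 * (n : ℝ) + 2 * L' + 3 * L') (m * L') with g' | g' <;> rw [g, g']
      · rcases le_total m 15 with h | h
        · have hR : (m : ℝ) ≤ 15 := by exact_mod_cast h
          have h27 : (n : ℝ) ≤ 27 * e := by
            have := mul_le_mul_of_nonneg_right hR he0
            linarith
          have : 13 * ((L : ℝ) + L') ≤ m * (L + L') := by
            apply mul_le_mul_of_nonneg_right <;> linarith
          linarith
        · have hR : (15 : ℝ) ≤ m := by exact_mod_cast h
          have : 15 * ((L : ℝ) + L') ≤ m * (L + L') := by
            apply mul_le_mul_of_nonneg_right <;> linarith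
          linarith
      · linarith
      · linarith
      · linarith
    exact_mod_cast this

theorem threshold {α : Type*} [DecidableEq α] (K : Finset α) (hK : 2 ≤ K.card)
    (Q : α → ℕ → Prop) (n : ℕ) (hn : ∀ x ∈ K, Q x n) :
    ∃ L : ℕ, (∃ x ∈ K, ∃ y ∈ K, x ≠ y ∧ (∀ l, l + 1 = L → ¬ Q x l) ∧
      (∀ l, l + 1 = L → ¬ Q y l)) ∧ ∃ z, ∀ x ∈ K, x ≠ z → Q x L := by
  classical
  have hex : ∃ L, ∀ x ∈ K, ∀ y ∈ K, x ≠ y → Q x L ∨ Q y L := ⟨n, fun x hx _ _ _ => Or.inl (hn x hx)⟩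
  obtain ⟨x₀, hx₀, y₀, hy₀, hne₀⟩ := Finset.one_lt_card.1 (show 1 < K.card by omega)
  refine ⟨Nat.find hex, ?_, ?_⟩
  · rcases Nat.eq_zero_or_pos (Nat.find hex) with h | h
    · exact ⟨x₀, hx₀, y₀, hy₀, hne₀, fun l hl => by omega, fun l hl => by omega⟩
    · have := Nat.find_min hex (show Nat.find hex - 1 < Nat.find hex by omega)
      push Not at this
      obtain ⟨x, hx, y, hy, hne, h1, h2⟩ := this
      refine ⟨x, hx, y, hy, hne, fun l hl => ?_, fun l hl => ?_⟩
      · rw [show l = Nat.find hex - 1 by omega]; exact h1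
      · rw [show l = Nat.find hex - 1 by omega]; exact h2
  · have hs := Nat.find_spec hex
    by_cases hb : ∃ z ∈ K, ¬ Q z (Nat.find hex)
    · obtain ⟨z, hz, hzQ⟩ := hb
      exact ⟨z, fun x hx hxz => (hs x hx z hz hxz).resolve_right hzQ⟩
    · push Not at hb
      exact ⟨x₀, fun x hx _ => hb x hx⟩

theorem low_bad {N : ℕ} (c : Finset (Fin N) → Bool) (F D : Finset (Fin N)) (ξ : ℕ) (x : Fin N)
    (L : ℕ) (h : ∀ l, l + 1 = L → ¬ LowRed c F D ξ x l) :
    ∃ X : Finset (Fin N), X.card ≤ ξ ∧ ∀ T, Disjoint T (F ∪ D ∪ {x} ∪ X) → T.card < L →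
      c (F ∪ {x} ∪ T) = false := by
  rcases Nat.eq_zero_or_pos L with h0 | h0
  · exact ⟨∅, by simp, fun T _ hT => by omega⟩
  · have := h (L - 1) (by omega)
    unfold LowRed at this
    push Not at this
    obtain ⟨X, hX, hT⟩ := this
    refine ⟨X, hX, fun T hd hc => ?_⟩
    simpa using hT T hd (by omega)

theorem up_bad {N : ℕ} (c : Finset (Fin N) → Bool) (F D : Finset (Fin N)) (ξ : ℕ) (x : Fin N)
    (L : ℕ) (h : ∀ l, l + 1 = L → ¬ UpRed c F D ξ x l) :
    ∃ X : Finset (Fin N), X.card ≤ ξ ∧ ∀ T, Disjoint T (F ∪ D ∪ {x} ∪ X) → T.card < L →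
      c (D ∪ {x} ∪ T)ᶜ = false := by
  rcases Nat.eq_zero_or_pos L with h0 | h0
  · exact ⟨∅, by simp, fun T _ hT => by omega⟩
  · have := h (L - 1) (by omega)
    unfold UpRed at this
    push Not at this
    obtain ⟨X, hX, hT⟩ := this
    refine ⟨X, hX, fun T hd hc => ?_⟩
    simpa using hT T hd (by omega)

theorem room {N n k : ℕ} (A : Finset (Fin N)) (hA : A.card ≤ k) (h : k + n ≤ N) :
    ∃ W, W ⊆ Aᶜ ∧ W.card = n := by
  apply Finset.exists_subset_card_eq
  rw [Finset.card_compl, Fintype.card_fin]; omega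

theorem card_four {N : ℕ} (F D X : Finset (Fin N)) (x : Fin N) :
    (F ∪ D ∪ {x} ∪ X).card ≤ F.card + D.card + 1 + X.card := by
  have h1 := Finset.card_union_le (F ∪ D ∪ {x}) X
  have h2 := Finset.card_union_le (F ∪ D) {x}
  have h3 := Finset.card_union_le F D
  rw [Finset.card_singleton] at h2
  omega

theorem low_top {n N : ℕ} (c : Finset (Fin N) → Bool) (hblue : ¬ CopyIn false n N c)
    (F D : Finset (Fin N)) (ξ : ℕ) (x : Fin N) (h : F.card + D.card + 1 + ξ + n ≤ N) :
    LowRed c F D ξ x n := by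
  intro X hX
  obtain ⟨W, hW, hWc⟩ := room (n := n) (F ∪ D ∪ {x} ∪ X) (k := F.card + D.card + 1 + ξ)
    ((card_four F D X x).trans (by omega)) h
  have hd : Disjoint (F ∪ D ∪ {x} ∪ X) W :=
    Finset.disjoint_right.2 fun t ht => Finset.mem_compl.1 (hW ht)
  obtain ⟨T, hT, hTc⟩ := block_low c hblue (F ∪ {x}) W (hd.mono_left (by
    intro t ht; simp only [Finset.mem_union] at ht ⊢; tauto)) hWc
  exact ⟨T, (hd.mono_right hT).symm, hWc ▸ Finset.card_le_card hT, hTc⟩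

theorem up_top {n N : ℕ} (c : Finset (Fin N) → Bool) (hblue : ¬ CopyIn false n N c)
    (F D : Finset (Fin N)) (ξ : ℕ) (x : Fin N) (h : F.card + D.card + 1 + ξ + n ≤ N) :
    UpRed c F D ξ x n := by
  intro X hX
  obtain ⟨W, hW, hWc⟩ := room (n := n) (F ∪ D ∪ {x} ∪ X) (k := F.card + D.card + 1 + ξ)
    ((card_four F D X x).trans (by omega)) h
  have hd : Disjoint (F ∪ D ∪ {x} ∪ X) W :=
    Finset.disjoint_right.2 fun t ht => Finset.mem_compl.1 (hW ht)
  obtain ⟨T, hT, hTc⟩ := block_up c hblue (D ∪ {x}) W (hd.mono_left (by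
    intro t ht; simp only [Finset.mem_union] at ht ⊢; tauto)) hWc
  exact ⟨T, (hd.mono_right hT).symm, hWc ▸ Finset.card_le_card hT, hTc⟩

theorem nat_bound {N m n k a b : ℕ} (hk : k ≤ N) (h : N < k + m * (n + 1 - a - b)) :
    N + m * (a + b) + 1 ≤ k + m * n + m := by
  rcases Nat.lt_or_ge (a + b) (n + 1) with h1 | h1
  · obtain ⟨t, ht⟩ : ∃ t, n + 1 = a + b + t := ⟨n + 1 - a - b, by omega⟩
    rw [show n + 1 - a - b = t by omega] at h
    have : m * (n + 1) = m * (a + b) + m * t := by rw [ht]; ring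
    have : m * (n + 1) = m * n + m := by ring
    omega
  · rw [show n + 1 - a - b = 0 by omega] at h
    omega

theorem sub_aux1 {α : Type*} [DecidableEq α] (F D P X : Finset α) :
    F ∪ D ∪ P ∪ X ⊆ F ∪ P ∪ (D ∪ X) := by
  intro t ht; simp only [Finset.mem_union] at ht ⊢; tauto

theorem sub_aux1' {α : Type*} [DecidableEq α] (F D P X : Finset α) :
    F ∪ D ∪ P ∪ X ⊆ D ∪ P ∪ (F ∪ X) := by
  intro t ht; simp only [Finset.mem_union] at ht ⊢; tauto

theorem sub_aux2 {α : Type*} [DecidableEq α] (F P D Q X X' : Finset α) :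
    F ∪ P ∪ (D ∪ X) ∪ (D ∪ Q) ∪ (F ∪ X') ⊆ ((F ∪ P) ∪ (D ∪ Q)) ∪ (X ∪ X') := by
  intro t ht; simp only [Finset.mem_union] at ht ⊢; tauto

set_option maxHeartbeats 1000000 in
theorem ramsey_aux (m n N : ℕ) (hm : 4 ≤ m) (hmn : m ≤ n)
    (hN : (N : ℝ) ≥ ((m : ℝ) - 2 + (9 * (m : ℝ) - 9) / ((2 * (m : ℝ) - 3) * ((m : ℝ) + 1))) * (n : ℝ)
      + (m : ℝ) + 3)
    (c : Finset (Fin N) → Bool) (hred : ¬ CopyIn true m N c) (hblue : ¬ CopyIn false n N c) :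
    False := by
  have hmR : (4 : ℝ) ≤ m := by exact_mod_cast hm
  have hmnR : (m : ℝ) ≤ n := by exact_mod_cast hmn
  obtain ⟨g, hg⟩ : ∃ g : ℝ, g = n / ((2 * m - 3) * (m + 1)) := ⟨_, rfl⟩
  have hd1 : (0 : ℝ) < 2 * m - 3 := by linarith
  have hd2 : (0 : ℝ) < (m : ℝ) + 1 := by linarith
  have hg0 : 0 ≤ g := by rw [hg]; positivity
  have hgn : g * ((2 * m - 3) * (m + 1)) = n := by
    rw [hg]; field_simp
  have hN1 : ((m : ℝ) - 2) * n + 9 * (m - 1) * g + m + 3 ≤ N := by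
    have : ((m : ℝ) - 2 + (9 * (m : ℝ) - 9) / ((2 * (m : ℝ) - 3) * ((m : ℝ) + 1))) * (n : ℝ)
        = ((m : ℝ) - 2) * n + 9 * (m - 1) * g := by
      rw [hg]; field_simp
    linarith
  have hmn4 : 0 ≤ ((m : ℝ) - 4) * n := by
    apply mul_nonneg <;> linarith
  have hmg : 0 ≤ ((m : ℝ) - 1) * g := by
    apply mul_nonneg <;> linarith
  have h2nN : 2 * n ≤ N := by
    have : ((2 * n : ℕ) : ℝ) ≤ N := by push_cast; linarith
    exact_mod_cast this
  -- smallest red set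
  obtain ⟨W₀, -, hW₀⟩ := room (n := n) (∅ : Finset (Fin N)) (k := 0) (by simp) (by omega)
  obtain ⟨T₀, hT₀, hT₀c⟩ := block_low c hblue ∅ W₀ (by simp) hW₀
  obtain ⟨F, hFmem, hFmin⟩ := Finset.exists_min_image
    (Finset.univ.filter fun S : Finset (Fin N) => c S = true) Finset.card
    ⟨T₀, by simpa using hT₀c⟩
  have hF : c F = true := (Finset.mem_filter.1 hFmem).2
  have hFn : F.card ≤ n := (hFmin T₀ (by simpa using hT₀c)).trans
    (hW₀ ▸ Finset.card_le_card hT₀)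
  have hFmin' : ∀ T : Finset (Fin N), T.card < F.card → c T = false := by
    intro T hT
    by_contra hcT
    have := hFmin T (by simpa using hcT)
    omega
  -- largest red set above it
  obtain ⟨W₁, hW₁F, hW₁⟩ := room (n := n) F hFn (by omega)
  obtain ⟨T₁, hT₁, hT₁c⟩ := block_up c hblue ∅ W₁ (by simp) hW₁
  rw [Finset.empty_union] at hT₁c
  have hT₁F : Disjoint T₁ F :=
    Finset.disjoint_left.2 fun t ht => Finset.mem_compl.1 (hW₁F (hT₁ ht))
  obtain ⟨D, hDmem, hDmin⟩ := Finset.exists_min_image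
    (Finset.univ.filter fun S : Finset (Fin N) => Disjoint S F ∧ c Sᶜ = true) Finset.card
    ⟨T₁, by simpa using ⟨hT₁F, hT₁c⟩⟩
  obtain ⟨hDF, hD⟩ := (Finset.mem_filter.1 hDmem).2
  have hDmin' : ∀ T : Finset (Fin N), Disjoint T F → T.card < D.card → c Tᶜ = false := by
    intro T hTF hT
    by_contra hcT
    have := hDmin T (by simpa using And.intro hTF (by simpa using hcT : c Tᶜ = true))
    omega
  obtain ⟨a, ha⟩ : ∃ a, F.card = a := ⟨_, rfl⟩
  obtain ⟨b, hb⟩ : ∃ b, D.card = b := ⟨_, rfl⟩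
  have hab : N + m * (a + b) + 1 ≤ n + m * n + m := by
    apply nat_bound (by omega)
    by_contra hcon
    apply hblue
    refine blue_lemma c hred ∅ F ∅ F a b (by simp) ?_ ?_ ?_ ?_
    · intro T _ hT
      rw [Finset.empty_union]; exact hFmin' T (by omega)
    · intro T hTF hT
      rw [Finset.empty_union] at hTF ⊢; exact hDmin' T hTF (by omega)
    · simp only [Finset.empty_union, Finset.union_empty, Finset.union_self]; omega
    · simp only [Finset.card_empty]; omega
  have habR : (N : ℝ) + m * (a + b) + 1 ≤ n + m * n + m := by exact_mod_cast hab
  have hab2 : (a : ℝ) + b ≤ 6 * (m - 2) * g := by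
    have : (m : ℝ) * (a + b) ≤ m * (6 * (m - 2) * g) := by nlinarith
    exact le_of_mul_le_mul_left this (by linarith)
  have hyR : ((m : ℝ) - 2) * n + 3 * (g * (m + 1)) + 3 ≤ N - a - b - m := by nlinarith
  have hg1 : 0 ≤ g * (m + 1) := by positivity
  have hbig : a + b + m + (n + 2 + m) ≤ N := by
    have : ((a + b + m + (n + 2 + m) : ℕ) : ℝ) ≤ N := by push_cast; linarith
    exact_mod_cast this
  obtain ⟨y, hy⟩ : ∃ y, y + a + b + m = N := ⟨N - a - b - m, by omega⟩
  have hyR' : (N : ℝ) = y + a + b + m := by rw [← hy]; push_cast; ring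
  obtain ⟨K, hK⟩ : ∃ K, K = (F ∪ D)ᶜ := ⟨_, rfl⟩
  have hKc : K.card = y + m := by
    have h3 := Finset.card_compl_add_card (F ∪ D)
    rw [Finset.card_union_of_disjoint hDF.symm, Fintype.card_fin, ← hK] at h3
    omega
  have hKm : ∀ x ∈ K, x ∉ F ∧ x ∉ D := by
    intro x hx
    rw [hK] at hx
    simpa using hx
  obtain ⟨L, ⟨x, hx, x', hx', hxx, hbx, hbx'⟩, z, hz⟩ := threshold K (by omega)
    (LowRed c F D m) n (fun x _ => low_top c hblue F D m x (by omega))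
  obtain ⟨L', ⟨w, hw, w', hw', hww, hbw, hbw'⟩, z', hz'⟩ := threshold K (by omega)
    (UpRed c F D (y - n - 2)) n (fun x _ => up_top c hblue F D _ x (by omega))
  obtain ⟨p, hp, q, hq, hpq, hbp, hbq⟩ : ∃ p ∈ K, ∃ q ∈ K, p ≠ q ∧
      (∀ l, l + 1 = L → ¬ LowRed c F D m p l) ∧
      (∀ l, l + 1 = L' → ¬ UpRed c F D (y - n - 2) q l) := by
    by_cases h : x = w
    · exact ⟨x, hx, w', hw', fun h' => hww (h ▸ h'), hbx, hbw'⟩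
    · exact ⟨x, hx, w, hw, h, hbx, hbw⟩
  obtain ⟨X, hXc, hX⟩ := low_bad c F D m p L hbp
  obtain ⟨X', hXc', hX'⟩ := up_bad c F D (y - n - 2) q L' hbq
  have hFp : (F ∪ {p}).card ≤ a + 1 := (Finset.card_union_le _ _).trans (by simp [ha])
  have hDq : (D ∪ {q}).card ≤ b + 1 := (Finset.card_union_le _ _).trans (by simp [hb])
  have hLL : N + m * (L + L') + 1 ≤ (n + a + b + 2) + m * n + m := by
    apply nat_bound (by omega)
    by_contra hcon
    apply hblue
    refine blue_lemma c hred (F ∪ {p}) (D ∪ X) (D ∪ {q}) (F ∪ X') L L' ?_ ?_ ?_ ?_ ?_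
    · rw [Finset.disjoint_left]
      intro t ht ht'
      have h1 : t ∈ D → t ∉ F := fun h => Finset.disjoint_left.1 hDF h
      have h2 := hKm p hp
      have h3 := hKm q hq
      simp only [Finset.mem_union, Finset.mem_singleton] at ht ht'
      rcases ht with ht | ht <;> rcases ht' with ht' | ht'
      · exact h1 ht' ht
      · exact h3.1 (ht' ▸ ht)
      · exact h2.2 (ht ▸ ht')
      · exact hpq (ht.symm.trans ht')
    · intro T hT hTL
      exact hX T (hT.mono_right (sub_aux1 _ _ _ _)) hTL
    · intro T hT hTL
      exact hX' T (hT.mono_right (sub_aux1' _ _ _ _)) hTL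
    · have hsub : F ∪ {p} ∪ (D ∪ X) ∪ (D ∪ {q}) ∪ (F ∪ X') ⊆ ((F ∪ {p}) ∪ (D ∪ {q})) ∪ (X ∪ X') :=
        sub_aux2 _ _ _ _ _ _
      have h1 := Finset.card_le_card hsub
      have h2 := Finset.card_union_le ((F ∪ {p}) ∪ (D ∪ {q})) (X ∪ X')
      have h3 := Finset.card_union_le (F ∪ {p}) (D ∪ {q})
      have h4 := Finset.card_union_le X X'
      omega
    · omega
  have hLLR : (N : ℝ) + m * (L + L') + 1 ≤ (n + a + b + 2) + m * n + m := by exact_mod_cast hLL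
  have hzz : ({z, z'} : Finset (Fin N)).card ≤ 2 := Finset.card_le_two
  have hK2 : m ≤ (K \ {z, z'}).card := by
    have := Finset.le_card_sdiff {z, z'} K
    omega
  obtain ⟨X₀, hX₀, hX₀c⟩ := Finset.exists_subset_card_eq hK2
  have hX₀m : ∀ t ∈ X₀, t ∈ K ∧ t ≠ z ∧ t ≠ z' := by
    intro t ht
    have := hX₀ ht
    simpa using this
  apply hred
  refine finish (a := a) (b := b) (y := y) (L := L) (L' := L') hm hmn c hblue F D X₀ hX₀c hDF.symm
    ?_ ?_ ha hb hy hF hD ?_ ?_ (g * (m + 1)) ?_ hg1 ?_ ?_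
  · exact Finset.disjoint_right.2 fun t ht => (hKm t (hX₀m t ht).1).1
  · exact Finset.disjoint_right.2 fun t ht => (hKm t (hX₀m t ht).1).2
  · exact fun t ht => hz t (hX₀m t ht).1 (hX₀m t ht).2.1
  · exact fun t ht => hz' t (hX₀m t ht).1 (hX₀m t ht).2.2
  · rw [← hgn]; ring
  · linarith
  · linarith

/-- For n ≥ m ≥ 4 and (N : ℝ) ≥ (m − 2 + (9m − 9)/((2m − 3)(m + 1)))n + m + 3,
every 2-coloring of Q_N contains a red copy of Q_m or a blue copy of Q_n. -/
theorem ramsey_Qm_Qn (m n N : ℕ) (hm : 4 ≤ m) (hmn : m ≤ n)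
    (hN : (N : ℝ) ≥ ((m : ℝ) - 2 + (9 * (m : ℝ) - 9) / ((2 * (m : ℝ) - 3) * ((m : ℝ) + 1))) * (n : ℝ)
      + (m : ℝ) + 3)
    (c : Finset (Fin N) → Bool) :
    HasRedCopy m N c ∨ HasBlueCopy n N c := by
  by_contra hcon
  rw [not_or] at hcon
  exact ramsey_aux m n N hm hmn hN c hcon.1 hcon.2
end

section
/- For all integers n ≥ 1 and N with 4N ≥ 7n + 9, every 2-coloring of the Boolean lattice Q_N contains a copy of Q_3 all of whose elements other than possibly the empty set and the full ground set [N] are red, or a copy of Q_n all of whose elements other than possibly the empty set and [N] are blue. (Equivalently, R̂(Q_3, Q_n) ≤ (7/4)n + 9/4.) -/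
/-- A copy of `Q m` in `Q N` all of whose elements, other than possibly `∅` and the
full ground set, are red. -/
def HasQuasiRedCopy (m N : ℕ) (c : Finset (Fin N) → Bool) : Prop :=
  ∃ f : Finset (Fin m) → Finset (Fin N),
    Function.Injective f ∧
    (∀ S T : Finset (Fin m), S ⊆ T ↔ f S ⊆ f T) ∧
    (∀ S : Finset (Fin m), f S ≠ ∅ → f S ≠ Finset.univ → c (f S) = true)

/-- A copy of `Q m` in `Q N` all of whose elements, other than possibly `∅` and the
full ground set, are blue. -/
def HasQuasiBlueCopy (m N : ℕ) (c : Finset (Fin N) → Bool) : Prop :=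
  ∃ f : Finset (Fin m) → Finset (Fin N),
    Function.Injective f ∧
    (∀ S T : Finset (Fin m), S ⊆ T ↔ f S ⊆ f T) ∧
    (∀ S : Finset (Fin m), f S ≠ ∅ → f S ≠ Finset.univ → c (f S) = false)


namespace HatRamsey

/-- A monotone map whose values remember the argument is a copy. -/
theorem mk_copy {m N : ℕ} (P : Finset (Fin N) → Prop) (e : Fin m → Fin N)
    (f : Finset (Fin m) → Finset (Fin N)) (hmono : ∀ S T, S ⊆ T → f S ⊆ f T)
    (he : ∀ S i, e i ∈ f S ↔ i ∈ S) (hP : ∀ S, f S ≠ ∅ → f S ≠ Finset.univ → P (f S)) :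
    ∃ f : Finset (Fin m) → Finset (Fin N),
    Function.Injective f ∧
    (∀ S T : Finset (Fin m), S ⊆ T ↔ f S ⊆ f T) ∧
    (∀ S : Finset (Fin m), f S ≠ ∅ → f S ≠ Finset.univ → P (f S)) := by
  refine ⟨f, ?_, ?_, hP⟩
  · intro S T h
    ext i
    rw [← he S i, h, he T i]
  · intro S T
    refine ⟨hmono S T, fun h i hi => ?_⟩
    exact (he T i).1 (h ((he S i).2 hi))

/-- A monochromatic cube above `B` is a copy. -/
theorem cube_copy {m N : ℕ} (P : Finset (Fin N) → Prop) (B D : Finset (Fin N))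
    (hd : Disjoint B D) (hD : m ≤ D.card) (hP : ∀ D', D' ⊆ D → P (B ∪ D')) :
    ∃ f : Finset (Fin m) → Finset (Fin N),
    Function.Injective f ∧
    (∀ S T : Finset (Fin m), S ⊆ T ↔ f S ⊆ f T) ∧
    (∀ S : Finset (Fin m), f S ≠ ∅ → f S ≠ Finset.univ → P (f S)) := by
  obtain ⟨D₀, hD₀, hc⟩ := Finset.exists_subset_card_eq hD
  have hmem : ∀ i, D₀.orderEmbOfFin hc i ∈ D := fun i =>
    hD₀ (Finset.orderEmbOfFin_mem D₀ hc i)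
  refine mk_copy P (D₀.orderEmbOfFin hc)
    (fun S => B ∪ S.map (D₀.orderEmbOfFin hc).toEmbedding) ?_ ?_ ?_
  · intro S T h
    exact Finset.union_subset_union_right (Finset.map_subset_map.2 h)
  · intro S i
    have : D₀.orderEmbOfFin hc i ∉ B := fun h => Finset.disjoint_left.1 hd h (hmem i)
    simp [this]
  · intro S _ _
    apply hP
    intro x hx
    simp only [Finset.mem_map] at hx
    obtain ⟨i, _, rfl⟩ := hx
    exact hmem i

/-- Either a copy exists, or the small red sets have a transversal of size at most two. -/
theorem low {n N h : ℕ} (c : Finset (Fin N) → Bool) (hN : n + 1 + 2 * h ≤ N) :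
    HasQuasiRedCopy 3 N c ∨ HasQuasiBlueCopy n N c ∨
    ∃ T : Finset (Fin N), T.card ≤ 2 ∧
      ∀ A : Finset (Fin N), A ≠ ∅ → A.card ≤ h → c A = true → ∃ x ∈ A, x ∈ T := by
  classical
  by_cases hb : HasQuasiBlueCopy n N c
  · exact Or.inr (Or.inl hb)
  let good : Finset (Fin N) → Prop := fun T =>
    ∀ A : Finset (Fin N), A ≠ ∅ → A.card ≤ h → c A = true → ∃ x ∈ A, x ∈ T
  have huniv : good Finset.univ := by
    intro A hA _ _
    obtain ⟨x, hx⟩ := Finset.nonempty_iff_ne_empty.2 hA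
    exact ⟨x, hx, Finset.mem_univ x⟩
  obtain ⟨T, hT, hmin⟩ := Finset.exists_min_image (Finset.univ.filter good) Finset.card
    ⟨Finset.univ, by simpa using huniv⟩
  have hTg : good T := by simpa using hT
  by_cases hcard : T.card ≤ 2
  · exact Or.inr (Or.inr ⟨T, hcard, hTg⟩)
  left
  obtain ⟨T₀, hT₀, hc⟩ := Finset.exists_subset_card_eq (show 3 ≤ T.card by omega)
  let x : Fin 3 → Fin N := T₀.orderEmbOfFin hc
  have hxinj : Function.Injective x := (T₀.orderEmbOfFin hc).injective
  have hxT : ∀ i, x i ∈ T := fun i => hT₀ (Finset.orderEmbOfFin_mem T₀ hc i)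
  have key : ∀ i, ∃ A : Finset (Fin N), A.card ≤ h ∧ c A = true ∧
      ∀ j, x j ∈ A ↔ j = i := by
    intro i
    have hng : ¬ good (T.erase (x i)) := by
      intro hg
      have h1 := hmin (T.erase (x i)) (by simpa using hg)
      have h2 := Finset.card_erase_lt_of_mem (hxT i)
      omega
    simp only [good] at hng
    push Not at hng
    obtain ⟨A, hA, hAh, hAc, hAT⟩ := hng
    refine ⟨A, hAh, hAc, fun j => ⟨fun hj => ?_, ?_⟩⟩
    · by_contra hne
      exact hAT _ hj (Finset.mem_erase.2 ⟨fun h => hne (hxinj h), hxT j⟩)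
    · rintro rfl
      obtain ⟨y, hyA, hyT⟩ := hTg A (Finset.nonempty_iff_ne_empty.1 hA) hAh hAc
      have := hAT y hyA
      have hy : y = x j := by
        by_contra hne
        exact this (Finset.mem_erase.2 ⟨hne, hyT⟩)
      exact hy ▸ hyA
  choose A hAh hAc hAx using key
  have key2 : ∀ i, ∃ B : Finset (Fin N), c B = true ∧ x i ∉ B ∧ ∀ j, j ≠ i → A j ⊆ B := by
    intro i
    by_contra hcon
    push Not at hcon
    apply hb
    let U := (Finset.univ.erase i).biUnion A
    have hUc : U.card ≤ 2 * h := by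
      have := Finset.card_biUnion_le_card_mul (Finset.univ.erase i) A h (fun j _ => hAh j)
      simpa using this
    have hxU : x i ∉ U := by
      simp only [U, Finset.mem_biUnion, not_exists, not_and, Finset.mem_erase]
      intro j hj hm
      exact hj.1 ((hAx j i).1 hm).symm
    refine cube_copy (fun B => c B = false) U ((insert (x i) U)ᶜ) ?_ ?_ ?_
    · rw [Finset.disjoint_left]
      intro y hy hy'
      simp [hy] at hy'
    · rw [Finset.card_compl, Fintype.card_fin, Finset.card_insert_of_notMem hxU]
      omega
    · intro D' hD'
      by_contra hne
      have hr : c (U ∪ D') = true := by simpa using hne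
      obtain ⟨j, hj, hjs⟩ := hcon (U ∪ D') hr (by
        intro hm
        rcases Finset.mem_union.1 hm with hm | hm
        · exact hxU hm
        · have := hD' hm
          simp at this)
      apply hjs
      refine Finset.Subset.trans ?_ Finset.subset_union_left
      exact Finset.subset_biUnion_of_mem A (by simp [hj])
  choose B hBc hBx hBA using key2
  -- the copy
  have hxB : ∀ i j, x j ∈ B i ↔ j ≠ i := by
    intro i j
    constructor
    · rintro hj rfl
      exact hBx _ hj
    · intro hne
      exact hBA i j hne ((hAx j j).2 rfl)
  have class3 : ∀ S : Finset (Fin 3), S = ∅ ∨ (∃ i, S = {i}) ∨ (∃ i, S = Finset.univ.erase i) ∨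
      S = Finset.univ := by decide
  let f : Finset (Fin 3) → Finset (Fin N) := fun S =>
    if S = ∅ then ∅ else if S = Finset.univ then Finset.univ else
    if S.card = 1 then S.biUnion A else Sᶜ.biUnion B
  have f0 : f ∅ = ∅ := by simp [f]
  have f3 : f Finset.univ = Finset.univ := by
    have : (Finset.univ : Finset (Fin 3)) ≠ ∅ := by decide
    simp only [f, if_neg this, if_true]
  have f1 : ∀ i, f {i} = A i := by
    intro i
    have h2 : ({i} : Finset (Fin 3)) ≠ Finset.univ := by revert i; decide
    simp [f, h2]
  have f2 : ∀ i, f (Finset.univ.erase i) = B i := by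
    intro i
    have h1 : (Finset.univ.erase i : Finset (Fin 3)) ≠ ∅ := by revert i; decide
    have h2 : (Finset.univ.erase i : Finset (Fin 3)) ≠ Finset.univ := by revert i; decide
    have h3 : (Finset.univ.erase i : Finset (Fin 3)).card ≠ 1 := by revert i; decide
    have h4 : (Finset.univ.erase i : Finset (Fin 3))ᶜ = {i} := by revert i; decide
    simp only [f, if_neg h1, if_neg h2, if_neg h3, h4, Finset.singleton_biUnion]
  refine mk_copy (fun B => c B = true) x f ?_ ?_ ?_
  · intro S T hST
    rcases class3 S with rfl | ⟨i, rfl⟩ | ⟨i, rfl⟩ | rfl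
    · rw [f0]; exact Finset.empty_subset _
    · rcases class3 T with rfl | ⟨j, rfl⟩ | ⟨j, rfl⟩ | rfl
      · exfalso; revert hST; revert i; decide
      · have : i = j := by simpa using hST
        rw [this]
      · rw [f1, f2]
        have : i ≠ j := by simpa using hST
        exact hBA j i this
      · rw [f3]; exact Finset.subset_univ _
    · rcases class3 T with rfl | ⟨j, rfl⟩ | ⟨j, rfl⟩ | rfl
      · exfalso; revert hST; revert i; decide
      · exfalso; revert hST; revert i j; decide
      · have : i = j := by revert hST; revert i j; decide
        rw [this]
      · rw [f3]; exact Finset.subset_univ _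
    · have : T = Finset.univ := Finset.univ_subset_iff.1 hST
      rw [this]
  · intro S i
    rcases class3 S with rfl | ⟨j, rfl⟩ | ⟨j, rfl⟩ | rfl
    · simp [f0]
    · rw [f1, hAx]; simp
    · rw [f2, hxB]; simp
    · simp [f3]
  · intro S h0 h3
    rcases class3 S with rfl | ⟨j, rfl⟩ | ⟨j, rfl⟩ | rfl
    · exact absurd f0 h0
    · rw [f1]; exact hAc j
    · rw [f2]; exact hBc j
    · exact absurd f3 h3

/-- Complementation turns copies into copies. -/
theorem compl_copy {m N : ℕ} (P : Finset (Fin N) → Prop)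
    (H : ∃ f : Finset (Fin m) → Finset (Fin N),
    Function.Injective f ∧
    (∀ S T : Finset (Fin m), S ⊆ T ↔ f S ⊆ f T) ∧
    (∀ S : Finset (Fin m), f S ≠ ∅ → f S ≠ Finset.univ → P (f S)ᶜ)) :
    ∃ f : Finset (Fin m) → Finset (Fin N),
    Function.Injective f ∧
    (∀ S T : Finset (Fin m), S ⊆ T ↔ f S ⊆ f T) ∧
    (∀ S : Finset (Fin m), f S ≠ ∅ → f S ≠ Finset.univ → P (f S)) := by
  obtain ⟨f, h1, h2, h3⟩ := H
  refine ⟨fun S => (f Sᶜ)ᶜ, ?_, ?_, ?_⟩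
  · intro S T h
    exact compl_injective (h1 (compl_injective h))
  · intro S T
    rw [Finset.compl_subset_compl, ← h2, Finset.compl_subset_compl]
  · intro S h0 h4
    apply h3
    · intro h; exact h4 (by simp [h])
    · intro h; exact h0 (by simp [h])

theorem high {n N h : ℕ} (c : Finset (Fin N) → Bool) (hN : n + 1 + 2 * h ≤ N) :
    HasQuasiRedCopy 3 N c ∨ HasQuasiBlueCopy n N c ∨
    ∃ T : Finset (Fin N), T.card ≤ 2 ∧
      ∀ A : Finset (Fin N), A ≠ ∅ → A.card ≤ h → c Aᶜ = true → ∃ x ∈ A, x ∈ T := by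
  rcases low (n := n) (h := h) (fun A => c Aᶜ) hN with H | H | H
  · exact Or.inl (compl_copy (fun B => c B = true) H)
  · exact Or.inr (Or.inl (compl_copy (fun B => c B = false) H))
  · exact Or.inr (Or.inr H)

/-- The layered embedding. -/
theorem layered {n N h : ℕ} (c : Finset (Fin N) → Bool) (Y : Finset (Fin N))
    (hY : Y.card + n = N) (hlev : 3 * n ≤ Y.card + 3 * (2 * h + 1))
    (hlow : ∀ A : Finset (Fin N), A ≠ ∅ → A.card ≤ h → c A = true → ∃ x ∈ A, x ∈ Y)
    (hhigh : ∀ A : Finset (Fin N), A ≠ ∅ → A.card ≤ h → c Aᶜ = true → ∃ x ∈ A, x ∈ Y) :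
    HasQuasiRedCopy 3 N c ∨ HasQuasiBlueCopy n N c := by
  classical
  by_cases hr : HasQuasiRedCopy 3 N c
  · exact Or.inl hr
  right
  have hXc : (Yᶜ).card = n := by
    rw [Finset.card_compl, Fintype.card_fin]; omega
  let e := (Yᶜ).orderEmbOfFin hXc
  have heY : ∀ i, e i ∉ Y := fun i =>
    Finset.mem_compl.1 (Finset.orderEmbOfFin_mem Yᶜ hXc i)
  -- a chain in Y
  let y := Y.orderEmbOfFin (rfl : Y.card = Y.card)
  let Z : ℕ → Finset (Fin N) := fun m =>
    (Finset.univ.filter (fun i : Fin Y.card => i.val < m)).map y.toEmbedding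
  have hZY : ∀ m, Z m ⊆ Y := by
    intro m a ha
    simp only [Z, Finset.mem_map] at ha
    obtain ⟨i, _, rfl⟩ := ha
    exact Finset.orderEmbOfFin_mem Y rfl i
  have hZmono : ∀ a b, a ≤ b → Z a ⊆ Z b := by
    intro a b hab
    apply Finset.map_subset_map.2
    intro i hi
    simp only [Finset.mem_filter, Finset.mem_univ, true_and] at hi ⊢
    omega
  have hZc : ∀ m, m ≤ Y.card → (Z m).card = m := by
    intro m hm
    simp only [Z, Finset.card_map]
    rw [Fin.card_filter_val_lt]
    omega
  let X : Finset (Fin n) → Finset (Fin N) := fun S => S.map e.toEmbedding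
  have hXY : ∀ S, Disjoint (X S) Y := by
    intro S
    rw [Finset.disjoint_left]
    intro a ha
    simp only [X, Finset.mem_map] at ha
    obtain ⟨i, _, rfl⟩ := ha
    exact heY i
  have hmid : ∀ S : Finset (Fin n), ∃ V : Finset (Fin N), h < S.card → S.card + h < n →
      Z (3 * (S.card - (h + 1))) ⊆ V ∧ V ⊆ Z (3 * (S.card - h)) ∧ c (X S ∪ V) = false := by
    intro S
    by_contra hcon
    push Not at hcon
    apply hr
    have ⟨hs1, hs2, _⟩ := hcon ∅
    set j := S.card - (h + 1) with hj
    have hj' : S.card - h = j + 1 := by omega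
    rw [hj'] at hcon
    have hle : 3 * (j + 1) ≤ Y.card := by omega
    refine cube_copy (fun B => c B = true) (X S ∪ Z (3 * j)) (Z (3 * (j + 1)) \ Z (3 * j)) ?_ ?_ ?_
    · rw [Finset.disjoint_left]
      intro a ha hb
      rcases Finset.mem_union.1 ha with ha | ha
      · exact Finset.disjoint_left.1 (hXY S) ha (hZY _ (Finset.mem_sdiff.1 hb).1)
      · exact (Finset.mem_sdiff.1 hb).2 ha
    · rw [Finset.card_sdiff_of_subset (hZmono _ _ (by omega)), hZc _ hle, hZc _ (by omega)]
      omega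
    · intro D' hD'
      obtain ⟨_, _, h3⟩ := hcon (Z (3 * j) ∪ D')
      have := h3 Finset.subset_union_left (Finset.union_subset (hZmono _ _ (by omega))
        (hD'.trans Finset.sdiff_subset))
      rw [Finset.union_assoc]
      simpa using this
  choose V hV using hmid
  let g : Finset (Fin n) → Finset (Fin N) := fun S =>
    if S.card ≤ h then ∅ else if n ≤ S.card + h then Y else V S
  have hgY : ∀ S, g S ⊆ Y := by
    intro S
    simp only [g]
    split_ifs with h1 h2
    · exact Finset.empty_subset _
    · exact Finset.Subset.refl _
    · exact (hV S (by omega) (by omega)).2.1.trans (hZY _)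
  have hgmono : ∀ S T, S.card < T.card → g S ⊆ g T := by
    intro S T hST
    by_cases h1 : S.card ≤ h
    · simp [g, h1]
    by_cases h2 : n ≤ T.card + h
    · have : g T = Y := by
        have : ¬ T.card ≤ h := by omega
        simp [g, this, h2]
      rw [this]
      exact hgY S
    have hS : g S = V S := by
      have : ¬ n ≤ S.card + h := by omega
      simp [g, this, h1]
    have hT : g T = V T := by
      have : ¬ T.card ≤ h := by omega
      simp [g, this, h2]
    rw [hS, hT]
    exact (hV S (by omega) (by omega)).2.1.trans
      ((hZmono _ _ (by omega)).trans (hV T (by omega) (by omega)).1)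
  refine mk_copy (fun B => c B = false) e (fun S => X S ∪ g S) ?_ ?_ ?_
  · intro S T hST
    rcases eq_or_ne S T with rfl | hne
    · exact Finset.Subset.refl _
    · exact Finset.union_subset_union (Finset.map_subset_map.2 hST)
        (hgmono S T (Finset.card_lt_card (Finset.ssubset_iff_subset_ne.2 ⟨hST, hne⟩)))
  · intro S i
    have : e i ∉ g S := fun hm => heY i (hgY S hm)
    simp [X, this]
  · intro S h0 h3
    have hXS : (X S).card = S.card := by simp [X]
    by_cases h1 : S.card ≤ h
    · have hg : g S = ∅ := by simp [g, h1]
      simp only [hg, Finset.union_empty] at h0 ⊢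
      by_contra hne
      obtain ⟨a, ha, haY⟩ := hlow (X S) h0 (by omega) (by simpa using hne)
      exact Finset.disjoint_left.1 (hXY S) ha haY
    by_cases h2 : n ≤ S.card + h
    · have hg : g S = Y := by simp [g, h1, h2]
      simp only [hg] at h3 ⊢
      by_contra hne
      obtain ⟨a, ha, haY⟩ := hhigh (X S ∪ Y)ᶜ (fun h => h3 (compl_eq_bot.1 h)) (by
        rw [Finset.card_compl, Fintype.card_fin, Finset.card_union_of_disjoint (hXY S)]
        omega) (by simpa using hne)
      simp [haY] at ha
    · have hg : g S = V S := by simp [g, h1, h2]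
      simp only [hg]
      exact (hV S (by omega) (by omega)).2.2

end HatRamsey

/-- if n ≥ 1 and 4N ≥ 7n + 9, every 2-coloring of Q_N contains a copy of Q_3
red except possibly at ∅ and [N], or a copy of Q_n blue except possibly at ∅ and [N];
i.e. R̂(Q_3, Q_n) ≤ (7/4)n + 9/4. -/
theorem hat_ramsey_Q3_Qn (n N : ℕ) (hn : 1 ≤ n) (hN : 4 * N ≥ 7 * n + 9)
    (c : Finset (Fin N) → Bool) :
    HasQuasiRedCopy 3 N c ∨ HasQuasiBlueCopy n N c := by
  classical
  rcases Nat.lt_or_ge n 2 with hn2 | hn2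
  · obtain rfl : n = 1 := by omega
    right
    have hN0 : 0 < N := by omega
    refine HatRamsey.mk_copy (fun B => c B = false) (fun _ => ⟨0, hN0⟩)
      (fun S => if S = ∅ then ∅ else Finset.univ) ?_ ?_ ?_
    · intro S T h
      by_cases hS : S = ∅
      · simp [hS]
      · have : T ≠ ∅ := by
          rintro rfl
          exact hS (Finset.subset_empty.1 h)
        simp [hS, this]
    · intro S i
      have : S = ∅ ∨ S = Finset.univ := by revert S; decide
      rcases this with rfl | rfl
      · simp
      · have h1 : (Finset.univ : Finset (Fin 1)) ≠ ∅ := by decide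
        simp only [if_neg h1, Finset.mem_univ]
    · intro S h0 h1
      by_cases hS : S = ∅
      · simp [hS] at h0
      · simp [hS] at h1
  obtain ⟨t, rfl⟩ : ∃ t, N = n + t := ⟨N - n, by omega⟩
  have hh : n + 1 + 2 * ((t - 1) / 2) ≤ n + t := by omega
  rcases HatRamsey.low c hh with H | H | ⟨T₁, hT₁, H₁⟩
  · exact Or.inl H
  · exact Or.inr H
  rcases HatRamsey.high c hh with H | H | ⟨T₂, hT₂, H₂⟩
  · exact Or.inl H
  · exact Or.inr H
  have hcard : (T₁ ∪ T₂).card ≤ t := by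
    have := Finset.card_union_le T₁ T₂
    omega
  obtain ⟨Y, hTY, hYc⟩ := Finset.exists_superset_card_eq hcard (by simp)
  refine HatRamsey.layered (h := (t - 1) / 2) c Y (by omega) (by omega) ?_ ?_
  · intro A h1 h2 h3
    obtain ⟨x, hx, hxT⟩ := H₁ A h1 h2 h3
    exact ⟨x, hx, hTY (Finset.mem_union_left _ hxT)⟩
  · intro A h1 h2 h3
    obtain ⟨x, hx, hxT⟩ := H₂ A h1 h2 h3
    exact ⟨x, hx, hTY (Finset.mem_union_right _ hxT)⟩
end

section
/- For all integers n ≥ m ≥ 4 and every integer N satisfying (N : ℝ) ≥ (m − 2 + 3/(2m − 3))·n + m, every 2-coloring of the Boolean lattice Q_N contains a copy of Q_m all of whose elements other than possibly the empty set and the full ground set [N] are red, or a copy of Q_n all of whose elements other than possibly the empty set and [N] are blue. (Equivalently, R̂(Q_m, Q_n) ≤ (m − 2 + 3/(2m − 3))n + m for all n ≥ m ≥ 4.) -/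
lemma order_to_inj {m N : ℕ} (f : Finset (Fin m) → Finset (Fin N))
    (h : ∀ S T, S ⊆ T ↔ f S ⊆ f T) : Function.Injective f := by
  intro S T hST
  apply Finset.Subset.antisymm
  · rw [h, hST]
  · rw [h, hST]

lemma cube_copy {n N : ℕ} (A D : Finset (Fin N)) (hAD : Disjoint A D) (hD : n ≤ D.card) :
    ∃ f : Finset (Fin n) → Finset (Fin N), Function.Injective f ∧
      (∀ S T, S ⊆ T ↔ f S ⊆ f T) ∧ ∀ S, A ⊆ f S ∧ f S ⊆ A ∪ D := by
  obtain ⟨D', hD', hc⟩ := Finset.exists_subset_card_eq hD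
  let e : Fin n ↪ Fin N := (D'.orderEmbOfFin hc).toEmbedding
  have he : ∀ i, e i ∈ D := fun i => hD' (D'.orderEmbOfFin_mem hc i)
  have key : ∀ S T : Finset (Fin n), S ⊆ T ↔ A ∪ S.map e ⊆ A ∪ T.map e := by
    intro S T
    constructor
    · intro h
      exact Finset.union_subset_union_right (Finset.map_subset_map.2 h)
    · intro h i hi
      have h1 : e i ∈ A ∪ T.map e := h (Finset.mem_union_right _ (Finset.mem_map_of_mem e hi))
      rcases Finset.mem_union.1 h1 with h2 | h2
      · exact absurd (he i) (Finset.disjoint_left.1 hAD h2)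
      · simpa using h2
  refine ⟨fun S => A ∪ S.map e, order_to_inj _ key, key, fun S => ⟨Finset.subset_union_left, ?_⟩⟩
  apply Finset.union_subset_union_right
  intro x hx
  obtain ⟨i, _, rfl⟩ := Finset.mem_map.1 hx
  exact he i

lemma blob_red {n N : ℕ} {c : Finset (Fin N) → Bool} (hb : ¬ HasQuasiBlueCopy n N c)
    (A D : Finset (Fin N)) (hAD : Disjoint A D) (hD : n ≤ D.card) :
    ∃ R, A ⊆ R ∧ R ⊆ A ∪ D ∧ c R = true := by
  by_contra hcon
  push Not at hcon
  obtain ⟨f, h1, h2, h3⟩ := cube_copy (n := n) A D hAD hD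
  refine hb ⟨f, h1, h2, fun S _ _ => ?_⟩
  simpa using hcon (f S) (h3 S).1 (h3 S).2

lemma blob_blue {n N : ℕ} {c : Finset (Fin N) → Bool} (hb : ¬ HasQuasiRedCopy n N c)
    (A D : Finset (Fin N)) (hAD : Disjoint A D) (hD : n ≤ D.card) :
    ∃ R, A ⊆ R ∧ R ⊆ A ∪ D ∧ c R = false := by
  by_contra hcon
  push Not at hcon
  obtain ⟨f, h1, h2, h3⟩ := cube_copy (n := n) A D hAD hD
  refine hb ⟨f, h1, h2, fun S _ _ => ?_⟩
  simpa using hcon (f S) (h3 S).1 (h3 S).2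

/-- Initial segments of a finite set. -/
lemma chain_simple {N : ℕ} (M : Finset (Fin N)) :
    ∃ G : ℕ → Finset (Fin N), Monotone G ∧ (∀ i, G i ⊆ M) ∧ ∀ i, (G i).card = min i M.card := by
  classical
  refine ⟨fun i => (M.toList.take i).toFinset, ?_, ?_, ?_⟩
  · intro i j hij x hx
    simp only [List.mem_toFinset] at hx ⊢
    exact (List.take_subset_take_left _ hij) hx
  · intro i x hx
    simp only [List.mem_toFinset] at hx
    simpa using List.mem_of_mem_take hx
  · intro i
    rw [List.toFinset_card_of_nodup ((List.take_sublist _ _).nodup M.nodup_toList)]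
    simp

lemma chain_UV {N : ℕ} (M U V : Finset (Fin N)) (hU : U ⊆ M) (hV : V ⊆ M) (hUV : Disjoint U V) :
    ∃ G : ℕ → Finset (Fin N), Monotone G ∧ (∀ i, G i ⊆ M) ∧ (∀ i, (G i).card = min i M.card) ∧
      (∀ i, U.card ≤ i → U ⊆ G i) ∧ (∀ i, i + V.card ≤ M.card → Disjoint V (G i)) := by
  classical
  let R := (M \ U) \ V
  let l := U.toList ++ (R.toList ++ V.toList)
  have hnd : l.Nodup := by
    rw [List.nodup_append', List.nodup_append']
    refine ⟨U.nodup_toList, ⟨R.nodup_toList, V.nodup_toList, ?_⟩, ?_⟩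
    · intro x hx hy
      simp [R] at hx hy; tauto
    · intro x hx hy
      have hdd := Finset.disjoint_left.1 hUV
      have := @hdd x
      simp [R] at hx hy; tauto
  have hmem : ∀ x, x ∈ l ↔ x ∈ M := by
    intro x
    have h1 := @hU x
    have h2 := @hV x
    simp [l, R]; tauto
  have hlt : l.toFinset = M := by ext x; simp [hmem]
  have hlen : l.length = M.card := by
    rw [← hlt, List.toFinset_card_of_nodup hnd]
  have hlen2 : U.card + (R.card + V.card) = M.card := by
    rw [← hlen]; simp [l]
  refine ⟨fun i => (l.take i).toFinset, ?_, ?_, ?_, ?_, ?_⟩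
  · intro i j hij x hx
    simp only [List.mem_toFinset] at hx ⊢
    exact (List.take_subset_take_left _ hij) hx
  · intro i x hx
    simp only [List.mem_toFinset] at hx
    exact (hmem x).1 (List.mem_of_mem_take hx)
  · intro i
    rw [List.toFinset_card_of_nodup ((List.take_sublist _ _).nodup hnd)]
    simp [hlen]
  · intro i hi x hx
    simp only [List.mem_toFinset, l]
    rw [List.take_append]
    apply List.mem_append_left
    rw [List.take_of_length_le (by simpa using hi)]
    simpa using hx
  · intro i hi
    rw [Finset.disjoint_left]
    intro x hx hx2
    simp only [List.mem_toFinset] at hx2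
    have h3 : x ∈ (l.take (U.card + R.card)) :=
      (List.take_subset_take_left _ (by omega)) hx2
    have h4 : l.take (U.card + R.card) = U.toList ++ R.toList := by
      simp only [l]
      rw [← List.append_assoc]
      rw [List.take_append_of_le_length (by simp)]
      rw [List.take_of_length_le (by simp)]
    rw [h4] at h3
    have hdd := Finset.disjoint_left.1 hUV
    have := @hdd x
    simp [R] at h3; tauto

lemma B_lemma {m n N p q : ℕ} {c : Finset (Fin N) → Bool} (W : Finset (Fin N)) (hW : n ≤ W.card)
    (a b : Fin N) (hab : a ≠ b) (haW : a ∉ W) (hbW : b ∉ W)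
    (hp : ∀ T ⊆ W, T.card < p → c (insert a T) = false)
    (hq : ∀ C ⊆ W, C.card < q → c ((Finset.univ \ {b}) \ C) = false)
    (hcount : n + m * (n + 1 - p - q) + 2 ≤ N) :
    HasQuasiRedCopy m N c ∨ HasQuasiBlueCopy n N c := by
  classical
  by_contra hcon
  push Not at hcon
  obtain ⟨hr, hbl⟩ := hcon
  obtain ⟨X, hXW, hXc⟩ := Finset.exists_subset_card_eq hW
  have haX : a ∉ X := fun h => haW (hXW h)
  have hbX : b ∉ X := fun h => hbW (hXW h)
  let Z : Finset (Fin N) := Finset.univ \ (insert a (insert b X))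
  have hZ : Z.card = N - (n + 2) := by
    rw [Finset.card_sdiff_of_subset (Finset.subset_univ _), Finset.card_insert_of_notMem,
      Finset.card_insert_of_notMem hbX, hXc]
    · simp
    · simp [hab, haX]
  obtain ⟨P, hPm, hPZ, hPc⟩ := chain_simple Z
  have hZX : ∀ x ∈ Z, x ∉ X ∧ x ≠ a ∧ x ≠ b := by
    intro x hx
    simp [Z] at hx; tauto
  have hex : ∀ S : Finset (Fin N), ∃ F : Finset (Fin N), S ⊆ X → (c F = false ∧ F ∩ X = S ∧
      (S.card < p → F = insert a S) ∧
      (p ≤ S.card → n < S.card + q → F = (Finset.univ \ {b}) \ (X \ S)) ∧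
      (p ≤ S.card → S.card + q ≤ n → insert a S ∪ P ((S.card - p) * m) ⊆ F ∧
        F ⊆ insert a S ∪ P ((S.card - p + 1) * m))) := by
    intro S
    by_cases hS : S ⊆ X
    swap
    · exact ⟨∅, fun h => absurd h hS⟩
    have hSc : S.card ≤ n := hXc ▸ Finset.card_le_card hS
    rcases lt_or_ge S.card p with h1 | h1
    · refine ⟨insert a S, fun _ => ⟨hp S (hS.trans hXW) h1, ?_, fun _ => rfl, ?_, ?_⟩⟩
      · ext x
        have := @hS x
        simp only [Finset.mem_inter, Finset.mem_insert]
        constructor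
        · rintro ⟨rfl | h, h'⟩
          · exact absurd h' haX
          · exact h
        · intro h; exact ⟨Or.inr h, this h⟩
      · intro h; omega
      · intro h; omega
    rcases lt_or_ge n (S.card + q) with h2 | h2
    · refine ⟨(Finset.univ \ {b}) \ (X \ S), fun _ => ⟨?_, ?_, ?_, fun _ _ => rfl, ?_⟩⟩
      · apply hq _ (Finset.sdiff_subset.trans hXW)
        rw [Finset.card_sdiff_of_subset hS]; omega
      · ext x
        have := @hS x
        simp only [Finset.mem_inter, Finset.mem_sdiff, Finset.mem_univ, Finset.mem_singleton]
        constructor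
        · tauto
        · intro h
          have h' := this h
          refine ⟨⟨⟨trivial, ?_⟩, by tauto⟩, h'⟩
          rintro rfl; exact hbX h'
      · intro h; omega
      · intro h h'; omega
    · have hj : (S.card - p + 1) * m ≤ N - (n + 2) := by
        have : S.card - p + 1 ≤ n + 1 - p - q := by omega
        have := Nat.mul_le_mul_right m this
        rw [mul_comm m] at hcount
        omega
      obtain ⟨F, hF1, hF2, hF3⟩ := blob_blue hr (insert a S ∪ P ((S.card - p) * m))
        (P ((S.card - p + 1) * m) \ P ((S.card - p) * m)) (by
          rw [Finset.disjoint_left]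
          intro x hx hx2
          rw [Finset.mem_sdiff] at hx2
          have h3 := hZX x (hPZ _ hx2.1)
          simp only [Finset.mem_union, Finset.mem_insert] at hx
          rcases hx with (h | h) | h
          · exact h3.2.1 h
          · exact h3.1 (hS h)
          · exact hx2.2 h) (by
          have hle : (S.card - p) * m ≤ (S.card - p + 1) * m := Nat.mul_le_mul_right m (by omega)
          rw [Finset.card_sdiff_of_subset (hPm hle), hPc, hPc, hZ]
          rw [min_eq_left hj, min_eq_left (hle.trans hj), Nat.add_mul]
          omega)
      have hF2' : F ⊆ insert a S ∪ P ((S.card - p + 1) * m) := by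
        intro x hx
        have := hF2 hx
        have hle : (S.card - p) * m ≤ (S.card - p + 1) * m := Nat.mul_le_mul_right m (by omega)
        have h5 := @hPm _ _ hle x
        simp only [Finset.mem_union, Finset.mem_sdiff] at this ⊢
        tauto
      refine ⟨F, fun _ => ⟨hF3, ?_, fun h => by omega, fun _ h => by omega, fun _ _ => ⟨hF1, hF2'⟩⟩⟩
      ext x
      constructor
      · intro hx
        rw [Finset.mem_inter] at hx
        have h6 := hF2' hx.1
        simp only [Finset.mem_union, Finset.mem_insert] at h6
        rcases h6 with (h | h) | h
        · exact absurd (h ▸ hx.2) haX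
        · exact h
        · exact absurd hx.2 (hZX x (hPZ _ h)).1
      · intro hx
        rw [Finset.mem_inter]
        exact ⟨hF1 (by simp [hx]), hS hx⟩
  choose F hF using hex
  have hmono : ∀ S T, S ⊆ T → T ⊆ X → F S ⊆ F T := by
    intro S T hST hT
    obtain ⟨-, hT0, hT1, hT2, hT3⟩ := hF T hT
    obtain ⟨-, hS0, hS1, hS2, hS3⟩ := hF S (hST.trans hT)
    rcases eq_or_ne S T with rfl | hne
    · exact Finset.Subset.refl _
    have hlt : S.card < T.card := Finset.card_lt_card (hST.ssubset_of_ne hne)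
    -- a set between
    have hTlo : insert a T ⊆ F T := by
      rcases lt_or_ge T.card p with h1 | h1
      · rw [hT1 h1]
      rcases lt_or_ge n (T.card + q) with h2 | h2
      · rw [hT2 h1 h2]
        intro x hx
        simp only [Finset.mem_insert] at hx
        simp only [Finset.mem_sdiff, Finset.mem_univ, Finset.mem_singleton]
        rcases hx with rfl | hx
        · exact ⟨⟨trivial, hab⟩, fun h => haX h.1⟩
        · exact ⟨⟨trivial, fun h => hbX (h ▸ hT hx)⟩, fun h => h.2 hx⟩
      · exact Finset.subset_union_left.trans (hT3 h1 h2).1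
    have hins : insert a S ⊆ F T := (Finset.insert_subset_insert a hST).trans hTlo
    rcases lt_or_ge S.card p with h1 | h1
    · rw [hS1 h1]; exact hins
    rcases lt_or_ge n (T.card + q) with h2 | h2
    · rw [hT2 (by omega) h2]
      rcases lt_or_ge n (S.card + q) with h3 | h3
      · rw [hS2 h1 h3]
        exact Finset.sdiff_subset_sdiff (Finset.Subset.refl _) (Finset.sdiff_subset_sdiff (Finset.Subset.refl _) hST)
      · intro x hx
        have h4 := (hS3 h1 h3).2 hx
        simp only [Finset.mem_union, Finset.mem_insert] at h4
        simp only [Finset.mem_sdiff, Finset.mem_univ, Finset.mem_singleton]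
        rcases h4 with (rfl | h) | h
        · exact ⟨⟨trivial, hab⟩, fun h => haX h.1⟩
        · exact ⟨⟨trivial, fun h' => hbX (h' ▸ hT (hST h))⟩, fun h' => h'.2 (hST h)⟩
        · have h5 := hZX x (hPZ _ h)
          exact ⟨⟨trivial, h5.2.2⟩, fun h' => h5.1 h'.1⟩
    · refine (hS3 h1 (by omega)).2.trans (Finset.union_subset hins ?_)
      refine (hPm ?_).trans (Finset.subset_union_right.trans (hT3 (by omega) h2).1)
      exact Nat.mul_le_mul_right m (by omega)
  let e : Fin n ↪ Fin N := (X.orderEmbOfFin hXc).toEmbedding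
  have he : ∀ S : Finset (Fin n), S.map e ⊆ X := by
    intro S x hx
    obtain ⟨i, _, rfl⟩ := Finset.mem_map.1 hx
    exact X.orderEmbOfFin_mem hXc i
  have key : ∀ S T : Finset (Fin n), S ⊆ T ↔ F (S.map e) ⊆ F (T.map e) := by
    intro S T
    constructor
    · intro h
      exact hmono _ _ (Finset.map_subset_map.2 h) (he T)
    · intro h
      rw [← Finset.map_subset_map (f := e), ← (hF _ (he S)).2.1, ← (hF _ (he T)).2.1]
      exact Finset.inter_subset_inter_right h
  exact hbl ⟨fun S => F (S.map e), order_to_inj _ key, key, fun S _ _ => (hF _ (he S)).1⟩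

lemma red_of_sandwich {m N : ℕ} {c : Finset (Fin N) → Bool} (hm : 2 ≤ m) (e : Fin m ↪ Fin N)
    (R : Finset (Fin m) → Finset (Fin N))
    (hdisj : ∀ s i, s ≠ ∅ → s ≠ Finset.univ → e i ∉ R s)
    (hmono : ∀ s t, s ≠ ∅ → t ≠ Finset.univ → s ⊂ t → R s ⊆ R t)
    (hred : ∀ s, s ≠ ∅ → s ≠ Finset.univ → c (s.map e ∪ R s) = true) :
    HasQuasiRedCopy m N c := by
  classical
  have hne : (∅ : Finset (Fin m)) ≠ Finset.univ := by
    intro h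
    have := congrArg Finset.card h
    simp at this; omega
  let f : Finset (Fin m) → Finset (Fin N) := fun s =>
    if s = ∅ then ∅ else if s = Finset.univ then Finset.univ else s.map e ∪ R s
  have f0 : f ∅ = ∅ := by simp [f]
  have f1 : f Finset.univ = Finset.univ := by simp [f, hne.symm]
  have f2 : ∀ s, s ≠ ∅ → s ≠ Finset.univ → f s = s.map e ∪ R s := by
    intro s h1 h2; simp [f, h1, h2]
  have hmem : ∀ s i, e i ∈ f s ↔ i ∈ s := by
    intro s i
    by_cases h1 : s = ∅
    · subst h1; simp [f0]
    by_cases h2 : s = Finset.univ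
    · subst h2; simp [f1]
    rw [f2 s h1 h2]
    simp [hdisj s i h1 h2]
  have key : ∀ S T : Finset (Fin m), S ⊆ T ↔ f S ⊆ f T := by
    intro S T
    constructor
    · intro h
      by_cases h1 : S = ∅
      · subst h1; simp [f0]
      by_cases h2 : T = Finset.univ
      · subst h2; simp [f1]
      rcases eq_or_ne S T with rfl | hST
      · exact Finset.Subset.refl _
      have hT0 : T ≠ ∅ := by
        rintro rfl; exact h1 (Finset.subset_empty.1 h)
      have hS1 : S ≠ Finset.univ := by
        rintro rfl; exact h2 (Finset.univ_subset_iff.1 h)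
      rw [f2 S h1 hS1, f2 T hT0 h2]
      exact Finset.union_subset_union (Finset.map_subset_map.2 h)
        (hmono S T h1 h2 (h.ssubset_of_ne hST))
    · intro h i hi
      exact (hmem T i).1 (h ((hmem S i).2 hi))
  refine ⟨f, order_to_inj _ key, key, fun S h1 h2 => ?_⟩
  have hS0 : S ≠ ∅ := by rintro rfl; exact h1 f0
  have hS1 : S ≠ Finset.univ := by rintro rfl; exact h2 f1
  rw [f2 S hS0 hS1]
  exact hred S hS0 hS1

lemma master {m n N p q N' : ℕ} {c : Finset (Fin N) → Bool} (hbl : ¬ HasQuasiBlueCopy n N c)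
    (hm : 2 ≤ m) (e : Fin m ↪ Fin N) (T C : Fin m → Finset (Fin N))
    (hT : ∀ a i, e i ∉ T a) (hC : ∀ a i, e i ∉ C a) (hTC : ∀ a b, Disjoint (T a) (C b))
    (hTp : ∀ a, (T a).card ≤ p) (hCq : ∀ a, (C a).card ≤ q)
    (lam : ℕ → ℕ) (hlam : Monotone lam) (hN' : N' + m = N)
    (hstep : ∀ l, 1 ≤ l → l < m →
      (l = 1 ∧ lam 2 = 0 ∧ ∀ a, c (insert (e a) (T a)) = true) ∨
      (l + 1 = m ∧ N' ≤ lam l ∧ ∀ b, c ((Finset.univ \ {e b}) \ C b) = true) ∨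
      (lam (l + 1) ≤ N' ∧ lam l + n + (if m * p ≤ lam l then 0 else l * p) +
        (if lam (l + 1) + m * q ≤ N' then 0 else (m - l) * q) ≤ lam (l + 1))) :
    HasQuasiRedCopy m N c := by
  classical
  let M : Finset (Fin N) := Finset.univ \ Finset.univ.map e
  let U := Finset.univ.biUnion T
  let V := Finset.univ.biUnion C
  have hMmem : ∀ x, x ∈ M ↔ ∀ i, e i ≠ x := by intro x; simp [M]
  have hMc : M.card = N' := by
    rw [Finset.card_sdiff_of_subset (Finset.subset_univ _)]
    simp; omega
  have hTM : ∀ a, T a ⊆ M := fun a x hx => (hMmem x).2 (fun i h => hT a i (h ▸ hx))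
  have hCM : ∀ a, C a ⊆ M := fun a x hx => (hMmem x).2 (fun i h => hC a i (h ▸ hx))
  have hU : U ⊆ M := Finset.biUnion_subset.2 fun a _ => hTM a
  have hV : V ⊆ M := Finset.biUnion_subset.2 fun a _ => hCM a
  have hUV : Disjoint U V := by
    rw [Finset.disjoint_biUnion_left]
    intro a _
    rw [Finset.disjoint_biUnion_right]
    intro b _
    exact hTC a b
  have hUc : U.card ≤ m * p := by
    simpa using Finset.card_biUnion_le_card_mul Finset.univ T p (fun a _ => hTp a)
  have hVc : V.card ≤ m * q := by
    simpa using Finset.card_biUnion_le_card_mul Finset.univ C q (fun a _ => hCq a)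
  obtain ⟨G, hG, hGM, hGc, hGU, hGV⟩ := chain_UV M U V hU hV hUV
  let Ts : Finset (Fin m) → Finset (Fin N) := fun s => s.biUnion T
  let Cs : Finset (Fin m) → Finset (Fin N) := fun s => sᶜ.biUnion C
  have hTsU : ∀ s, Ts s ⊆ U := fun s => Finset.biUnion_subset_biUnion_of_subset_left _ (Finset.subset_univ _)
  have hCsV : ∀ s, Cs s ⊆ V := fun s => Finset.biUnion_subset_biUnion_of_subset_left _ (Finset.subset_univ _)
  have hTsCs : ∀ s, Disjoint (Ts s) (Cs s) := fun s => hUV.mono (hTsU s) (hCsV s)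
  let lo : Finset (Fin m) → Finset (Fin N) := fun s => (G (lam s.card) ∪ Ts s) \ Cs s
  let hi : Finset (Fin m) → Finset (Fin N) := fun s => (G (lam (s.card + 1)) ∪ Ts s) \ Cs s
  have hlohi : ∀ s, lo s ⊆ hi s := fun s =>
    Finset.sdiff_subset_sdiff (Finset.union_subset_union_left (hG (hlam (Nat.le_succ _))))
      (Finset.Subset.refl _)
  have hhiM : ∀ s, hi s ⊆ M := fun s =>
    Finset.sdiff_subset.trans (Finset.union_subset (hGM _) ((hTsU s).trans hU))
  have hex : ∀ s : Finset (Fin m), ∃ R, s ≠ ∅ → s ≠ Finset.univ →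
      (lo s ⊆ R ∧ R ⊆ hi s ∧ c (s.map e ∪ R) = true) := by
    intro s
    by_cases hs0 : s = ∅
    · exact ⟨∅, fun h => absurd hs0 h⟩
    by_cases hs1 : s = Finset.univ
    · exact ⟨∅, fun _ h => absurd hs1 h⟩
    have hc1 : 1 ≤ s.card := Finset.card_pos.2 (Finset.nonempty_iff_ne_empty.2 hs0)
    have hc2 : s.card < m := by
      have := Finset.card_lt_univ_of_notMem (s := s) (x := (by
        classical
        exact Classical.choose (not_forall.1 (fun h => hs1 (Finset.eq_univ_iff_forall.2 h)))))
        (Classical.choose_spec (not_forall.1 (fun h => hs1 (Finset.eq_univ_iff_forall.2 h))))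
      simpa using this
    rcases hstep s.card hc1 hc2 with ⟨h1, h2, h3⟩ | ⟨h1, h2, h3⟩ | ⟨h1, h2⟩
    · obtain ⟨a, rfl⟩ := Finset.card_eq_one.1 h1
      have hG0 : G 0 = ∅ := by
        rw [← Finset.card_eq_zero, hGc]; simp
      have hhi : hi {a} = T a := by
        have : hi {a} = Ts {a} \ Cs {a} := by
          simp only [hi, Finset.card_singleton]
          rw [show lam (1 + 1) = 0 from h2, hG0, Finset.empty_union]
        rw [this, Finset.sdiff_eq_self_of_disjoint (hTsCs _)]
        simp [Ts]
      refine ⟨hi {a}, fun _ _ => ⟨hlohi _, Finset.Subset.refl _, ?_⟩⟩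
      rw [hhi, Finset.map_singleton, ← Finset.insert_eq]
      exact h3 a
    · have hsc : sᶜ.card = 1 := by rw [Finset.card_compl, Fintype.card_fin]; omega
      obtain ⟨b, hb⟩ := Finset.card_eq_one.1 hsc
      have hGM' : G (lam s.card) = M := by
        apply Finset.eq_of_subset_of_card_le (hGM _)
        rw [hGc, hMc, min_eq_right h2]
      have hlo : lo s = M \ C b := by
        simp only [lo, Cs, hGM', hb, Finset.singleton_biUnion]
        rw [Finset.union_eq_left.2 ((hTsU s).trans hU)]
      refine ⟨lo s, fun _ _ => ⟨Finset.Subset.refl _, hlohi _, ?_⟩⟩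
      have : s.map e ∪ lo s = (Finset.univ \ {e b}) \ C b := by
        rw [hlo]
        have hbs : ∀ i, i ∈ s ↔ i ≠ b := by
          intro i
          have : i ∈ sᶜ ↔ i = b := by rw [hb]; simp
          rw [Finset.mem_compl] at this
          tauto
        ext x
        simp only [Finset.mem_union, Finset.mem_map, Finset.mem_sdiff, Finset.mem_univ,
          Finset.mem_singleton, true_and, hMmem, hbs]
        constructor
        · rintro (⟨i, hi1, rfl⟩ | ⟨h4, h5⟩)
          · exact ⟨fun h => hi1 (e.injective h), hC b i⟩
          · exact ⟨fun h => h4 b h.symm, h5⟩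
        · rintro ⟨h4, h5⟩
          by_cases h6 : ∃ i, e i = x
          · obtain ⟨i, rfl⟩ := h6
            left
            exact ⟨i, fun h => h4 (h ▸ rfl), rfl⟩
          · right
            push Not at h6
            exact ⟨h6, h5⟩
      rw [this]
      exact h3 b
    · have hle : lam s.card ≤ lam (s.card + 1) := hlam (Nat.le_succ _)
      have hdisj : Disjoint (s.map e ∪ lo s) (hi s \ lo s) := by
        rw [Finset.disjoint_left]
        intro x hx hx2
        rw [Finset.mem_sdiff] at hx2
        rcases Finset.mem_union.1 hx with h | h
        · obtain ⟨i, _, hi2⟩ := Finset.mem_map.1 h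
          exact (hMmem x).1 (hhiM s hx2.1) i hi2
        · exact hx2.2 h
      have hcard : n ≤ (hi s \ lo s).card := by
        have hsub : G (lam (s.card + 1)) \ G (lam s.card) ⊆
            (hi s \ lo s) ∪ ((Ts s \ G (lam s.card)) ∪ (Cs s ∩ G (lam (s.card + 1)))) := by
          intro x hx
          simp only [Finset.mem_union, Finset.mem_sdiff, Finset.mem_inter, hi, lo] at hx ⊢
          tauto
        have h3 := Finset.card_le_card hsub
        rw [Finset.card_sdiff_of_subset (hG hle), hGc, hGc, hMc, min_eq_left h1,
          min_eq_left (hle.trans h1)] at h3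
        have h4 := Finset.card_union_le (hi s \ lo s) ((Ts s \ G (lam s.card)) ∪ (Cs s ∩ G (lam (s.card + 1))))
        have h5 := Finset.card_union_le (Ts s \ G (lam s.card)) (Cs s ∩ G (lam (s.card + 1)))
        have h6 : (Ts s \ G (lam s.card)).card ≤ (if m * p ≤ lam s.card then 0 else s.card * p) := by
          split_ifs with h
          · rw [Finset.sdiff_eq_empty_iff_subset.2 ((hTsU s).trans (hGU _ (hUc.trans h)))]
            simp
          · refine (Finset.card_le_card Finset.sdiff_subset).trans ?_
            exact Finset.card_biUnion_le_card_mul s T p (fun a _ => hTp a)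
        have h7 : (Cs s ∩ G (lam (s.card + 1))).card ≤
            (if lam (s.card + 1) + m * q ≤ N' then 0 else (m - s.card) * q) := by
          split_ifs with h
          · have := (hGV (lam (s.card + 1)) (by omega)).mono_left (hCsV s)
            rw [Finset.disjoint_iff_inter_eq_empty.1 this]
            simp
          · refine (Finset.card_le_card Finset.inter_subset_left).trans ?_
            have := Finset.card_biUnion_le_card_mul sᶜ C q (fun a _ => hCq a)
            rwa [Finset.card_compl, Fintype.card_fin] at this
        omega
      obtain ⟨F, hF1, hF2, hF3⟩ := blob_red hbl _ _ hdisj hcard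
      have hF4 : s.map e ∪ (F ∩ hi s) = F := by
        ext x
        have k1 := @hF1 x
        have k2 := @hF2 x
        have k3 := @hlohi s x
        simp only [Finset.mem_union, Finset.mem_sdiff, Finset.mem_inter] at k1 k2 ⊢
        tauto
      refine ⟨F ∩ hi s, fun _ _ => ⟨?_, Finset.inter_subset_right, by rw [hF4]; exact hF3⟩⟩
      exact Finset.subset_inter (Finset.subset_union_right.trans hF1) (hlohi s)
  choose R hR using hex
  refine red_of_sandwich hm e R ?_ ?_ ?_
  · intro s i h1 h2 h3
    exact (hMmem _).1 (hhiM s ((hR s h1 h2).2.1 h3)) i rfl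
  · intro s t h1 h2 hst
    have hs1 : s ≠ Finset.univ := by
      rintro rfl; exact h2 (Finset.univ_subset_iff.1 hst.1)
    have ht0 : t ≠ ∅ := by
      rintro rfl; exact h1 (Finset.subset_empty.1 hst.1)
    refine (hR s h1 hs1).2.1.trans (Finset.Subset.trans ?_ (hR t ht0 h2).1)
    have hlt : s.card + 1 ≤ t.card := Finset.card_lt_card hst
    apply Finset.sdiff_subset_sdiff
    · exact Finset.union_subset_union (hG (hlam hlt)) (Finset.biUnion_subset_biUnion_of_subset_left _ hst.1)
    · exact Finset.biUnion_subset_biUnion_of_subset_left _ (Finset.compl_subset_compl.2 hst.1)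
  · intro s h1 h2
    exact (hR s h1 h2).2.2

lemma mode_b {m n N p N' K : ℕ} {c : Finset (Fin N) → Bool} (hbl : ¬ HasQuasiBlueCopy n N c)
    (hm : 4 ≤ m) (e : Fin m ↪ Fin N) (T : Fin m → Finset (Fin N))
    (hT : ∀ a i, e i ∉ T a) (hTp : ∀ a, (T a).card ≤ p) (hN' : N' + m = N)
    (hTr : ∀ a, c (insert (e a) (T a)) = true)
    (hK1 : m * p ≤ K) (hK2 : n + 2 * p ≤ K) (hK : K + (m - 3) * n ≤ N') :
    HasQuasiRedCopy m N c := by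
  refine master (q := 0) hbl (by omega) e T (fun _ => ∅) hT (by simp) (by simp) hTp (by simp)
    (fun l => if l ≤ 2 then 0 else K + (l - 3) * n) ?_ hN' ?_
  · apply monotone_nat_of_le_succ
    intro l
    have : (l - 3) * n ≤ (l + 1 - 3) * n := Nat.mul_le_mul_right n (by omega)
    split_ifs <;> omega
  · intro l h1 h2
    rcases Nat.lt_or_ge l 3 with h3 | h3
    · interval_cases l
      · left; simpa using hTr
      · right; right
        norm_num
        split_ifs <;> omega
    · right; right
      obtain ⟨k, rfl⟩ := Nat.exists_eq_add_of_le' h3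
      have e1 : k + 3 + 1 - 3 = k + 1 := by omega
      have e2 : k + 3 - 3 = k := by omega
      have h5 : (k + 1) * n ≤ (m - 3) * n := Nat.mul_le_mul_right n (by omega)
      rw [e1, e2, if_neg (by omega), if_neg (by omega), if_pos (by omega), if_pos (by omega)]
      rw [Nat.add_mul] at *
      omega

lemma mode_b_dual {m n N q N' K : ℕ} {c : Finset (Fin N) → Bool} (hbl : ¬ HasQuasiBlueCopy n N c)
    (hm : 4 ≤ m) (e : Fin m ↪ Fin N) (C : Fin m → Finset (Fin N))
    (hC : ∀ a i, e i ∉ C a) (hCq : ∀ a, (C a).card ≤ q) (hN' : N' + m = N)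
    (hCr : ∀ b, c ((Finset.univ \ {e b}) \ C b) = true)
    (hK1 : m * q ≤ K) (hK2 : n + 2 * q ≤ K) (hK : K + (m - 3) * n ≤ N') :
    HasQuasiRedCopy m N c := by
  refine master (p := 0) hbl (by omega) e (fun _ => ∅) C (by simp) hC (by simp) (by simp) hCq
    (fun l => if l ≤ m - 2 then (l - 1) * n else N') ?_ hN' ?_
  · apply monotone_nat_of_le_succ
    intro l
    have : (l - 1) * n ≤ (l + 1 - 1) * n := Nat.mul_le_mul_right n (by omega)
    by_cases h : l ≤ m - 2
    · have : (l - 1) * n ≤ (m - 3) * n := Nat.mul_le_mul_right n (by omega)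
      split_ifs <;> omega
    · split_ifs <;> omega
  · intro l h1 h2
    rcases Nat.lt_or_ge l (m - 1) with h3 | h3
    · right; right
      obtain ⟨k, rfl⟩ := Nat.exists_eq_add_of_le' h1
      have e1 : k + 1 + 1 - 1 = k + 1 := by omega
      have e2 : k + 1 - 1 = k := by omega
      rw [e1, e2, if_pos (show k + 1 ≤ m - 2 by omega)]
      rcases Nat.lt_or_ge (k + 1) (m - 2) with h4 | h4
      · have h5 : (k + 1) * n ≤ (m - 3) * n := Nat.mul_le_mul_right n (by omega)
        rw [if_pos (by omega), if_pos (by omega), if_pos (by omega)]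
        rw [Nat.add_mul] at *
        omega
      · have h5 : k = m - 3 := by omega
        have h6 : m - (k + 1) = 2 := by omega
        rw [h6]
        rw [if_neg (show ¬ (k + 1 + 1 ≤ m - 2) by omega)]
        rw [← h5] at hK
        refine ⟨le_refl _, ?_⟩
        split_ifs <;> omega
    · right; left
      exact ⟨by omega, by rw [if_neg (by omega)], hCr⟩

lemma mode_four {n N p q N' : ℕ} {c : Finset (Fin N) → Bool} (hbl : ¬ HasQuasiBlueCopy n N c)
    (e : Fin 4 ↪ Fin N) (T C : Fin 4 → Finset (Fin N))
    (hT : ∀ a i, e i ∉ T a) (hC : ∀ a i, e i ∉ C a) (hTC : ∀ a b, Disjoint (T a) (C b))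
    (hTp : ∀ a, (T a).card ≤ p) (hCq : ∀ a, (C a).card ≤ q) (hN' : N' + 4 = N)
    (hTr : ∀ a, c (insert (e a) (T a)) = true)
    (hCr : ∀ b, c ((Finset.univ \ {e b}) \ C b) = true)
    (hK : n + 2 * p + 2 * q ≤ N') :
    HasQuasiRedCopy 4 N c := by
  refine master hbl (by omega) e T C hT hC hTC hTp hCq
    (fun l => if l ≤ 2 then 0 else N') ?_ hN' ?_
  · apply monotone_nat_of_le_succ
    intro l
    split_ifs <;> omega
  · intro l h1 h2
    interval_cases l
    · left; simpa using hTr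
    · right; right
      norm_num
      split_ifs <;> omega
    · right; left; simpa using hCr

lemma mode_eleven {m n N p q N' K J : ℕ} {c : Finset (Fin N) → Bool} (hbl : ¬ HasQuasiBlueCopy n N c)
    (hm : 5 ≤ m) (e : Fin m ↪ Fin N) (T C : Fin m → Finset (Fin N))
    (hT : ∀ a i, e i ∉ T a) (hC : ∀ a i, e i ∉ C a) (hTC : ∀ a b, Disjoint (T a) (C b))
    (hTp : ∀ a, (T a).card ≤ p) (hCq : ∀ a, (C a).card ≤ q) (hN' : N' + m = N)
    (hTr : ∀ a, c (insert (e a) (T a)) = true)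
    (hCr : ∀ b, c ((Finset.univ \ {e b}) \ C b) = true)
    (hK1 : m * p ≤ K) (hK2 : n + 2 * p ≤ K)
    (hJ1 : m * q ≤ J) (hJ2 : n + 2 * q ≤ J)
    (hK : K + J + (m - 5) * n ≤ N') :
    HasQuasiRedCopy m N c := by
  refine master hbl (by omega) e T C hT hC hTC hTp hCq
    (fun l => if l ≤ 2 then 0 else if l ≤ m - 2 then K + (l - 3) * n else N') ?_ hN' ?_
  · apply monotone_nat_of_le_succ
    intro l
    have : (l - 3) * n ≤ (l + 1 - 3) * n := Nat.mul_le_mul_right n (by omega)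
    by_cases h : l ≤ m - 2
    · have : (l - 3) * n ≤ (m - 5) * n := Nat.mul_le_mul_right n (by omega)
      split_ifs <;> omega
    · split_ifs <;> omega
  · intro l h1 h2
    rcases Nat.lt_or_ge l 3 with h3 | h3
    · interval_cases l
      · left; simpa using hTr
      · right; right
        rw [if_neg (by omega), if_pos (show 2 + 1 ≤ m - 2 by omega), if_pos (le_refl 2)]
        norm_num
        split_ifs <;> omega
    rcases Nat.lt_or_ge l (m - 1) with h4 | h4
    · right; right
      obtain ⟨k, rfl⟩ := Nat.exists_eq_add_of_le' h3
      have e1 : k + 3 + 1 - 3 = k + 1 := by omega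
      have e2 : k + 3 - 3 = k := by omega
      rw [e1, e2, if_neg (show ¬ (k + 3 + 1 ≤ 2) by omega), if_neg (show ¬ (k + 3 ≤ 2) by omega),
        if_pos (show k + 3 ≤ m - 2 by omega), if_pos (show m * p ≤ K + k * n by omega)]
      rcases Nat.lt_or_ge (k + 3) (m - 2) with h5 | h5
      · have h6 : (k + 1) * n ≤ (m - 5) * n := Nat.mul_le_mul_right n (by omega)
        rw [if_pos (show k + 3 + 1 ≤ m - 2 by omega), if_pos (by omega)]
        rw [Nat.add_mul] at *
        omega
      · have h6 : k = m - 5 := by omega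
        have h7 : m - (k + 3) = 2 := by omega
        rw [h7]
        rw [if_neg (show ¬ (k + 3 + 1 ≤ m - 2) by omega)]
        rw [← h6] at hK
        refine ⟨le_refl _, ?_⟩
        split_ifs <;> omega
    · right; left
      exact ⟨by omega, by rw [if_neg (by omega), if_neg (by omega)], hCr⟩

lemma mode_twentytwo {m n N p q N' K J : ℕ} {c : Finset (Fin N) → Bool}
    (hbl : ¬ HasQuasiBlueCopy n N c)
    (hm : 13 ≤ m) (e : Fin m ↪ Fin N) (T C : Fin m → Finset (Fin N))
    (hT : ∀ a i, e i ∉ T a) (hC : ∀ a i, e i ∉ C a) (hTC : ∀ a b, Disjoint (T a) (C b))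
    (hTp : ∀ a, (T a).card ≤ p) (hCq : ∀ a, (C a).card ≤ q) (hN' : N' + m = N)
    (hTr : ∀ a, c (insert (e a) (T a)) = true)
    (hCr : ∀ b, c ((Finset.univ \ {e b}) \ C b) = true)
    (hK1 : m * p ≤ K) (hK2 : 2 * n + 5 * p ≤ K)
    (hJ1 : m * q ≤ J) (hJ2 : 2 * n + 5 * q ≤ J)
    (hK : K + J + (m - 7) * n ≤ N') :
    HasQuasiRedCopy m N c := by
  have hq2 : (m - (m - 2)) * q = 2 * q := by rw [show m - (m - 2) = 2 by omega]
  have hq3 : (m - (m - 3)) * q = 3 * q := by rw [show m - (m - 3) = 3 by omega]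
  refine master hbl (by omega) e T C hT hC hTC hTp hCq
    (fun l => if l ≤ 2 then 0 else if l ≤ 3 then n + 2 * p else if l ≤ m - 3 then K + (l - 4) * n
      else if l ≤ m - 2 then N' - (n + 2 * q) else N') ?_ hN' ?_
  · apply monotone_nat_of_le_succ
    intro l
    have : (l - 4) * n ≤ (l + 1 - 4) * n := Nat.mul_le_mul_right n (by omega)
    by_cases h : l ≤ m - 3
    · have : (l - 4) * n ≤ (m - 7) * n := Nat.mul_le_mul_right n (by omega)
      split_ifs <;> omega
    · split_ifs <;> omega
  · intro l h1 h2
    rcases Nat.lt_or_ge l 4 with h3 | h3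
    · interval_cases l
      · left; simpa using hTr
      · right; right
        norm_num
        split_ifs <;> omega
      · right; right
        rw [if_neg (by omega), if_neg (by omega), if_pos (show 3 + 1 ≤ m - 3 by omega)]
        norm_num
        split_ifs <;> omega
    rcases Nat.lt_or_ge l (m - 3) with h4 | h4
    · right; right
      obtain ⟨k, rfl⟩ := Nat.exists_eq_add_of_le' h3
      have e1 : k + 4 + 1 - 4 = k + 1 := by omega
      have e2 : k + 4 - 4 = k := by omega
      rw [e1, e2, if_neg (show ¬ (k + 4 + 1 ≤ 2) by omega), if_neg (show ¬ (k + 4 ≤ 2) by omega),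
        if_neg (show ¬ (k + 4 + 1 ≤ 3) by omega), if_neg (show ¬ (k + 4 ≤ 3) by omega),
        if_pos (show k + 4 ≤ m - 3 by omega), if_pos (show m * p ≤ K + k * n by omega),
        if_pos (show k + 4 + 1 ≤ m - 3 by omega)]
      have h6 : (k + 1) * n ≤ (m - 7) * n := Nat.mul_le_mul_right n (by omega)
      rw [if_pos (by omega)]
      rw [Nat.add_mul] at *
      omega
    · have h5 : l = m - 3 ∨ l = m - 2 ∨ l = m - 1 := by omega
      rcases h5 with rfl | rfl | rfl
      · right; right
        have e1 : m - 3 - 4 = m - 7 := by omega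
        rw [if_neg (show ¬ (m - 3 + 1 ≤ 2) by omega), if_neg (show ¬ (m - 3 ≤ 2) by omega),
          if_neg (show ¬ (m - 3 + 1 ≤ 3) by omega), if_neg (show ¬ (m - 3 ≤ 3) by omega),
          if_neg (show ¬ (m - 3 + 1 ≤ m - 3) by omega), if_pos (le_refl (m - 3)),
          if_pos (show m - 3 + 1 ≤ m - 2 by omega), e1, if_pos (by omega), hq3]
        refine ⟨by omega, ?_⟩
        split_ifs <;> omega
      · right; right
        rw [if_neg (show ¬ (m - 2 + 1 ≤ 2) by omega), if_neg (show ¬ (m - 2 ≤ 2) by omega),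
          if_neg (show ¬ (m - 2 + 1 ≤ 3) by omega), if_neg (show ¬ (m - 2 ≤ 3) by omega),
          if_neg (show ¬ (m - 2 + 1 ≤ m - 3) by omega), if_neg (show ¬ (m - 2 ≤ m - 3) by omega),
          if_neg (show ¬ (m - 2 + 1 ≤ m - 2) by omega), if_pos (le_refl (m - 2)),
          if_pos (by omega), hq2]
        refine ⟨by omega, ?_⟩
        split_ifs <;> omega
      · right; left
        refine ⟨by omega, ?_, hCr⟩
        rw [if_neg (by omega), if_neg (by omega), if_neg (by omega), if_neg (by omega)]

lemma arith_strict {m n N' : ℕ} (hm : 4 ≤ m) (hmn : m ≤ n)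
    (H : (2 * m * m + 9) * n ≤ (2 * m - 3) * N' + 7 * m * n) : m * n < N' + 2 * n := by
  by_contra h
  push Not at h
  zify [show 3 ≤ 2 * m by omega] at *
  nlinarith

lemma arith_star {m n N' p q : ℕ} (hm : 4 ≤ m) (hmn : m ≤ n)
    (hs : m * n < N' + 2 * n)
    (hB : ¬ (n + m * (n + 1 - p - q) + 2 ≤ N' + m)) :
    p < n ∧ q < n ∧ m * p + m * q + N' ≤ m * n + n + 1 := by
  have h4 : 4 * n ≤ m * n := Nat.mul_le_mul_right n hm
  rcases Nat.lt_or_ge (p + q) n with h | h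
  · refine ⟨by omega, by omega, ?_⟩
    obtain ⟨d, hd⟩ := Nat.exists_eq_add_of_lt h
    have e1 : n + 1 - p - q = d + 2 := by omega
    rw [e1] at hB
    have e2 : m * n = m * p + m * q + m * d + m := by rw [hd]; ring
    have e3 : m * (d + 2) = m * d + 2 * m := by ring
    omega
  · exfalso
    apply hB
    have e1 : m * (n + 1 - p - q) ≤ m * 1 := Nat.mul_le_mul_left m (by omega)
    omega

lemma arith_room {m n N' p q : ℕ} (hm : 4 ≤ m) (hmn : m ≤ n)
    (H : (2 * m * m + 9) * n ≤ (2 * m - 3) * N' + 7 * m * n)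
    (hs : m * n < N' + 2 * n)
    (hstar : m * p + m * q + N' ≤ m * n + n + 1)
    (hb : ¬ (max (m * q) (n + 2 * q) + (m - 3) * n ≤ N')) :
    m * p + n + 1 ≤ N' := by
  rcases Nat.lt_or_ge m 7 with h | h
  · interval_cases m <;> omega
  · have h4 : 7 * n ≤ m * n := Nat.mul_le_mul_right n h
    omega

lemma arith_four {n N' p q : ℕ} (hmn : 4 ≤ n)
    (H : (2 * 4 * 4 + 9) * n ≤ (2 * 4 - 3) * N' + 7 * 4 * n)
    (hstar : 4 * p + 4 * q + N' ≤ 4 * n + n + 1)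
    (hb : ¬ (max (4 * p) (n + 2 * p) + (4 - 3) * n ≤ N'))
    (hb' : ¬ (max (4 * q) (n + 2 * q) + (4 - 3) * n ≤ N')) :
    n + 2 * p + 2 * q ≤ N' := by
  omega

lemma arith_eleven {m n N' p q : ℕ} (hm : 5 ≤ m) (hm' : m ≤ 12) (hmn : m ≤ n)
    (H : (2 * m * m + 9) * n ≤ (2 * m - 3) * N' + 7 * m * n)
    (hstar : m * p + m * q + N' ≤ m * n + n + 1)
    (hb : ¬ (max (m * p) (n + 2 * p) + (m - 3) * n ≤ N'))
    (hb' : ¬ (max (m * q) (n + 2 * q) + (m - 3) * n ≤ N')) :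
    max (m * p) (n + 2 * p) + max (m * q) (n + 2 * q) + (m - 5) * n ≤ N' := by
  interval_cases m <;> omega

lemma arith_twentytwo {m n N' p q : ℕ} (hm : 13 ≤ m) (hmn : m ≤ n)
    (H : (2 * m * m + 9) * n ≤ (2 * m - 3) * N' + 7 * m * n)
    (hs : m * n < N' + 2 * n)
    (hstar : m * p + m * q + N' ≤ m * n + n + 1) :
    max (m * p) (2 * n + 5 * p) + max (m * q) (2 * n + 5 * q) + (m - 7) * n ≤ N' := by
  have e1 : (m - 7) * n + 7 * n = m * n := by rw [← Nat.add_mul]; congr 1; omega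
  have hp : 13 * p ≤ m * p := Nat.mul_le_mul_right p hm
  have hq : 13 * q ≤ m * q := Nat.mul_le_mul_right q hm
  have key : 5 * p + 5 * q + m * n ≤ N' + 3 * n := by
    by_contra h
    push Not at h
    have h1 : (m + 5) * N' + m ≤ (m * m + 2 * m + 5) * n + 5 := by
      have := Nat.mul_le_mul_left m (Nat.succ_le_of_lt h)
      nlinarith
    have h2 : (m + 5) * N' < (m * m + 2 * m + 5) * n := by omega
    zify [show 3 ≤ 2 * m by omega] at *
    have h3 : ((m : ℤ) + 5) * ((2 * m * m + 9) * n - 7 * m * n) ≤ ((m : ℤ) + 5) * ((2 * m - 3) * N') :=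
      mul_le_mul_of_nonneg_left (by linarith) (by linarith)
    have h4 : (2 * (m : ℤ) - 3) * ((m + 5) * N') < (2 * (m : ℤ) - 3) * ((m * m + 2 * m + 5) * n) :=
      mul_lt_mul_of_pos_left h2 (by linarith)
    have h5 : 0 ≤ (2 * (m : ℤ) * m - 30 * m + 60) * n := by
      apply mul_nonneg
      · nlinarith
      · linarith
    nlinarith
  omega

lemma exists_val {N : ℕ} (n : ℕ) (W : Finset (Fin N)) (P : Finset (Fin N) → Prop) :
    ∃ k, (k < n → ∃ T ⊆ W, T.card ≤ k ∧ P T) ∧ ∀ T ⊆ W, T.card < k → ¬ P T := by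
  classical
  by_cases h : ∃ k, ∃ T ⊆ W, T.card = k ∧ P T
  · refine ⟨Nat.find h, fun _ => ?_, fun T hT hk hP => ?_⟩
    · obtain ⟨T, h1, h2, h3⟩ := Nat.find_spec h
      exact ⟨T, h1, h2.le, h3⟩
    · exact Nat.find_min h hk ⟨T, hT, rfl, hP⟩
  · refine ⟨n, fun h => absurd h (lt_irrefl n), fun T hT _ hP => h ⟨_, T, hT, rfl, hP⟩⟩

/-- for n ≥ m ≥ 4 and (N : ℝ) ≥ (m − 2 + 3/(2m − 3))n + m, every 2-coloring
of Q_N contains a copy of Q_m red except possibly at ∅ and [N], or a copy of Q_n blue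
except possibly at ∅ and [N]; i.e. R̂(Q_m, Q_n) ≤ (m − 2 + 3/(2m − 3))n + m. -/
theorem hat_ramsey_Qm_Qn (m n N : ℕ) (hm : 4 ≤ m) (hmn : m ≤ n)
    (hN : (N : ℝ) ≥ ((m : ℝ) - 2 + 3 / (2 * (m : ℝ) - 3)) * (n : ℝ) + (m : ℝ))
    (c : Finset (Fin N) → Bool) :
    HasQuasiRedCopy m N c ∨ HasQuasiBlueCopy n N c := by
  classical
  by_contra hcon
  push Not at hcon
  obtain ⟨hred, hbl⟩ := hcon
  -- integer form of the bound
  have hm0 : (0 : ℝ) < 2 * (m : ℝ) - 3 := by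
    have : (4 : ℝ) ≤ m := by exact_mod_cast hm
    linarith
  have hmR : (4 : ℝ) ≤ m := by exact_mod_cast hm
  have hmnR : (m : ℝ) ≤ n := by exact_mod_cast hmn
  have hmN : m ≤ N := by
    have h1 : (0 : ℝ) ≤ ((m : ℝ) - 2 + 3 / (2 * (m : ℝ) - 3)) * (n : ℝ) := by
      have : (0 : ℝ) ≤ 3 / (2 * (m : ℝ) - 3) := by positivity
      apply mul_nonneg <;> linarith
    have : (m : ℝ) ≤ N := by linarith
    exact_mod_cast this
  obtain ⟨N', hN'⟩ : ∃ N', N' + m = N := ⟨N - m, by omega⟩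
  have H : (2 * m * m + 9) * n ≤ (2 * m - 3) * N' + 7 * m * n := by
    have hNR : (N : ℝ) = N' + m := by rw [← hN']; push_cast; ring
    have h1 : ((m : ℝ) - 2 + 3 / (2 * (m : ℝ) - 3)) * (n : ℝ) ≤ N' := by linarith
    have h2 := mul_le_mul_of_nonneg_left h1 hm0.le
    have h3 : (2 * (m : ℝ) - 3) * (((m : ℝ) - 2 + 3 / (2 * (m : ℝ) - 3)) * (n : ℝ)) =
        ((2 * (m : ℝ) - 3) * (m - 2) + 3) * n := by
      field_simp
    have h4 : (((2 * m * m + 9) * n : ℕ) : ℝ) ≤ (((2 * m - 3) * N' + 7 * m * n : ℕ) : ℝ) := by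
      push_cast [Nat.cast_sub (show 3 ≤ 2 * m by omega)]
      nlinarith
    exact_mod_cast h4
  have hs := arith_strict hm hmn H
  have h4n : 4 * n ≤ m * n := Nat.mul_le_mul_right n hm
  -- the elements
  obtain ⟨Yp, -, hYp⟩ := Finset.exists_subset_card_eq
    (show m + 1 ≤ (Finset.univ : Finset (Fin N)).card by simp; omega)
  let X : Finset (Fin N) := Finset.univ \ Yp
  have hXc : X.card = N - (m + 1) := by
    rw [Finset.card_sdiff_of_subset (Finset.subset_univ _), hYp]; simp
  have hXY : ∀ y ∈ Yp, y ∉ X := by intro y hy; simp [X, hy]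
  choose t ht1 ht2 using fun y : Fin N => exists_val n X (fun T => c (insert y T) = true)
  obtain ⟨a, haY, hamax⟩ := Finset.exists_max_image Yp t (Finset.card_pos.1 (by omega))
  let Y := Yp.erase a
  have hYc : Y.card = m := by rw [Finset.card_erase_of_mem haY, hYp]; rfl
  let e : Fin m ↪ Fin N := (Y.orderEmbOfFin hYc).toEmbedding
  have heY : ∀ i, e i ∈ Y := fun i => Y.orderEmbOfFin_mem hYc i
  have heYp : ∀ i, e i ∈ Yp := fun i => Finset.mem_of_mem_erase (heY i)
  have hea : ∀ i, a ≠ e i := fun i h => (Finset.ne_of_mem_erase (heY i)) h.symm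
  have heX : ∀ W ⊆ X, ∀ i, e i ∉ W := fun W hW i h => hXY _ (heYp i) (hW h)
  have : Nonempty (Fin m) := ⟨⟨0, by omega⟩⟩
  -- application of the B lemma
  have hBapp : ∀ W ⊆ X, n ≤ W.card → ∃ q, (∀ i, ∃ C ⊆ W, C.card ≤ q ∧
      c ((Finset.univ \ {e i}) \ C) = true) ∧ t a < n ∧
      m * t a + m * q + N' ≤ m * n + n + 1 := by
    intro W hW hWc
    choose r hr1 hr2 using fun i : Fin m => exists_val n W
      (fun C => c ((Finset.univ \ {e i}) \ C) = true)
    obtain ⟨b, -, hbmax⟩ := Finset.exists_max_image Finset.univ r Finset.univ_nonempty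
    have hB : ¬ (n + m * (n + 1 - t a - r b) + 2 ≤ N' + m) := by
      intro hcount
      rcases B_lemma (m := m) (p := t a) (q := r b) (c := c) W hWc a (e b) (hea b)
        (fun h => hXY a haY (hW h)) (heX W hW b)
        (fun T hT hc => by simpa using ht2 a T (hT.trans hW) hc)
        (fun C hC hc => by simpa using hr2 b C hC hc) (by omega) with h | h
      · exact hred h
      · exact hbl h
    obtain ⟨k1, k2, k3⟩ := arith_star hm hmn hs hB
    refine ⟨r b, fun i => ?_, k1, k3⟩
    obtain ⟨C, h1, h2, h3⟩ := hr1 i (lt_of_le_of_lt (hbmax i (Finset.mem_univ i)) k2)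
    exact ⟨C, h1, h2.trans (hbmax i (Finset.mem_univ i)), h3⟩
  obtain ⟨q0, hC0, hpn, hstar0⟩ := hBapp X (Finset.Subset.refl _) (by omega)
  choose T hTX hTp hTr using fun i : Fin m =>
    ht1 (e i) (lt_of_le_of_lt (hamax (e i) (heYp i)) hpn)
  have hTp' : ∀ i, (T i).card ≤ t a := fun i => (hTp i).trans (hamax (e i) (heYp i))
  generalize t a = p at *
  have hTe : ∀ i j, e j ∉ T i := fun i j => heX _ (hTX i) j
  have hb : ¬ (max (m * p) (n + 2 * p) + (m - 3) * n ≤ N') := fun h =>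
    hred (mode_b hbl hm e T hTe hTp' hN' hTr (le_max_left _ _) (le_max_right _ _) h)
  have hbd : ∀ W ⊆ X, ∀ q, (∀ i, ∃ C ⊆ W, C.card ≤ q ∧
      c ((Finset.univ \ {e i}) \ C) = true) →
      ¬ (max (m * q) (n + 2 * q) + (m - 3) * n ≤ N') := by
    intro W hW q hC h
    choose C hCW hCq hCr using hC
    exact hred (mode_b_dual hbl hm e C (fun i j => heX _ ((hCW i).trans hW) j) hCq hN' hCr
      (le_max_left _ _) (le_max_right _ _) h)
  have hroom := arith_room hm hmn H hs hstar0 (hbd X (Finset.Subset.refl _) q0 hC0)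
  let U := Finset.univ.biUnion T
  have hUc : U.card ≤ m * p := by
    simpa using Finset.card_biUnion_le_card_mul Finset.univ T p (fun a _ => hTp' a)
  have hXUc : n ≤ (X \ U).card := by
    have := Finset.le_card_sdiff U X
    omega
  obtain ⟨q, hC, -, hstar⟩ := hBapp (X \ U) Finset.sdiff_subset hXUc
  have hb' := hbd (X \ U) Finset.sdiff_subset q hC
  choose C hCW hCq hCr using hC
  have hCe : ∀ i j, e j ∉ C i := fun i j => heX _ ((hCW i).trans Finset.sdiff_subset) j
  have hTC : ∀ i j, Disjoint (T i) (C j) := by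
    intro i j
    rw [Finset.disjoint_left]
    intro x hx hx2
    exact (Finset.mem_sdiff.1 (hCW j hx2)).2 (Finset.mem_biUnion.2 ⟨i, Finset.mem_univ i, hx⟩)
  apply hred
  rcases Nat.lt_or_ge m 13 with h13 | h13
  · rcases Nat.lt_or_ge m 5 with h5 | h5
    · obtain rfl : m = 4 := by omega
      exact mode_four hbl e T C hTe hCe hTC hTp' hCq hN' hTr hCr
        (arith_four hmn H hstar hb hb')
    · exact mode_eleven hbl h5 e T C hTe hCe hTC hTp' hCq hN' hTr hCr (le_max_left _ _)
        (le_max_right _ _) (le_max_left _ _) (le_max_right _ _)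
        (arith_eleven h5 (by omega) hmn H hstar hb hb')
  · exact mode_twentytwo hbl h13 e T C hTe hCe hTC hTp' hCq hN' hTr hCr (le_max_left _ _)
      (le_max_right _ _) (le_max_left _ _) (le_max_right _ _)
      (arith_twentytwo h13 hmn H hs hstar)
end
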